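/- arXiv:2501.07090 — 2 statements merged into one kernel-verified Lean document; each statement's English description precedes it below -/
import Mathlib

section
/- If an equilateral convex pentagon (all five side lengths equal) admits a monohedral tiling of the Euclidean plane, then for some labeling of its interior angles A, B, C, D, E at consecutive vertices in cyclic order (possibly with the orientation reversed), at least one of the following holds: A + B + C = 360° (Type 1), or A + B + D = 360° (Type 2), or both 2B + A = 360° and 2E + C = 360° (Type 7). -/
open EuclideanGeometry

noncomputable section

/-- The Euclidean plane. -/
abbrev Plane : Type := EuclideanSpace ℝ (Fin 2)

/-- A convex polygon with `n` vertices: `n` points of the plane in strictly convex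
position, labeled in cyclic order (each segment joining cyclically consecutive
vertices lies on the boundary of the convex hull). -/
structure ConvexPolygon (n : ℕ) [NeZero n] where
  V : Fin n → Plane
  strictlyConvex : ∀ i : Fin n, V i ∉ convexHull ℝ (V '' {j | j ≠ i})
  cyclic : ∀ i : Fin n, segment ℝ (V i) (V (i + 1)) ⊆ frontier (convexHull ℝ (Set.range V))

namespace ConvexPolygon

variable {n : ℕ} [NeZero n]

/-- The polygon, as a subset of the plane (the convex hull of its vertices). -/
def carrier (P : ConvexPolygon n) : Set Plane := convexHull ℝ (Set.range P.V)

/-- The interior angle (in radians) at the `i`-th vertex. -/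
def angle (P : ConvexPolygon n) (i : Fin n) : ℝ :=
  EuclideanGeometry.angle (P.V (i - 1)) (P.V i) (P.V (i + 1))

/-- The length of the side joining the `i`-th vertex to the next one. -/
def side (P : ConvexPolygon n) (i : Fin n) : ℝ := dist (P.V i) (P.V (i + 1))

end ConvexPolygon

/-- A convex pentagon.  Its angles `A, B, C, D, E` are `angle 0, …, angle 4` and
its sides `a, b, c, d, e` are `side 0, …, side 4`. -/
abbrev ConvexPentagon := ConvexPolygon 5

/-- `t` is an isometric copy of `P`. -/
def IsIsometricCopy (t P : Set Plane) : Prop :=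
  ∃ g : Plane ≃ᵢ Plane, t = g '' P

/-- `T` is a monohedral tiling of the plane by isometric copies of `P`:
the tiles cover the plane and have pairwise disjoint interiors. -/
def IsMonohedralTiling (P : Set Plane) (T : Set (Set Plane)) : Prop :=
  (∀ t ∈ T, IsIsometricCopy t P) ∧ ⋃₀ T = Set.univ ∧
    T.Pairwise fun t s => interior t ∩ interior s = ∅

/-- `x` is a vertex (extreme point) of the convex polygonal tile `t`. -/
def IsVertexOf (x : Plane) (t : Set Plane) : Prop := x ∈ Set.extremePoints ℝ t

/-- `e` is an edge (a full side) of the convex polygonal tile `t`: a segment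
joining two distinct vertices of `t` that lies on the boundary of `t`. -/
def IsEdgeOf (e t : Set Plane) : Prop :=
  ∃ x y : Plane, x ≠ y ∧ IsVertexOf x t ∧ IsVertexOf y t ∧
    e = segment ℝ x y ∧ e ⊆ frontier t

/-- A tiling by convex polygons is edge-to-edge if any two distinct tiles meet in
the empty set, a common vertex, or a common edge. -/
def IsEdgeToEdge (T : Set (Set Plane)) : Prop :=
  ∀ t ∈ T, ∀ s ∈ T, t ≠ s →
    t ∩ s = ∅ ∨
    (∃ x : Plane, t ∩ s = {x} ∧ IsVertexOf x t ∧ IsVertexOf x s) ∨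
    (∃ e : Set Plane, t ∩ s = e ∧ IsEdgeOf e t ∧ IsEdgeOf e s)

/-- A tiling is periodic if translations by two linearly independent vectors map
every tile onto a tile. -/
def IsPeriodic (T : Set (Set Plane)) : Prop :=
  ∃ u v : Plane, LinearIndependent ℝ ![u, v] ∧
    (∀ t ∈ T, (fun x => x + u) '' t ∈ T) ∧ (∀ t ∈ T, (fun x => x + v) '' t ∈ T)

/-- An isometry is a symmetry of the tiling `T` if it maps the tiles of `T` onto
the tiles of `T`. -/
def IsSymmetryOf (g : Plane ≃ᵢ Plane) (T : Set (Set Plane)) : Prop :=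
  (fun t => g '' t) '' T = T

/-- A tiling is isohedral if its symmetry group acts transitively on the tiles. -/
def IsIsohedral (T : Set (Set Plane)) : Prop :=
  ∀ t ∈ T, ∀ s ∈ T, ∃ g : Plane ≃ᵢ Plane, IsSymmetryOf g T ∧ g '' t = s

/-- Two tiles are equivalent if some symmetry of the tiling maps one onto the other. -/
def SymEquiv (T : Set (Set Plane)) (t s : Set Plane) : Prop :=
  ∃ g : Plane ≃ᵢ Plane, IsSymmetryOf g T ∧ g '' t = s

/-- A direct (orientation-preserving) isometry of the plane: an affine isometry
whose linear part has positive determinant. -/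
def IsDirectIsometry (g : Plane ≃ᵢ Plane) : Prop :=
  ∃ (L : Plane ≃ₗᵢ[ℝ] Plane) (w : Plane),
    0 < LinearMap.det (L.toLinearEquiv : Plane →ₗ[ℝ] Plane) ∧ ∀ x, g x = L x + w

/-- Relabeling of the vertices of a pentagon: a cyclic shift by `k`, with the
orientation reversed when `r = true`. -/
def relabel (k : Fin 5) (r : Bool) (i : Fin 5) : Fin 5 := if r then k - i else k + i

namespace EqPent
open Real

/-- closure equation of an equilateral pentagon with the given angles -/
def Clos (a0 a1 a2 a3 a4 : ℝ) : Prop :=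
  a0 + a1 + a2 + a3 + a4 = 3 * π ∧
  ∀ φ : ℝ, cos φ - cos (φ - a1) + cos (φ - a1 - a2) - cos (φ - a1 - a2 - a3)
    + cos (φ - a1 - a2 - a3 - a4) = 0

lemma Clos.rot {a0 a1 a2 a3 a4 : ℝ} (h : Clos a0 a1 a2 a3 a4) : Clos a1 a2 a3 a4 a0 := by
  obtain ⟨hs, h⟩ := h
  refine ⟨by linarith, fun φ => ?_⟩
  have := h (φ + a1)
  have e : φ - a2 - a3 - a4 - a0 = (φ + a1) - π - 2 * π := by linarith
  rw [e, cos_sub_two_pi, cos_sub_pi]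
  have e2 : φ + a1 - a1 = φ := by ring
  rw [e2] at this
  linarith

lemma Clos.refl {a0 a1 a2 a3 a4 : ℝ} (h : Clos a0 a1 a2 a3 a4) : Clos a0 a4 a3 a2 a1 := by
  obtain ⟨hs, h⟩ := h
  refine ⟨by linarith, fun φ => ?_⟩
  have := h (a1 + a2 + a3 + a4 - φ)
  rw [← cos_neg φ, ← cos_neg (φ - a4), ← cos_neg (φ - a4 - a3), ← cos_neg (φ - a4 - a3 - a2),
    ← cos_neg (φ - a4 - a3 - a2 - a1)]
  have e1 : a1 + a2 + a3 + a4 - φ - a1 - a2 - a3 - a4 = - φ := by ring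
  have e2 : a1 + a2 + a3 + a4 - φ - a1 - a2 - a3 = - (φ - a4) := by ring
  have e3 : a1 + a2 + a3 + a4 - φ - a1 - a2 = - (φ - a4 - a3) := by ring
  have e4 : a1 + a2 + a3 + a4 - φ - a1 = - (φ - a4 - a3 - a2) := by ring
  have e5 : a1 + a2 + a3 + a4 - φ = - (φ - a4 - a3 - a2 - a1) := by ring
  rw [e1, e2, e3, e4, e5] at this
  linarith

lemma Clos.sinId {a0 a1 a2 a3 a4 : ℝ} (h : Clos a0 a1 a2 a3 a4) :
    2 * sin (a3 / 2) * sin ((a2 - a4) / 2) = sin ((a0 - a1) / 2) := by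
  obtain ⟨hs, h⟩ := h
  have h1 := h (π / 2 - (a0 - a1) / 2)
  have e0 : cos (π / 2 - (a0 - a1) / 2) = sin ((a0 - a1) / 2) := cos_pi_div_two_sub _
  have e1 : cos (π / 2 - (a0 - a1) / 2 - a1) = sin ((a0 + a1) / 2) := by
    rw [← cos_pi_div_two_sub]; congr 1; ring
  have e4 : cos (π / 2 - (a0 - a1) / 2 - a1 - a2 - a3 - a4) = sin ((a0 + a1) / 2) := by
    have : π / 2 - (a0 - a1) / 2 - a1 - a2 - a3 - a4 = ((a0 + a1) / 2 + π / 2) - π - 2 * π := by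
      linarith
    rw [this, cos_sub_two_pi, cos_sub_pi, cos_add_pi_div_two, neg_neg]
  have e2 : cos (π / 2 - (a0 - a1) / 2 - a1 - a2) = - cos (a3 / 2 - (a2 - a4) / 2) := by
    have : π / 2 - (a0 - a1) / 2 - a1 - a2 = (a3 / 2 - (a2 - a4) / 2) - π := by linarith
    rw [this, cos_sub_pi]
  have e3 : cos (π / 2 - (a0 - a1) / 2 - a1 - a2 - a3) = - cos (a3 / 2 + (a2 - a4) / 2) := by
    have : π / 2 - (a0 - a1) / 2 - a1 - a2 - a3 = -(a3 / 2 + (a2 - a4) / 2 + π) := by linarith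
    rw [this, cos_neg, cos_add_pi]
  rw [e0, e1, e2, e3, e4, cos_add, cos_sub] at h1
  linarith

/-- sine version of the closure equation -/
lemma Clos.sinV {a0 a1 a2 a3 a4 : ℝ} (h : Clos a0 a1 a2 a3 a4) (φ : ℝ) :
    sin φ - sin (φ - a1) + sin (φ - a1 - a2) - sin (φ - a1 - a2 - a3)
    + sin (φ - a1 - a2 - a3 - a4) = 0 := by
  have := h.2 (φ - π / 2)
  have e : ∀ x, sin x = cos (x - π / 2) := fun x => (cos_sub_pi_div_two x).symm
  rw [e, e (φ - a1), e (φ - a1 - a2), e (φ - a1 - a2 - a3), e (φ - a1 - a2 - a3 - a4)]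
  rw [show φ - a1 - π / 2 = φ - π / 2 - a1 by ring,
    show φ - a1 - a2 - π / 2 = φ - π / 2 - a1 - a2 by ring,
    show φ - a1 - a2 - a3 - π / 2 = φ - π / 2 - a1 - a2 - a3 by ring,
    show φ - a1 - a2 - a3 - a4 - π / 2 = φ - π / 2 - a1 - a2 - a3 - a4 by ring]
  exact this

lemma Clos.dist {a0 a1 a2 a3 a4 : ℝ} (h : Clos a0 a1 a2 a3 a4) :
    3 - 2 * cos a2 - 2 * cos a3 + 2 * cos (a2 + a3) = 2 - 2 * cos a0 := by
  have h1 := h.2 a1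
  have h2 := h.sinV a1
  rw [show a1 - a1 - a2 - a3 - a4 = -(a2 + a3 + a4) by ring,
    show a1 - a1 - a2 - a3 = -(a2 + a3) by ring, show a1 - a1 - a2 = - a2 by ring, sub_self] at h1 h2
  simp only [cos_neg, sin_neg, cos_zero, sin_zero] at h1 h2
  have e0 : cos a0 = - cos (a1 + (a2 + a3 + a4)) := by
    rw [show a1 + (a2 + a3 + a4) = (π - a0) + 2 * π by linarith [h.1], cos_add_two_pi, cos_pi_sub,
      neg_neg]
  have e3 : cos a3 = cos ((a2 + a3) - a2) := by congr 1; ring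
  rw [e0, e3, cos_add a1 _, cos_sub (a2 + a3)]
  have q1 := sin_sq_add_cos_sq a1
  have q2 := sin_sq_add_cos_sq a2
  have q3 := sin_sq_add_cos_sq (a2 + a3)
  have q4 := sin_sq_add_cos_sq (a2 + a3 + a4)
  generalize cos (a2 + a3 + a4) = x4 at *
  generalize sin (a2 + a3 + a4) = y4 at *
  generalize cos (a2 + a3) = x3 at *
  generalize sin (a2 + a3) = y3 at *
  generalize cos a1 = x1 at *
  generalize sin a1 = y1 at *
  generalize cos a2 = x2 at *
  generalize sin a2 = y2 at *
  have p1 : (x3 - x2 + 1) = x1 + x4 := by linarith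
  have p2 : (y3 - y2) = -(y1 - y4) := by linarith
  have : (x3 - x2 + 1)^2 + (y3 - y2)^2 = (x1 + x4)^2 + (y1 - y4)^2 := by rw [p1, p2]; ring
  linarith

lemma sgn_aux {s x y : ℝ} (hs : 0 < s) (hx : |x| < π) (hy : |y| < π)
    (h : 2 * s * sin (x / 2) = sin (y / 2)) : (0 < x ↔ 0 < y) ∧ (x = 0 ↔ y = 0) := by
  have key : ∀ z : ℝ, |z| < π → (0 < z → 0 < sin (z / 2)) ∧ (z < 0 → sin (z / 2) < 0) := by
    intro z hz
    obtain ⟨h1, h2⟩ := abs_lt.1 hz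
    exact ⟨fun h => sin_pos_of_pos_of_lt_pi (by linarith) (by linarith),
      fun h => sin_neg_of_neg_of_neg_pi_lt (by linarith) (by linarith)⟩
  have kx := key x hx
  have ky := key y hy
  rcases lt_trichotomy x 0 with h1 | h1 | h1 <;> rcases lt_trichotomy y 0 with h2 | h2 | h2
  · constructor <;> constructor <;> intro <;> linarith
  · subst h2; have := kx.2 h1; simp at h; rcases h with h | h <;> linarith
  · have := kx.2 h1; have := ky.1 h2; nlinarith
  · subst h1; have := ky.2 h2; simp at h; linarith
  · subst h1 h2; simp
  · subst h1; have := ky.1 h2; simp at h; linarith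
  · have := kx.1 h1; have := ky.2 h2; nlinarith
  · subst h2; have := kx.1 h1; simp at h; rcases h with h | h <;> linarith
  · constructor <;> constructor <;> intro <;> linarith

/-- angles in the open interval `(0, π)` -/
def InR (a0 a1 a2 a3 a4 : ℝ) : Prop :=
  (0 < a0 ∧ a0 < π) ∧ (0 < a1 ∧ a1 < π) ∧ (0 < a2 ∧ a2 < π) ∧ (0 < a3 ∧ a3 < π) ∧ (0 < a4 ∧ a4 < π)

lemma InR.rot {a0 a1 a2 a3 a4 : ℝ} (h : InR a0 a1 a2 a3 a4) : InR a1 a2 a3 a4 a0 :=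
  ⟨h.2.1, h.2.2.1, h.2.2.2.1, h.2.2.2.2, h.1⟩

lemma Clos.sgn {a0 a1 a2 a3 a4 : ℝ} (h : Clos a0 a1 a2 a3 a4) (hr : InR a0 a1 a2 a3 a4) :
    (a4 < a2 ↔ a1 < a0) ∧ (a2 = a4 ↔ a0 = a1) := by
  obtain ⟨h0, h1, h2, h3, h4⟩ := hr
  have := sgn_aux (s := sin (a3 / 2)) (x := a2 - a4) (y := a0 - a1)
    (sin_pos_of_pos_of_lt_pi (by linarith) (by linarith))
    (by rw [abs_lt]; constructor <;> linarith) (by rw [abs_lt]; constructor <;> linarith) h.sinId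
  simpa [sub_eq_zero] using this

/-- ordering of the angles when `a0` is largest and `a2 ≥ a3` -/
lemma Clos.order {a0 a1 a2 a3 a4 : ℝ} (h : Clos a0 a1 a2 a3 a4) (hr : InR a0 a1 a2 a3 a4)
    (h1 : a1 ≤ a0) (h2 : a2 ≤ a0) (h3 : a3 ≤ a0) (h4 : a4 ≤ a0) (h23 : a3 ≤ a2) :
    a3 ≤ a2 ∧ a4 ≤ a3 ∧ a1 ≤ a4 ∧ (a0 = a2 ↔ a3 = a4) ∧ (a2 = a3 ↔ a1 = a4) := by
  have s2 := h.rot.rot.sgn hr.rot.rot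
  have s3 := h.rot.rot.rot.sgn hr.rot.rot.rot
  refine ⟨h23, ?_, ?_, ?_, ?_⟩
  · rcases h2.lt_or_eq with h | h
    · exact (s3.1.1 h).le
    · exact (s3.2.1 h.symm).symm.le
  · rcases h23.lt_or_eq with h | h
    · exact (s2.1.2 h).le
    · exact (s2.2.2 h.symm).symm.le
  · exact s3.2
  · rw [← s2.2, eq_comm]

/-- the hypotheses used in the case analysis -/
structure Ord (a0 a1 a2 a3 a4 : ℝ) : Prop where
  cl : Clos a0 a1 a2 a3 a4
  r : InR a0 a1 a2 a3 a4
  h02 : a2 ≤ a0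
  h23 : a3 ≤ a2
  h34 : a4 ≤ a3
  h41 : a1 ≤ a4
  e02 : a0 = a2 ↔ a3 = a4
  e23 : a2 = a3 ↔ a1 = a4

lemma cos_two_pi_div_three : cos (2 * π / 3) = - (1 / 2) := by
  rw [show 2 * π / 3 = π - π / 3 by ring, cos_pi_sub, cos_pi_div_three]

lemma Ord.m1 {a0 a1 a2 a3 a4 : ℝ} (h : Ord a0 a1 a2 a3 a4) : 2 * a3 + a2 < 2 * π := by
  obtain ⟨⟨h0, h0'⟩, ⟨h1, h1'⟩, ⟨h2, h2'⟩, ⟨h3, h3'⟩, ⟨h4, h4'⟩⟩ := h.r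
  by_contra! hc
  have hd := h.cl.dist
  have c1 : cos a3 ≤ cos (a2 + a3) := by
    rw [← cos_two_pi_sub (a2 + a3)]
    exact cos_le_cos_of_nonneg_of_le_pi (by linarith) (by linarith) (by linarith)
  have c2 : cos a2 ≤ - (1 / 2) := by
    rw [← cos_two_pi_div_three]
    exact cos_le_cos_of_nonneg_of_le_pi (by linarith [pi_pos]) (by linarith) (by linarith [h.h23])
  have c3 : cos π < cos a0 :=
    cos_lt_cos_of_nonneg_of_le_pi h0.le le_rfl h0'
  rw [cos_pi] at c3
  linarith

lemma Ord.m2 {a0 a1 a2 a3 a4 : ℝ} (h : Ord a0 a1 a2 a3 a4) : π < a1 + a2 := by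
  have m1 := h.m1
  have hd := h.cl.rot.rot.rot.rot.dist
  obtain ⟨⟨h0, h0'⟩, ⟨h1, h1'⟩, ⟨h2, h2'⟩, ⟨h3, h3'⟩, ⟨h4, h4'⟩⟩ := h.r
  have hs := h.cl.1
  have h23 := h.h23
  by_contra! hc
  have e1 : a1 + a2 = 2 * ((a1 + a2) / 2) := by ring
  have e2 : cos a1 = cos ((a1 + a2) / 2 - (a2 - a1) / 2) := by congr 1; ring
  have e3 : cos a2 = cos ((a1 + a2) / 2 + (a2 - a1) / 2) := by congr 1; ring
  have c0 : 0 ≤ cos ((a1 + a2) / 2) := cos_nonneg_of_neg_pi_div_two_le_of_le (by linarith) (by linarith)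
  have c1 : cos ((a1 + a2) / 2) ≤ cos ((a2 - a1) / 2) := by
    rw [← cos_abs ((a2 - a1) / 2)]
    refine cos_le_cos_of_nonneg_of_le_pi (abs_nonneg _) (by linarith) ?_
    rw [abs_le]; constructor <;> linarith
  have c2 : cos (a1 + a2) = 2 * cos ((a1 + a2) / 2) ^ 2 - 1 := by
    conv_lhs => rw [e1]
    exact cos_two_mul _
  rw [c2, e2, e3, cos_add, cos_sub] at hd
  have c4 : 1 / 2 ≤ cos a4 := by nlinarith
  have c5 : a4 ≤ π / 3 := by
    by_contra! hc
    have := cos_lt_cos_of_nonneg_of_le_pi (by linarith [pi_pos]) h4'.le hc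
    rw [cos_pi_div_three] at this
    linarith
  linarith

end EqPent

namespace EqPent
open Real

lemma Ord.caseB {a0 a1 a2 a3 a4 : ℝ} (h : Ord a0 a1 a2 a3 a4) (hlt : a2 < a0)
    (r1 : 2 * a0 + a4 = 2 * π) (r2 : 2 * a2 + a3 = 2 * π) : False := by
  obtain ⟨⟨h0, h0'⟩, ⟨h1, h1'⟩, ⟨h2, h2'⟩, ⟨h3, h3'⟩, ⟨h4, h4'⟩⟩ := h.r
  have hs := h.cl.1
  obtain ⟨s, hsd⟩ : ∃ s, s = (a0 - a2) / 2 := ⟨_, rfl⟩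
  obtain ⟨D, hD⟩ : ∃ D, D = (a0 + a2) / 2 := ⟨_, rfl⟩
  have b0 : a0 = D + s := by linarith
  have b2 : a2 = D - s := by linarith
  have b4 : a4 = 2 * π - 2 * a0 := by linarith
  have b3 : a3 = 2 * π - 2 * a2 := by linarith
  have b1 : a1 = a0 + a2 - π := by linarith
  have k1 := h.cl.2 (a0 - s)
  have k2 := h.cl.sinV (a0 - s)
  have f0 : a0 - s = D := by linarith
  have f1 : a0 - s - a1 = - D + π := by linarith
  have f2 : a0 - s - a1 - a2 = (s - 2 * D) + π := by linarith
  have f3 : a0 - s - a1 - a2 - a3 = - s + π - 2 * π := by linarith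
  have f4 : a0 - s - a1 - a2 - a3 - a4 = s + 2 * D + π - 2 * π - 2 * π := by linarith
  rw [f4, f3, f2, f1, f0] at k1 k2
  simp only [cos_sub_two_pi, sin_sub_two_pi, cos_add_pi, sin_add_pi, cos_neg, sin_neg, cos_add s,
    sin_add s, cos_sub s, sin_sub s] at k1 k2
  have s0 : 0 < sin s := sin_pos_of_pos_of_lt_pi (by linarith) (by linarith)
  have c0 : 0 < cos s := cos_pos_of_mem_Ioo ⟨by linarith, by linarith⟩
  have g1 : cos (2 * D) = - (1 / 2) := by
    have : sin s * (1 + 2 * cos (2 * D)) = 0 := by linarith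
    rcases mul_eq_zero.1 this with h | h <;> linarith
  rw [g1] at k1
  have g2 : cos D = - cos s := by linarith
  have g3 := cos_two_mul D
  have g4 : cos s = 1 / 2 := by
    rw [g1, g2] at g3
    nlinarith
  have d1 : D = 2 * π / 3 := by
    apply injOn_cos ⟨by linarith, by linarith⟩ ⟨by linarith [pi_pos], by linarith [pi_pos]⟩
    rw [cos_two_pi_div_three, g2, g4]
  have d2 : s = π / 3 := by
    apply injOn_cos ⟨by linarith, by linarith⟩ ⟨by linarith [pi_pos], by linarith [pi_pos]⟩
    rw [cos_pi_div_three, g4]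
  linarith

lemma Ord.caseC {a0 a1 a2 a3 a4 : ℝ} (h : Ord a0 a1 a2 a3 a4)
    (r1 : 2 * a2 + a1 = 2 * π) (r2 : 2 * a3 + a0 = 2 * π) : False := by
  obtain ⟨⟨h0, h0'⟩, ⟨h1, h1'⟩, ⟨h2, h2'⟩, ⟨h3, h3'⟩, ⟨h4, h4'⟩⟩ := h.r
  have hs := h.cl.1
  have k1 := h.cl.2 (-a2)
  have k2 := h.cl.sinV (-a2)
  have f1 : -a2 - a1 = a2 - 2 * π := by linarith
  have f2 : -a2 - a1 - a2 = 0 - 2 * π := by linarith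
  have f3 : -a2 - a1 - a2 - a3 = - a3 - 2 * π := by linarith
  have f4 : -a2 - a1 - a2 - a3 - a4 = - (a2 + 2 * a3) + π - 2 * π := by linarith
  rw [f4, f3, f2, f1] at k1 k2
  simp only [cos_sub_two_pi, sin_sub_two_pi, cos_add_pi, sin_add_pi, cos_neg, sin_neg, cos_zero,
    sin_zero] at k1 k2
  have c3 : cos a3 < 0 := cos_neg_of_pi_div_two_lt_of_lt (by linarith) (by linarith)
  have q := sin_sq_add_cos_sq (a2 + 2 * a3)
  have q3 := sin_sq_add_cos_sq a3
  have e1 : cos (a2 + 2 * a3) = 1 - cos a3 := by linarith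
  have e2 : sin (a2 + 2 * a3) = 2 * sin a2 - sin a3 := by linarith
  rw [e1, e2] at q
  nlinarith [sq_nonneg (2 * sin a2 - sin a3)]

lemma Ord.caseD {a0 a1 a2 a3 a4 : ℝ} (h : Ord a0 a1 a2 a3 a4)
    (r1 : 2 * a2 + a4 = 2 * π) (r2 : 2 * a3 + a0 = 2 * π) : a3 + a4 = π := by
  obtain ⟨⟨h0, h0'⟩, ⟨h1, h1'⟩, ⟨h2, h2'⟩, ⟨h3, h3'⟩, ⟨h4, h4'⟩⟩ := h.r
  have hs := h.cl.1
  have h23 := h.h23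
  have k2 := h.cl.sinV (a2 + a3)
  have f1 : a2 + a3 - a1 = π := by linarith
  have f2 : a2 + a3 - a1 - a2 = - a2 + π := by linarith
  have f3 : a2 + a3 - a1 - a2 - a3 = - (a2 + a3) + π := by linarith
  have f4 : a2 + a3 - a1 - a2 - a3 - a4 = (a2 - a3) + π - 2 * π := by linarith
  rw [f4, f3, f2, f1] at k2
  simp only [sin_sub_two_pi, sin_add_pi, sin_neg, sin_pi] at k2
  have e1 : sin a2 = sin ((a2 - a3 / 2) + a3 / 2) := by congr 1; ring
  have e2 : sin (a2 - a3) = sin ((a2 - a3 / 2) - a3 / 2) := by congr 1; ring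
  rw [e1, e2, sin_add (a2 - a3 / 2), sin_sub (a2 - a3 / 2)] at k2
  have s0 : 0 < sin (a3 / 2) := sin_pos_of_pos_of_lt_pi (by linarith) (by linarith)
  have g : cos (a2 - a3 / 2) = cos (π / 2) := by
    rw [cos_pi_div_two]
    have : sin (a3 / 2) * cos (a2 - a3 / 2) = 0 := by linarith
    rcases mul_eq_zero.1 this with h | h <;> linarith
  have := injOn_cos ⟨by linarith, by linarith⟩ ⟨by linarith [pi_pos], by linarith [pi_pos]⟩ g
  linarith

lemma Ord.caseE1 {a0 a1 a2 a3 a4 : ℝ} (h : Ord a0 a1 a2 a3 a4) (r0 : 2 * a0 + a1 = 2 * π)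
    (r1 : 2 * a2 + a3 = 2 * π) (r2 : 2 * a3 + a0 = 2 * π) : False := by
  have hs := h.cl.1
  obtain ⟨u, hu⟩ : ∃ u, u = a3 / 2 := ⟨_, rfl⟩
  have k1 := h.cl.2 (8 * u)
  have k2 := h.cl.sinV (8 * u)
  have f0 : 8 * u = 2 * (2 * (2 * u)) := by ring
  have f1 : 8 * u - a1 = 0 + 2 * π := by linarith
  have f2 : 8 * u - a1 - a2 = u + π := by linarith
  have f3 : 8 * u - a1 - a2 - a3 = - u + π := by linarith
  have f4 : 8 * u - a1 - a2 - a3 - a4 = 2 * (2 * u) + π - 2 * π := by linarith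
  rw [f4, f3, f2, f1, f0] at k1 k2
  simp only [cos_sub_two_pi, sin_sub_two_pi, cos_add_two_pi, sin_add_two_pi, cos_add_pi, sin_add_pi,
    cos_neg, sin_neg, cos_zero, sin_zero] at k1 k2
  rw [cos_two_mul (2 * (2 * u))] at k1
  rw [sin_two_mul (2 * (2 * u))] at k2
  have hx := cos_two_mul (2 * u)
  have hc := cos_two_mul u
  have q := sin_sq_add_cos_sq (2 * (2 * u))
  have q1 := sin_sq_add_cos_sq u
  generalize cos (2 * (2 * u)) = x at *
  generalize sin (2 * (2 * u)) = y at *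
  generalize cos (2 * u) = C at *
  generalize sin u = s at *
  have p1 : 2 * x ^ 2 - x - 2 = 0 := by linarith
  have p2 : y * (2 * x - 1) = 2 * s := by linarith
  have p3 : y ^ 2 * (2 * x - 1) ^ 2 = 4 * s ^ 2 := by rw [← mul_pow, p2]; ring
  have p4 : y ^ 2 = - x / 2 := by linarith
  have p5 : (2 * x - 1) ^ 2 = 5 - 2 * x := by linarith
  rw [p4, p5] at p3
  have p6 : C = 1 / 2 + x := by nlinarith
  have p7 : x = C - 1 / 2 := by linarith
  rw [p7] at hx p1
  have p8 : C = - 1 / 4 := by linarith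
  rw [p8] at hx
  norm_num at hx

lemma Ord.caseE2 {a0 a1 a2 a3 a4 : ℝ} (h : Ord a0 a1 a2 a3 a4) (r0 : a2 = 2 * π / 3)
    (r1 : 2 * a0 + a4 = 2 * π) (r2 : 2 * a3 + a0 = 2 * π) : False := by
  have hs := h.cl.1
  have m1 := h.m1
  obtain ⟨⟨h0, h0'⟩, ⟨h1, h1'⟩, ⟨h2, h2'⟩, ⟨h3, h3'⟩, ⟨h4, h4'⟩⟩ := h.r
  obtain ⟨t, ht⟩ : ∃ t, t = 2 * π / 3 - a3 := ⟨_, rfl⟩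
  have k1 := h.cl.2 0
  have k2 := h.cl.sinV 0
  have f1 : 0 - a1 = - (π / 3 + 3 * t) := by linarith
  have f2 : 0 - a1 - a2 = - (3 * t + π) := by linarith
  have f3 : 0 - a1 - a2 - a3 = - (2 * t + 2 * π / 3 + π) := by linarith
  have f4 : 0 - a1 - a2 - a3 - a4 = 2 * t + 2 * π / 3 + π - 2 * π - 2 * π := by linarith
  rw [f4, f3, f2, f1] at k1 k2
  simp only [cos_sub_two_pi, sin_sub_two_pi, cos_add_pi, sin_add_pi,
    cos_neg, sin_neg, cos_zero, sin_zero] at k1 k2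
  rw [cos_add (π / 3), cos_pi_div_three, sin_pi_div_three] at k1
  rw [sin_add (π / 3), cos_pi_div_three, sin_pi_div_three] at k2
  have q := sin_sq_add_cos_sq (3 * t)
  have q3 : (√3) ^ 2 = 3 := sq_sqrt (by norm_num)
  have e1 : 3 * cos (3 * t) - √3 * sin (3 * t) = 2 := by linarith
  have e2 : 4 * sin (2 * t + 2 * π / 3) = 3 * sin (3 * t) + √3 * cos (3 * t) := by linarith
  have e3 : sin (2 * t + 2 * π / 3) ^ 2 = 1 / 2 := by
    have : (4 * sin (2 * t + 2 * π / 3)) ^ 2 + (3 * cos (3 * t) - √3 * sin (3 * t)) ^ 2 = 12 := by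
      rw [e2]
      linear_combination (9 + √3 ^ 2) * q + q3
    rw [e1] at this
    linarith
  have e4 : cos (2 * (2 * t + 2 * π / 3) - π) = cos (π / 2) := by
    rw [cos_sub_pi, cos_two_mul, cos_pi_div_two]
    linarith [sin_sq_add_cos_sq (2 * t + 2 * π / 3)]
  have e5 := injOn_cos ⟨by linarith, by linarith⟩ ⟨by linarith [pi_pos], by linarith [pi_pos]⟩ e4
  have e6 : 3 * t = π / 8 := by linarith
  rw [e6, cos_pi_div_eight, sin_pi_div_eight] at e1
  have q2 : (√2) ^ 2 = 2 := sq_sqrt (by norm_num)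
  have l2 : √2 < 1.415 := by rw [sqrt_lt' (by norm_num)]; norm_num
  have l2' : 1.414 < √2 := lt_sqrt_of_sq_lt (by norm_num)
  have l3 : √3 < 1.7321 := by rw [sqrt_lt' (by norm_num)]; norm_num
  have a1 : 1.847 < √(2 + √2) := lt_sqrt_of_sq_lt (by norm_num; linarith)
  have a2 : √(2 - √2) < 0.766 := by rw [sqrt_lt' (by norm_num)]; norm_num; linarith
  have a3 : √3 * √(2 - √2) ≤ 1.7321 * 0.766 := by gcongr
  linarith

lemma aux_third (x : ℝ) : - cos (2 * π / 3 - x) + cos (2 * π / 3 + (2 * π / 3 - x)) = - √3 * sin x := by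
  rw [show 2 * π / 3 + (2 * π / 3 - x) = (π / 3 - x) + π by ring, cos_add_pi,
    show 2 * π / 3 - x = π - (π / 3 + x) by ring, cos_pi_sub, cos_add, cos_sub, cos_pi_div_three,
    sin_pi_div_three]
  ring

lemma num_e3 {s c w S3 C3 : ℝ}
    (y1 : 1 / 2 * (2 * c ^ 2 - 1) + w / 2 * (2 * s * c) = 1 - w * s)
    (y2 : 1 + (1 / 2 * C3 - w / 2 * S3) = w * (2 * (2 * s * c) * (2 * c ^ 2 - 1)))
    (q : s ^ 2 + c ^ 2 = 1) (q3 : w ^ 2 = 3) (qq : S3 ^ 2 + C3 ^ 2 = 1) (s3 : S3 = 3 * s - 4 * s ^ 3)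
    (sp : 0 < s) (c3p : 0 < C3) (s3p : 0 < S3) (cp : 0 < c) (sh : s < 1 / 2) (l3 : w < 1.73206)
    (l3' : 1.73205 < w) : False := by
  have c1 : c ≤ 1 := by nlinarith
  have cl : 1 - s ^ 2 ≤ c := by nlinarith
  have z1 : w * s * (1 + c) = 1 / 2 + s ^ 2 := by linear_combination y1 - q
  have b1 : 0.1507 < s := by
    by_contra! hb
    have : w * s * (1 + c) ≤ 1.73206 * s * 2 := by gcongr; linarith
    nlinarith
  have b2 : s < 0.153 := by
    by_contra! hb
    have : 1.73205 * s * (2 - s ^ 2) ≤ w * s * (1 + c) := by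
      have : 0 ≤ 2 - s ^ 2 := by nlinarith
      gcongr; linarith
    clear y1 y2 qq s3 q q3 cl
    nlinarith [mul_nonneg (sub_nonneg.2 hb) (sub_nonneg.2 sh.le), mul_nonneg (mul_nonneg (sub_nonneg.2 hb) (sub_nonneg.2 sh.le)) sp.le]
  have S3b : S3 < 0.459 := by nlinarith [pow_pos sp 3]
  have C3b : w * S3 ≤ C3 := by
    have : (w * S3) ^ 2 ≤ C3 ^ 2 := by nlinarith
    exact (abs_le_of_sq_le_sq' this c3p.le).2
  have z2 : 1 ≤ w * (2 * (2 * s * c) * (2 * c ^ 2 - 1)) := by linarith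
  have z3 : w * (2 * (2 * s * c) * (2 * c ^ 2 - 1)) = 4 * (1 / 2 + s ^ 2 - w * s) * (1 - 2 * s ^ 2) := by
    have : c ^ 2 = 1 - s ^ 2 := by linarith
    rw [this]
    linear_combination (4 * (1 - 2 * s ^ 2)) * z1
  rw [z3] at z2
  have z4 : 1 / 2 + s ^ 2 - w * s ≤ 1 / 2 + s ^ 2 - 1.73205 * s := by linarith [mul_pos sp (sub_pos.2 l3')]
  clear z3 y1 y2 qq s3 q q3 z1 C3b S3b cl
  have z5 : 1 / 2 + s ^ 2 - 1.73205 * s ≤ 0.2618 := by nlinarith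
  have z6 : 1 - 2 * s ^ 2 ≤ 0.9546 := by nlinarith
  have z7 : 0 ≤ 1 - 2 * s ^ 2 := by nlinarith
  nlinarith [mul_nonneg (sub_nonneg.2 (z4.trans z5)) z7]

lemma Ord.caseE3 {a0 a1 a2 a3 a4 : ℝ} (h : Ord a0 a1 a2 a3 a4) (r0 : a2 = 2 * π / 3)
    (r1 : 2 * a0 + a1 = 2 * π) (r2 : 2 * a3 + a0 = 2 * π) : False := by
  have hs := h.cl.1
  have m1 := h.m1
  obtain ⟨⟨h0, h0'⟩, ⟨h1, h1'⟩, ⟨h2, h2'⟩, ⟨h3, h3'⟩, ⟨h4, h4'⟩⟩ := h.r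
  obtain ⟨t, ht⟩ : ∃ t, t = 2 * π / 3 - a3 := ⟨_, rfl⟩
  have d1 := h.cl.dist
  have d2 := h.cl.rot.rot.rot.rot.dist
  have g3 : a3 = 2 * π / 3 - t := by linarith
  have g0 : a0 = π - (π / 3 - 2 * t) := by linarith
  have g1 : a1 = 2 * π / 3 - 4 * t := by linarith
  have g4 : a4 = π / 3 + 3 * t := by linarith
  have x1 := aux_third t
  have x2 := aux_third (4 * t)
  rw [← g3, ← r0] at x1
  rw [← g1, ← r0] at x2
  rw [g0, cos_pi_sub] at d1
  rw [g4, add_comm a1 a2] at d2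
  have c2 : cos a2 = - (1 / 2) := by rw [r0, cos_two_pi_div_three]
  have y1 : cos (π / 3 - 2 * t) = 1 - √3 * sin t := by linarith
  have y2 : 1 + cos (π / 3 + 3 * t) = √3 * sin (4 * t) := by linarith
  rw [cos_sub, cos_pi_div_three, sin_pi_div_three, cos_two_mul, sin_two_mul] at y1
  rw [cos_add, cos_pi_div_three, sin_pi_div_three, show 4 * t = 2 * (2 * t) by ring,
    sin_two_mul (2 * t), sin_two_mul, cos_two_mul] at y2
  have q := sin_sq_add_cos_sq t
  have q3 : (√3) ^ 2 = 3 := sq_sqrt (by norm_num)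
  have qq := sin_sq_add_cos_sq (3 * t)
  have s3 := sin_three_mul t
  have sp : 0 < sin t := sin_pos_of_pos_of_lt_pi (by linarith) (by linarith)
  have c3p : 0 < cos (3 * t) := cos_pos_of_mem_Ioo ⟨by linarith, by linarith⟩
  have s3p : 0 < sin (3 * t) := sin_pos_of_pos_of_lt_pi (by linarith) (by linarith)
  have cp : 0 < cos t := cos_pos_of_mem_Ioo ⟨by linarith, by linarith⟩
  have sh : sin t < 1 / 2 := by
    rw [← sin_pi_div_six]
    exact sin_lt_sin_of_lt_of_le_pi_div_two (by linarith) (by linarith) (by linarith)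
  have l3 : √3 < 1.73206 := by rw [sqrt_lt' (by norm_num)]; norm_num
  have l3' : 1.73205 < √3 := lt_sqrt_of_sq_lt (by norm_num)
  exact num_e3 y1 y2 q q3 qq s3 sp c3p s3p cp sh l3 l3'

end EqPent

namespace EqPent
open Real

/-- Combinatorial case analysis. -/
theorem core {a : Fin 5 → ℝ} (h : Ord (a 0) (a 1) (a 2) (a 3) (a 4))
    (N : ∀ i j, i ≠ j → a i + a j ≠ π)
    (LA : ∀ w : Fin 5 → ℝ, (∀ i, 0 ≤ w i) →
      (∀ x y, 2 * a x + a y = 2 * π → 1 ≤ 2 * w x + w y) → 1 ≤ w 0 + w 1 + w 2 + w 3 + w 4)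
    (LB : (∀ x y, 2 * a x + a y = 2 * π → (x = 0 ∧ y = 1) ∨ (x = 2 ∧ y = 3)) → False) :
    2 * a 0 + a 1 = 2 * π ∧ 2 * a 2 + a 4 = 2 * π := by
  have m1 := h.m1
  have m2 := h.m2
  have hs := h.cl.1
  have h02 := h.h02
  have h23 := h.h23
  have h34 := h.h34
  have h41 := h.h41
  have e02 := h.e02
  have e23 := h.e23
  have hr := h.r
  have top : ∀ y, a y ≤ a 0 := by
    intro y; fin_cases y <;> simp <;> linarith
  have rel : ∀ x y, 2 * a x + a y = 2 * π → x = 0 ∨ x = 2 ∨ (x = 3 ∧ y = 0) := by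
    intro x y hxy
    have := top y
    fin_cases x
    · simp
    · simp at hxy; linarith
    · simp
    · simp at hxy ⊢
      fin_cases y
      · simp
      all_goals simp at hxy; linarith
    · simp at hxy; linarith
  have LA2 : ∀ u v w : ℝ, 0 ≤ u → 0 ≤ v → 0 ≤ w →
      (∀ y, 2 * a 0 + a y = 2 * π → 1 ≤ 2 * u + (![u, 0, v, w, 0] : Fin 5 → ℝ) y) →
      (∀ y, 2 * a 2 + a y = 2 * π → 1 ≤ 2 * v + (![u, 0, v, w, 0] : Fin 5 → ℝ) y) →
      (2 * a 3 + a 0 = 2 * π → 1 ≤ 2 * w + u) → 1 ≤ u + v + w := by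
    intro u v w hu hv hw h0 h2 h3
    have := LA ![u, 0, v, w, 0] (by intro i; fin_cases i <;> simp [hu, hv, hw]) (by
      intro x y hxy
      rcases rel x y hxy with rfl | rfl | ⟨rfl, rfl⟩
      · exact h0 y hxy
      · exact h2 y hxy
      · exact h3 hxy)
    simpa [Fin.sum_univ_five] using this
  by_cases R2 : ∃ z, 2 * a 2 + a z = 2 * π
  swap
  · push Not at R2
    have := LA2 (1/2) 0 (1/4) (by norm_num) (by norm_num) (by norm_num)
      (by intro y _; fin_cases y <;> norm_num) (fun y hy => absurd hy (R2 y)) (by norm_num)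
    norm_num at this
  obtain ⟨z, hz⟩ := R2
  by_cases R3 : 2 * a 3 + a 0 = 2 * π
  · by_cases R0 : ∃ y, 2 * a 0 + a y = 2 * π
    · obtain ⟨y, hy⟩ := R0
      exfalso
      fin_cases z <;> simp at hz
      · have : a 1 = a 4 := e23.1 (by linarith)
        exact N 1 4 (by decide) (by linarith)
      · exact h.caseC hz R3
      · fin_cases y <;> simp at hy
        · linarith
        · exact h.caseE3 (by linarith) hy R3
        · linarith
        · linarith
        · exact h.caseE2 (by linarith) hy R3
      · fin_cases y <;> simp at hy
        · linarith
        · exact h.caseE1 hy hz R3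
        · linarith
        · linarith
        · exact h.caseB (by linarith) hy hz
      · exact N 3 4 (by decide) (h.caseD hz R3)
    · push Not at R0
      exfalso
      have ne34 : a 3 ≠ a 4 := fun e => by have := e02.2 e; linarith
      have lt34 : a 4 < a 3 := lt_of_le_of_ne h34 ne34.symm
      fin_cases z <;> simp at hz
      · have : a 1 = a 4 := e23.1 (by linarith)
        exact N 1 4 (by decide) (by linarith)
      · exact h.caseC hz R3
      · have := LA2 0 (1/3) (1/2) (by norm_num) (by norm_num) (by norm_num)
          (fun y hy => absurd hy (R0 y))
          (by
            intro y hy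
            fin_cases y <;> simp at hy ⊢
            · linarith
            · linarith
            · linarith
            · norm_num
            · linarith) (by norm_num)
        norm_num at this
      · have := LA2 0 (1/4) (1/2) (by norm_num) (by norm_num) (by norm_num)
          (fun y hy => absurd hy (R0 y))
          (by
            intro y hy
            fin_cases y <;> simp at hy ⊢
            · linarith
            · linarith
            · linarith
            · norm_num
            · linarith) (by norm_num)
        norm_num at this
      · exact N 3 4 (by decide) (h.caseD hz R3)
  · by_cases R0 : ∃ y, 2 * a 0 + a y = 2 * π
    swap
    · push Not at R0
      have := LA2 0 (1/2) 0 (by norm_num) (by norm_num) (by norm_num)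
        (fun y hy => absurd hy (R0 y)) (by intro y _; fin_cases y <;> norm_num)
        (fun hh => absurd hh R3)
      norm_num at this
    · obtain ⟨y, hy⟩ := R0
      have tz := top z
      have all120 : a 0 = 2 * π / 3 → a 2 = 2 * π / 3 → False := by
        intro e0 e2
        have := LA2 (1/3) (1/3) 0 (by norm_num) (by norm_num) (by norm_num)
          (by
            intro y hy
            fin_cases y <;> simp at hy ⊢
            · norm_num
            · linarith
            · norm_num
            · linarith
            · linarith)
          (by
            intro y hy
            fin_cases y <;> simp at hy ⊢
            · norm_num
            · linarith
            · norm_num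
            · linarith
            · linarith) (fun hh => absurd hh R3)
        norm_num at this
      have hy3 : y ≠ 0 := by
        rintro rfl; exact all120 (by linarith) (by linarith)
      have hy2 : y ≠ 2 := by
        rintro rfl; exact all120 (by linarith) (by linarith)
      have ty : a y ≤ a 3 := by
        fin_cases y <;> simp at hy3 hy2 ⊢ <;> linarith
      have hz0 : z ≠ 0 := by
        rintro rfl
        have := LA2 (1/2) (1/4) 0 (by norm_num) (by norm_num) (by norm_num)
          (by intro y _; fin_cases y <;> norm_num)
          (by
            intro y hy
            fin_cases y <;> simp at hy ⊢
            · norm_num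
            all_goals linarith) (fun hh => absurd hh R3)
        norm_num at this
      have hz2 : z ≠ 2 := by
        rintro rfl
        have := LA2 (1/2) (1/3) 0 (by norm_num) (by norm_num) (by norm_num)
          (by intro y _; fin_cases y <;> norm_num)
          (by
            intro y hy
            fin_cases y <;> simp at hy ⊢
            · norm_num
            · linarith
            · norm_num
            · linarith
            · linarith) (fun hh => absurd hh R3)
        norm_num at this
      have ne : a 0 ≠ a 2 := by
        intro e
        have e34 := e02.1 e
        fin_cases y <;> simp at hy hy3 hy2
        · exact N 3 4 (by decide) (by linarith)
        · exact N 1 4 (by decide) (by linarith)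
        · exact N 1 3 (by decide) (by linarith)
      have lt02 : a 2 < a 0 := lt_of_le_of_ne h02 ne.symm
      have lt34 : a 4 < a 3 := lt_of_le_of_ne h34 fun e => ne (e02.2 e.symm)
      fin_cases y <;> simp at hy hy3 hy2
      · fin_cases z <;> simp at hz hz0 hz2
        · linarith
        · exfalso
          apply LB
          intro x y hxy
          have l14 : a 1 < a 4 := lt_of_le_of_ne h41 fun e => by
            have := e23.2 e
            linarith
          rcases rel x y hxy with rfl | rfl | ⟨rfl, rfl⟩
          · fin_cases y <;> simp at hxy ⊢ <;> linarith
          · fin_cases y <;> simp at hxy ⊢ <;> linarith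
          · exact absurd hxy R3
        · exact ⟨hy, hz⟩
      · exfalso
        fin_cases z <;> simp at hz hz0 hz2 <;> linarith
      · exfalso
        fin_cases z <;> simp at hz hz0 hz2
        · linarith
        · exact h.caseB lt02 hy hz
        · linarith

end EqPent

namespace EqPent
open MeasureTheory Set Metric Filter Topology
open scoped Real

lemma iso_measurePreserving (g : ℂ ≃ᵢ ℂ) : MeasurePreserving g (volume : Measure ℂ) volume := by
  have h := (measurePreserving_add_right (volume : Measure ℂ) (g 0)).comp
    g.toRealLinearIsometryEquiv.measurePreserving
  have e : (g : ℂ → ℂ) = (fun x => x + g 0) ∘ g.toRealLinearIsometryEquiv := by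
    funext x; simp
  rw [e]; exact h

lemma vol_image (g : ℂ ≃ᵢ ℂ) (S : Set ℂ) : volume (g '' S) = volume S := by
  have : g '' S = g.symm ⁻¹' S := by
    ext x; simp [mem_image_iff_of_inverse g.symm_apply_apply g.apply_symm_apply]
  rw [this]
  exact (iso_measurePreserving g.symm).measure_preimage_emb
    g.symm.toHomeomorph.measurableEmbedding S

/-- data about the pentagon used by the tiling argument -/
structure PData (V : Fin 5 → ℂ) (a : Fin 5 → ℝ) (K : Set ℂ) : Prop where
  conv : Convex ℝ K
  comp : IsCompact K
  intne : (interior K).Nonempty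
  apos : ∀ i, 0 < a i
  alt : ∀ i, a i < π
  asum : a 0 + a 1 + a 2 + a 3 + a 4 = 3 * π
  mem : ∀ i, V i ∈ K
  inj : Function.Injective V
  notint : ∀ i, V i ∉ interior K
  corner : ∀ i, ∀ᶠ r in 𝓝[>] (0 : ℝ), volume (K ∩ ball (V i) r) = ENNReal.ofReal (a i / 2 * r ^ 2)
  sidept : ∀ x ∈ K, x ∉ interior K → (∀ i, x ≠ V i) →
    ∀ᶠ r in 𝓝[>] (0 : ℝ), volume (K ∩ ball x r) = ENNReal.ofReal (π / 2 * r ^ 2)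
  edge_sub : ∀ i, segment ℝ (V i) (V (i + 1)) ⊆ K \ interior K
  edge_loc : ∀ i, ∀ᶠ z in 𝓝 (V i), z ∈ K → z ∉ interior K →
    z ∈ segment ℝ (V i) (V (i + 1)) ∨ z ∈ segment ℝ (V i) (V (i - 1))
  len : ∃ l : ℝ, 0 < l ∧ ∀ i, dist (V i) (V (i + 1)) = l

/-- an indexed tiling of the complex plane by copies of `K` -/
structure Til (K : Set ℂ) {ι : Type} (g : ι → ℂ ≃ᵢ ℂ) : Prop where
  cover : ∀ x : ℂ, ∃ t, x ∈ g t '' K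
  disj : ∀ t s, t ≠ s → Disjoint (interior (g t '' K)) (interior (g s '' K))

variable {V : Fin 5 → ℂ} {a : Fin 5 → ℝ} {K : Set ℂ} {ι : Type} {g : ι → ℂ ≃ᵢ ℂ}

lemma int_image (g : ℂ ≃ᵢ ℂ) (K : Set ℂ) : interior (g '' K) = g '' interior K :=
  (g.toHomeomorph.image_interior K).symm

lemma fr_image (g : ℂ ≃ᵢ ℂ) (K : Set ℂ) : frontier (g '' K) = g '' frontier K :=
  (g.toHomeomorph.image_frontier K).symm

lemma PData.tile_closed (hP : PData V a K) (g : ℂ ≃ᵢ ℂ) : IsClosed (g '' K) :=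
  (hP.comp.image g.continuous).isClosed

lemma PData.tile_fr (hP : PData V a K) (g : ℂ ≃ᵢ ℂ) : volume (frontier (g '' K)) = 0 := by
  rw [fr_image, vol_image]
  exact hP.conv.addHaar_frontier volume

lemma PData.vol_int (hP : PData V a K) : volume (interior K) = volume K := by
  refine le_antisymm (measure_mono interior_subset) ?_
  have : K ⊆ interior K ∪ frontier K := by
    rw [hP.comp.isClosed.frontier_eq]
    intro x hx
    by_cases h : x ∈ interior K
    · exact Or.inl h
    · exact Or.inr ⟨hx, h⟩
  refine (measure_mono this).trans ((measure_union_le _ _).trans ?_)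
  rw [hP.conv.addHaar_frontier volume, add_zero]

lemma PData.vol_fin (hP : PData V a K) : volume K ≠ ⊤ := hP.comp.measure_lt_top.ne

/-- area of the tile -/
noncomputable def area (K : Set ℂ) : ℝ := (volume K).toReal

lemma PData.area_pos (hP : PData V a K) : 0 < area K := by
  refine ENNReal.toReal_pos ?_ hP.vol_fin
  rw [← hP.vol_int]
  exact (isOpen_interior.measure_pos volume hP.intne).ne'

lemma PData.vol_eq (hP : PData V a K) : volume K = ENNReal.ofReal (area K) :=
  (ENNReal.ofReal_toReal hP.vol_fin).symm

/-- Tiles contained in `U` have total area at most that of `U`. -/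
lemma count_le (hP : PData V a K) (hT : Til K g) (S : Finset ι) (U : Set ℂ)
    (hU : ∀ t ∈ S, g t '' K ⊆ U) : S.card * volume K ≤ volume U := by
  have h1 : volume (⋃ t ∈ S, interior (g t '' K)) = ∑ t ∈ S, volume (interior (g t '' K)) :=
    measure_biUnion_finset (fun t _ s _ hts => hT.disj t s hts)
      fun t _ => isOpen_interior.measurableSet
  have h2 : ∑ t ∈ S, volume (interior (g t '' K)) = S.card * volume K := by
    simp_rw [int_image, vol_image, hP.vol_int]
    simp
  rw [← h2, ← h1]
  exact measure_mono (iUnion₂_subset fun t ht => interior_subset.trans (hU t ht))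

/-- diameter bound -/
lemma PData.diam (hP : PData V a K) : ∃ D : ℝ, 0 < D ∧ ∀ (g : ℂ ≃ᵢ ℂ), ∀ x ∈ g '' K, ∀ y ∈ g '' K, dist x y ≤ D := by
  obtain ⟨D, hD⟩ := Metric.isBounded_iff.1 hP.comp.isBounded
  refine ⟨max D 1, by positivity, ?_⟩
  rintro g _ ⟨x, hx, rfl⟩ _ ⟨y, hy, rfl⟩
  rw [g.isometry.dist_eq]
  exact (hD hx hy).trans (le_max_left _ _)

lemma vol_cb (x : ℂ) {r : ℝ} (hr : 0 ≤ r) : volume (closedBall x r) = ENNReal.ofReal (π * r ^ 2) := by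
  rw [Complex.volume_closedBall, mul_comm π, ENNReal.ofReal_mul (by positivity), ← ENNReal.ofReal_pow hr]
  congr 1
  rw [← ENNReal.ofReal_coe_nnreal]; rfl

lemma vol_b (x : ℂ) {r : ℝ} (hr : 0 ≤ r) : volume (ball x r) = ENNReal.ofReal (π * r ^ 2) := by
  rw [← vol_cb x hr, Measure.addHaar_closedBall_eq_addHaar_ball]

lemma finite_meet (hP : PData V a K) (hT : Til K g) (x : ℂ) (R : ℝ) :
    {t | (g t '' K ∩ closedBall x R).Nonempty}.Finite := by
  obtain ⟨D, hD0, hD⟩ := hP.diam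
  by_contra hinf
  set R' := |R| + D with hR'
  have hR'0 : 0 ≤ R' := by positivity
  obtain ⟨n, hn⟩ := exists_nat_gt (π * R' ^ 2 / area K)
  obtain ⟨S, hS, hc⟩ := Set.Infinite.exists_subset_card_eq hinf n
  have := count_le hP hT S (closedBall x R') (by
    intro t ht y hy
    obtain ⟨z, hz, hz'⟩ := hS ht
    rw [mem_closedBall] at hz' ⊢
    have := hD (g t) y hy z hz
    have := dist_triangle y z x
    have := le_abs_self R
    linarith)
  rw [hc, vol_cb x hR'0, hP.vol_eq, ← ENNReal.ofReal_natCast, ← ENNReal.ofReal_mul (by positivity),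
    ENNReal.ofReal_le_ofReal_iff (by positivity)] at this
  rw [div_lt_iff₀ hP.area_pos] at hn
  linarith

end EqPent

namespace EqPent
open MeasureTheory Set Metric Filter Topology
open scoped Real

variable {V : Fin 5 → ℂ} {a : Fin 5 → ℝ} {K : Set ℂ} {ι : Type} {g : ι → ℂ ≃ᵢ ℂ}

open Classical in
/-- the angle of the tile at the point `x` -/
noncomputable def ang (V : Fin 5 → ℂ) (a : Fin 5 → ℝ) (K : Set ℂ) (g : ℂ ≃ᵢ ℂ) (x : ℂ) : ℝ :=
  if x ∈ interior (g '' K) then 2 * π else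
    if ∃ i, g (V i) = x then ∑ i, if g (V i) = x then a i else 0 else π

lemma ang_corner (hP : PData V a K) (g : ℂ ≃ᵢ ℂ) (i : Fin 5) : ang V a K g (g (V i)) = a i := by
  have h1 : g (V i) ∉ interior (g '' K) := by
    rw [int_image]
    rintro ⟨y, hy, h⟩
    rw [g.injective h] at hy
    exact hP.notint i hy
  have h2 : ∃ j, g (V j) = g (V i) := ⟨i, rfl⟩
  rw [ang, if_neg h1, if_pos h2]
  simp [hP.inj.eq_iff]

lemma ang_pos (hP : PData V a K) (g : ℂ ≃ᵢ ℂ) (x : ℂ) : 0 < ang V a K g x := by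
  by_cases h : ∃ i, g (V i) = x
  · obtain ⟨i, rfl⟩ := h
    rw [ang_corner hP]
    exact hP.apos i
  · rw [ang]
    split_ifs
    · positivity
    · exact Real.pi_pos

lemma ball_image (g : ℂ ≃ᵢ ℂ) (K : Set ℂ) (y : ℂ) (r : ℝ) :
    g '' K ∩ ball (g y) r = g '' (K ∩ ball y r) := by
  rw [image_inter g.injective, g.image_ball]

lemma ang_vol (hP : PData V a K) (g : ℂ ≃ᵢ ℂ) {x : ℂ} (hx : x ∈ g '' K) :
    ∀ᶠ r in 𝓝[>] (0 : ℝ), volume (g '' K ∩ ball x r) = ENNReal.ofReal (ang V a K g x / 2 * r ^ 2) := by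
  obtain ⟨y, hy, rfl⟩ := hx
  by_cases h : ∃ i, g (V i) = g y
  · obtain ⟨i, hi⟩ := h
    rw [← hi, ang_corner hP]
    filter_upwards [hP.corner i] with r hr
    rw [ball_image, vol_image, hr]
  · by_cases h1 : y ∈ interior K
    · have h2 : g y ∈ interior (g '' K) := by rw [int_image]; exact mem_image_of_mem _ h1
      rw [ang, if_pos h2]
      obtain ⟨ρ, hρ, hb⟩ := Metric.isOpen_iff.1 isOpen_interior y h1
      have : ∀ᶠ r in 𝓝[>] (0 : ℝ), r ∈ Ioo 0 ρ := Ioo_mem_nhdsGT hρ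
      filter_upwards [this] with r hr
      rw [ball_image, vol_image, inter_eq_self_of_subset_right, vol_b _ hr.1.le]
      · congr 1; ring
      · exact (ball_subset_ball hr.2.le).trans (hb.trans interior_subset)
    · have h2 : g y ∉ interior (g '' K) := by
        rw [int_image]
        rintro ⟨z, hz, e⟩
        rw [g.injective e] at hz
        exact h1 hz
      rw [ang, if_neg h2, if_neg h]
      filter_upwards [hP.sidept y hy h1 (fun i hi => h ⟨i, by rw [hi]⟩)] with r hr
      rw [ball_image, vol_image, hr]

lemma node_sum (hP : PData V a K) (hT : Til K g) (x : ℂ) :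
    ∃ N : Finset ι, (∀ t, t ∈ N ↔ x ∈ g t '' K) ∧ ∑ t ∈ N, ang V a K (g t) x = 2 * π ∧
      ∀ᶠ z in 𝓝 x, ∀ t, z ∈ g t '' K → t ∈ N := by
  classical
  have hfin := finite_meet hP hT x 1
  set M := hfin.toFinset with hM
  have hN : ∀ t, t ∈ M.filter (fun t => x ∈ g t '' K) ↔ x ∈ g t '' K := by
    intro t
    simp only [Finset.mem_filter, and_iff_right_iff_imp]
    intro h
    rw [hM, Set.Finite.mem_toFinset]
    exact ⟨x, h, by simp⟩
  set N := M.filter (fun t => x ∈ g t '' K) with hNd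
  have hloc : ∀ᶠ z in 𝓝 x, ∀ t, z ∈ g t '' K → t ∈ N := by
    have h1 : ∀ᶠ z in 𝓝 x, ∀ t ∈ M, t ∉ N → z ∉ g t '' K := by
      rw [Filter.eventually_all_finset]
      intro t _
      by_cases ht : t ∈ N
      · exact Eventually.of_forall fun z h => absurd ht h
      · rw [hN] at ht
        filter_upwards [(hP.tile_closed (g t)).isOpen_compl.mem_nhds ht] with z hz _
        exact hz
    have h2 : ∀ᶠ z in 𝓝 x, z ∈ closedBall x 1 := closedBall_mem_nhds x one_pos
    filter_upwards [h1, h2] with z hz hz2 t ht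
    by_contra hn
    refine hz t ?_ hn ht
    rw [hM, Set.Finite.mem_toFinset]
    exact ⟨z, ht, hz2⟩
  refine ⟨N, hN, ?_, hloc⟩
  have hvol : ∀ᶠ r in 𝓝[>] (0 : ℝ), ∀ t ∈ N, volume (g t '' K ∩ ball x r) =
      ENNReal.ofReal (ang V a K (g t) x / 2 * r ^ 2) := by
    rw [Filter.eventually_all_finset]
    intro t ht
    exact ang_vol hP (g t) ((hN t).1 ht)
  obtain ⟨ρ, hρ, hb⟩ := Metric.eventually_nhds_iff_ball.1 hloc
  have h3 : ∀ᶠ r in 𝓝[>] (0 : ℝ), r ∈ Ioo 0 ρ := Ioo_mem_nhdsGT hρ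
  obtain ⟨r, hr, hrI⟩ := (hvol.and h3).exists
  have hcov : ball x r = ⋃ t ∈ N, (g t '' K ∩ ball x r) := by
    apply subset_antisymm
    · intro z hz
      obtain ⟨t, ht⟩ := hT.cover z
      have := hb z (ball_subset_ball hrI.2.le hz) t ht
      exact mem_iUnion₂.2 ⟨t, this, ht, hz⟩
    · exact iUnion₂_subset fun t _ => inter_subset_right
  have hsum : volume (⋃ t ∈ N, (g t '' K ∩ ball x r)) = ∑ t ∈ N, volume (g t '' K ∩ ball x r) := by
    apply measure_biUnion_finset₀
    · intro t _ s _ hts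
      have hd := hT.disj t s hts
      refine measure_mono_null (t := frontier (g t '' K) ∪ frontier (g s '' K)) ?_ ?_
      · rintro z ⟨⟨hz1, _⟩, ⟨hz2, _⟩⟩
        rw [(hP.tile_closed (g t)).frontier_eq, (hP.tile_closed (g s)).frontier_eq]
        by_cases h : z ∈ interior (g t '' K)
        · exact Or.inr ⟨hz2, fun h' => disjoint_left.1 hd h h'⟩
        · exact Or.inl ⟨hz1, h⟩
      · exact measure_union_null (hP.tile_fr _) (hP.tile_fr _)
    · intro t _
      exact ((hP.tile_closed (g t)).measurableSet.inter measurableSet_ball).nullMeasurableSet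
  rw [← hcov, vol_b x hrI.1.le, Finset.sum_congr rfl (fun t ht => hr t ht),
    ← ENNReal.ofReal_sum_of_nonneg, ENNReal.ofReal_eq_ofReal_iff, ← Finset.sum_mul,
    ← Finset.sum_div] at hsum
  · have : 0 < r ^ 2 := by have := hrI.1; positivity
    have := mul_right_cancel₀ this.ne' hsum
    linarith
  · positivity
  · exact Finset.sum_nonneg fun t _ => by have := ang_pos hP (g t) x; positivity
  · exact fun t _ => by have := ang_pos hP (g t) x; positivity

end EqPent

namespace EqPent
open MeasureTheory Set Metric Filter Topology
open scoped Real

variable {V : Fin 5 → ℂ} {a : Fin 5 → ℝ} {K : Set ℂ} {ι : Type} {g : ι → ℂ ≃ᵢ ℂ}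

/-- condition on the weights at nodes where exactly three corners meet -/
def HW (V : Fin 5 → ℂ) (a : Fin 5 → ℝ) (K : Set ℂ) (g : ι → ℂ ≃ᵢ ℂ) (w : ι → Fin 5 → ℝ) : Prop :=
  ∀ (x : ℂ) (t₁ t₂ t₃ : ι) (i₁ i₂ i₃ : Fin 5), t₁ ≠ t₂ → t₁ ≠ t₃ → t₂ ≠ t₃ →
    g t₁ (V i₁) = x → g t₂ (V i₂) = x → g t₃ (V i₃) = x →
    (∀ t, x ∈ g t '' K → t = t₁ ∨ t = t₂ ∨ t = t₃) →
    a i₁ + a i₂ + a i₃ = 2 * π → 1 ≤ w t₁ i₁ + w t₂ i₂ + w t₃ i₃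

lemma node_f (hP : PData V a K) (hT : Til K g) (w : ι → Fin 5 → ℝ) (hw0 : ∀ t i, 0 ≤ w t i)
    (hw : HW V a K g w) (x : ℂ) (Q : Finset (ι × Fin 5)) (hQ : ∀ p, p ∈ Q ↔ g p.1 (V p.2) = x) :
    0 ≤ ∑ p ∈ Q, (1 - 2 * a p.2 / π + w p.1 p.2) := by
  classical
  rcases Q.eq_empty_or_nonempty with rfl | hQne
  · simp
  obtain ⟨N, hN, hsum, -⟩ := node_sum hP hT x
  have hinj : Set.InjOn (Prod.fst : ι × Fin 5 → ι) Q := by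
    rintro ⟨t, i⟩ h1 ⟨s, j⟩ h2 (h : t = s)
    subst h
    have e1 := (hQ _).1 h1
    have e2 := (hQ _).1 h2
    have := hP.inj ((g t).injective (e1.trans e2.symm))
    simp at this
    rw [this]
  set Nc := Q.image Prod.fst with hNc
  have hsub : Nc ⊆ N := by
    intro t ht
    obtain ⟨p, hp, rfl⟩ := Finset.mem_image.1 ht
    rw [hN, ← (hQ p).1 hp]
    exact mem_image_of_mem _ (hP.mem _)
  have hcs : ∑ t ∈ Nc, ang V a K (g t) x = ∑ p ∈ Q, a p.2 := by
    rw [hNc, Finset.sum_image hinj]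
    refine Finset.sum_congr rfl fun p hp => ?_
    rw [← (hQ p).1 hp, ang_corner hP]
  have hsplit := Finset.sum_sdiff (f := fun t => ang V a K (g t) x) hsub
  rw [hsum, hcs] at hsplit
  have hnc : ∀ t ∈ N \ Nc, ang V a K (g t) x = π ∨ ang V a K (g t) x = 2 * π := by
    intro t ht
    have h2 : ¬ ∃ i, g t (V i) = x := by
      rintro ⟨i, hi⟩
      rw [Finset.mem_sdiff] at ht
      exact ht.2 (Finset.mem_image.2 ⟨(t, i), (hQ _).2 hi, rfl⟩)
    rw [ang, if_neg h2]
    split_ifs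
    · exact Or.inr rfl
    · exact Or.inl rfl
  have hpi := Real.pi_pos
  have hQpos : 0 < ∑ p ∈ Q, a p.2 := Finset.sum_pos (fun p _ => hP.apos _) hQne
  have hQlt : ∑ p ∈ Q, a p.2 < Q.card * π := by
    have := Finset.sum_lt_sum_of_nonempty hQne (fun p (_ : p ∈ Q) => hP.alt p.2)
    simpa using this
  have hwpos : 0 ≤ ∑ p ∈ Q, w p.1 p.2 := Finset.sum_nonneg fun p _ => hw0 _ _
  have hexp : ∑ p ∈ Q, (1 - 2 * a p.2 / π + w p.1 p.2) =
      Q.card - 2 * (∑ p ∈ Q, a p.2) / π + ∑ p ∈ Q, w p.1 p.2 := by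
    rw [Finset.sum_add_distrib, Finset.sum_sub_distrib, ← Finset.sum_div, ← Finset.mul_sum]
    simp
  rw [hexp]
  rcases (N \ Nc).eq_empty_or_nonempty with he | hne
  · rw [he, Finset.sum_empty, zero_add] at hsplit
    rw [hsplit] at hQlt ⊢
    have h4 : 2 * (2 * π) / π = 4 := by field_simp; norm_num
    rw [h4]
    have hk : 2 < Q.card := by
      have : (2 : ℝ) < Q.card := lt_of_mul_lt_mul_right hQlt hpi.le
      exact_mod_cast this
    rcases (show Q.card = 3 ∨ 4 ≤ Q.card by omega) with h3 | h4
    · obtain ⟨p₁, p₂, p₃, n12, n13, n23, rfl⟩ := Finset.card_eq_three.1 h3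
      have hmem : ∀ p ∈ ({p₁, p₂, p₃} : Finset (ι × Fin 5)), g p.1 (V p.2) = x := fun p hp => (hQ p).1 hp
      have m1 : p₁ ∈ ({p₁, p₂, p₃} : Finset (ι × Fin 5)) := by simp
      have m2 : p₂ ∈ ({p₁, p₂, p₃} : Finset (ι × Fin 5)) := by simp
      have m3 : p₃ ∈ ({p₁, p₂, p₃} : Finset (ι × Fin 5)) := by simp
      have key := hw x p₁.1 p₂.1 p₃.1 p₁.2 p₂.2 p₃.2
        (fun e => n12 (hinj m1 m2 e)) (fun e => n13 (hinj m1 m3 e)) (fun e => n23 (hinj m2 m3 e))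
        (hmem _ m1) (hmem _ m2) (hmem _ m3)
        (by
          intro t ht
          have h1 : t ∈ Nc := by
            by_contra hn
            have : t ∈ N \ Nc := Finset.mem_sdiff.2 ⟨(hN t).2 ht, hn⟩
            rw [he] at this
            simp at this
          obtain ⟨p, hp, rfl⟩ := Finset.mem_image.1 h1
          simp only [Finset.mem_insert, Finset.mem_singleton] at hp
          rcases hp with rfl | rfl | rfl <;> simp)
        (by
          have := hsplit
          rw [Finset.sum_insert (by simp [n12, n13]), Finset.sum_insert (by simp [n23]),
            Finset.sum_singleton] at this
          linarith)
      rw [Finset.sum_insert (by simp [n12, n13]), Finset.sum_insert (by simp [n23]),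
            Finset.sum_singleton, h3]
      push_cast
      linarith
    · have : (4 : ℝ) ≤ Q.card := by exact_mod_cast h4
      linarith
  · have hge : ((N \ Nc).card : ℝ) * π ≤ ∑ t ∈ N \ Nc, ang V a K (g t) x := by
      rw [← nsmul_eq_mul]
      refine Finset.card_nsmul_le_sum _ _ _ fun t ht => ?_
      rcases hnc t ht with h | h <;> rw [h] <;> linarith
    have hc1 : (N \ Nc).card < 2 := by
      have : ((N \ Nc).card : ℝ) < 2 := by
        by_contra! hc
        nlinarith
      exact_mod_cast this
    have hc2 : (N \ Nc).card = 1 := by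
      have := hne.card_pos
      omega
    obtain ⟨t, ht⟩ := Finset.card_eq_one.1 hc2
    rw [ht, Finset.sum_singleton] at hsplit
    have hπ : ang V a K (g t) x = π := by
      rcases hnc t (by rw [ht]; simp) with h | h
      · exact h
      · linarith
    have hq : ∑ p ∈ Q, a p.2 = π := by linarith
    rw [hq] at hQlt ⊢
    have h4 : 2 * π / π = 2 := by field_simp
    rw [h4]
    have hk : 1 < Q.card := by
      have : (1 : ℝ) < Q.card := by
        by_contra! hc
        nlinarith
      exact_mod_cast this
    have : (2 : ℝ) ≤ Q.card := by exact_mod_cast hk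
    linarith

set_option maxHeartbeats 1000000 in
/-- The averaging argument. -/
theorem averaging (hP : PData V a K) (hT : Til K g) (w : ι → Fin 5 → ℝ) (hw0 : ∀ t i, 0 ≤ w t i)
    (hw : HW V a K g w) (ε : ℝ) (hε : 0 < ε) (hs : ∀ t, ∑ i, w t i ≤ 1 - ε) : False := by
  classical
  obtain ⟨D, hD0, hD⟩ := hP.diam
  have hpi := Real.pi_pos
  have hA := hP.area_pos
  set R := D + 1 + 20 * D / ε with hR
  have hRD : D < R := by
    have : 0 < 20 * D / ε := by positivity
    linarith
  have hR0 : 0 < R := by linarith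
  have hRε : 20 * D < ε * R := by
    have : ε * R = ε * (D + 1) + 20 * D := by rw [hR]; field_simp
    have : 0 < ε * (D + 1) := by positivity
    linarith
  have hfin := finite_meet hP hT 0 R
  set S := hfin.toFinset with hS
  have memS : ∀ t, t ∈ S ↔ (g t '' K ∩ closedBall 0 R).Nonempty := by
    intro t; rw [hS, Set.Finite.mem_toFinset]; rfl
  let f : ι × Fin 5 → ℝ := fun p => 1 - 2 * a p.2 / π + w p.1 p.2
  have hfge : ∀ p, -1 ≤ f p := by
    intro p
    have h1 : 2 * a p.2 / π ≤ 2 := by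
      rw [div_le_iff₀ hpi]; have := hP.alt p.2; linarith
    have := hw0 p.1 p.2
    simp only [f]; linarith
  -- total
  have htot : ∑ p ∈ S ×ˢ (Finset.univ : Finset (Fin 5)), f p ≤ - ε * S.card := by
    rw [Finset.sum_product]
    have : ∀ t ∈ S, ∑ i, f (t, i) ≤ -ε := by
      intro t _
      have h1 : ∑ i, f (t, i) = 5 - 2 * (∑ i, a i) / π + ∑ i, w t i := by
        simp only [f]
        rw [Finset.sum_add_distrib, Finset.sum_sub_distrib, ← Finset.sum_div, ← Finset.mul_sum]
        simp
      have h2 : ∑ i, a i = 3 * π := by rw [Fin.sum_univ_five]; exact hP.asum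
      have h3 : 2 * (3 * π) / π = 6 := by field_simp; norm_num
      rw [h1, h2, h3]
      linarith [hs t]
    calc _ ≤ ∑ t ∈ S, (-ε) := Finset.sum_le_sum this
      _ = _ := by simp; ring
  set P1 := (S ×ˢ (Finset.univ : Finset (Fin 5))).filter (fun p => ‖g p.1 (V p.2)‖ ≤ R) with hP1
  set P2 := (S ×ˢ (Finset.univ : Finset (Fin 5))).filter (fun p => ¬ ‖g p.1 (V p.2)‖ ≤ R) with hP2
  have hsplit : ∑ p ∈ P1, f p + ∑ p ∈ P2, f p = ∑ p ∈ S ×ˢ (Finset.univ : Finset (Fin 5)), f p :=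
    Finset.sum_filter_add_sum_filter_not _ _ _
  have h1 : 0 ≤ ∑ p ∈ P1, f p := by
    rw [← Finset.sum_fiberwise_of_maps_to (t := P1.image fun p => g p.1 (V p.2))
      (g := fun p => g p.1 (V p.2)) (fun p hp => Finset.mem_image_of_mem _ hp)]
    refine Finset.sum_nonneg fun x hx => ?_
    obtain ⟨p, hp, hpx⟩ := Finset.mem_image.1 hx
    have hxR : ‖x‖ ≤ R := by rw [← hpx]; exact (Finset.mem_filter.1 hp).2
    refine node_f hP hT w hw0 hw x _ fun q => ?_
    rw [Finset.mem_filter, and_iff_right_iff_imp]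
    intro hq
    refine Finset.mem_filter.2 ⟨?_, by rw [hq]; exact hxR⟩
    rw [Finset.mem_product]
    refine ⟨(memS _).2 ⟨x, ?_, by simpa using hxR⟩, Finset.mem_univ _⟩
    rw [← hq]
    exact mem_image_of_mem _ (hP.mem _)
  set B := P2.image Prod.fst with hB
  have hBS : ∀ t ∈ B, g t '' K ⊆ closedBall 0 (R + D) \ ball 0 (R - D) := by
    intro t ht y hy
    obtain ⟨p, hp, rfl⟩ := Finset.mem_image.1 ht
    obtain ⟨hp1, hp2⟩ := Finset.mem_filter.1 hp
    obtain ⟨z, hz, hz'⟩ := (memS _).1 (Finset.mem_product.1 hp1).1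
    have d1 := hD _ y hy z hz
    have d2 := hD _ y hy _ (mem_image_of_mem _ (hP.mem p.2))
    rw [mem_closedBall_zero_iff] at hz'
    rw [dist_eq_norm] at d1 d2
    have t1 := norm_sub_norm_le y z
    have t2 := norm_sub_norm_le (g p.1 (V p.2)) y
    rw [norm_sub_rev] at t2
    refine ⟨by rw [mem_closedBall_zero_iff]; linarith, ?_⟩
    rw [mem_ball_zero_iff]
    push Not at hp2 ⊢
    linarith
  have hBc := count_le hP hT B _ hBS
  have hvol : volume (closedBall (0 : ℂ) (R + D) \ ball 0 (R - D)) = ENNReal.ofReal (4 * π * R * D) := by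
    rw [measure_sdiff (ball_subset_closedBall.trans (closedBall_subset_closedBall (by linarith)))
      measurableSet_ball.nullMeasurableSet measure_ball_lt_top.ne, vol_cb _ (by linarith),
      vol_b _ (by linarith), ← ENNReal.ofReal_sub _ (by positivity)]
    congr 1; ring
  rw [hvol, hP.vol_eq, ← ENNReal.ofReal_natCast, ← ENNReal.ofReal_mul (by positivity),
    ENNReal.ofReal_le_ofReal_iff (by positivity)] at hBc
  have hP2c : (P2.card : ℝ) ≤ 5 * B.card := by
    have : P2 ⊆ B ×ˢ (Finset.univ : Finset (Fin 5)) := by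
      intro p hp
      rw [Finset.mem_product]
      exact ⟨Finset.mem_image_of_mem _ hp, Finset.mem_univ _⟩
    have := Finset.card_le_card this
    rw [Finset.card_product] at this
    simp at this
    have h' : (P2.card : ℝ) ≤ (B.card * 5 : ℕ) := by exact_mod_cast this
    push_cast at h'
    linarith
  have h2 : - (P2.card : ℝ) ≤ ∑ p ∈ P2, f p := by
    have := Finset.card_nsmul_le_sum P2 f (-1) (fun p _ => hfge p)
    simpa using this
  have hSc : π * R ^ 2 ≤ S.card * area K := by
    have hc : closedBall (0 : ℂ) R ⊆ ⋃ t ∈ S, g t '' K := by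
      intro z hz
      obtain ⟨t, ht⟩ := hT.cover z
      exact mem_iUnion₂.2 ⟨t, (memS t).2 ⟨z, ht, hz⟩, ht⟩
    have := (measure_mono hc).trans (measure_biUnion_finset_le (μ := volume) S fun t => g t '' K)
    simp_rw [vol_image] at this
    rw [vol_cb _ hR0.le, Finset.sum_const, nsmul_eq_mul, hP.vol_eq, ← ENNReal.ofReal_natCast,
      ← ENNReal.ofReal_mul (by positivity), ENNReal.ofReal_le_ofReal_iff (by positivity)] at this
    exact this
  have h5 : ε * S.card ≤ 5 * B.card := by linarith
  clear_value R
  have h6 : ε * (π * R ^ 2) ≤ 5 * (4 * π * R * D) := by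
    have x1 := mul_le_mul_of_nonneg_left hSc hε.le
    have x2 := mul_le_mul_of_nonneg_right h5 hA.le
    linarith
  have h7 : (π * R) * (ε * R) ≤ (π * R) * (20 * D) := by linarith
  have h8 := le_of_mul_le_mul_left h7 (by positivity)
  linarith

end EqPent

namespace EqPent
open MeasureTheory Set Metric Filter Topology
open scoped Real

variable {V : Fin 5 → ℂ} {a : Fin 5 → ℝ} {K : Set ℂ} {ι : Type} {g : ι → ℂ ≃ᵢ ℂ}

lemma fin5_compl : ∀ i j k : Fin 5, i ≠ j → i ≠ k → j ≠ k →
    ∃ l m : Fin 5, l ≠ m ∧ i ∉ ({j, k, l, m} : Finset (Fin 5)) ∧ j ∉ ({k, l, m} : Finset (Fin 5)) ∧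
      k ∉ ({l, m} : Finset (Fin 5)) ∧ (Finset.univ : Finset (Fin 5)) = {i, j, k, l, m} := by
  decide

lemma triple_rep (hP : PData V a K) (hN : ∀ i j, i ≠ j → a i + a j ≠ π) {i j k : Fin 5}
    (h : a i + a j + a k = 2 * π) : i = j ∨ i = k ∨ j = k := by
  by_contra! hc
  obtain ⟨l, m, hlm, h1, h2, h3, hu⟩ := fin5_compl i j k hc.1 hc.2.1 hc.2.2
  have hs : ∑ i, a i = 3 * π := by rw [Fin.sum_univ_five]; exact hP.asum
  rw [hu, Finset.sum_insert h1, Finset.sum_insert h2, Finset.sum_insert h3,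
    Finset.sum_insert (by simpa using hlm), Finset.sum_singleton] at hs
  exact hN l m hlm (by linarith)

/-- reduction of the node condition to doubled corners -/
lemma HW_of (hP : PData V a K) (hN : ∀ i j, i ≠ j → a i + a j ≠ π) (w : ι → Fin 5 → ℝ)
    (h : ∀ (x : ℂ) (t₁ t₂ t₃ : ι) (i k : Fin 5), t₁ ≠ t₂ → t₁ ≠ t₃ → t₂ ≠ t₃ →
      g t₁ (V i) = x → g t₂ (V i) = x → g t₃ (V k) = x →
      (∀ t, x ∈ g t '' K → t = t₁ ∨ t = t₂ ∨ t = t₃) →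
      2 * a i + a k = 2 * π → 1 ≤ w t₁ i + w t₂ i + w t₃ k) : HW V a K g w := by
  intro x t₁ t₂ t₃ i₁ i₂ i₃ n12 n13 n23 e1 e2 e3 hall hsum
  rcases triple_rep hP hN hsum with rfl | rfl | rfl
  · exact h x t₁ t₂ t₃ i₁ i₃ n12 n13 n23 e1 e2 e3 hall (by linarith)
  · have := h x t₁ t₃ t₂ i₁ i₂ n13 n12 n23.symm e1 e3 e2 (fun t ht => by
      rcases hall t ht with h | h | h <;> simp [h]) (by linarith)
    linarith
  · have := h x t₂ t₃ t₁ i₂ i₁ n23 n12.symm n13.symm e2 e3 e1 (fun t ht => by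
      rcases hall t ht with h | h | h <;> simp [h]) (by linarith)
    linarith

theorem lemmaA (hP : PData V a K) (hT : Til K g) (hN : ∀ i j, i ≠ j → a i + a j ≠ π)
    (w : Fin 5 → ℝ) (hw0 : ∀ i, 0 ≤ w i)
    (hw : ∀ x y, 2 * a x + a y = 2 * π → 1 ≤ 2 * w x + w y) : 1 ≤ w 0 + w 1 + w 2 + w 3 + w 4 := by
  by_contra! hc
  refine averaging hP hT (fun _ => w) (fun _ => hw0) (HW_of hP hN _ ?_)
    (1 - (w 0 + w 1 + w 2 + w 3 + w 4)) (by linarith) (fun t => ?_)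
  · intro x t₁ t₂ t₃ i k _ _ _ _ _ _ _ h
    have := hw i k h
    linarith
  · rw [Fin.sum_univ_five]; linarith

lemma iso_sub (g : ℂ ≃ᵢ ℂ) (u v : ℂ) : g u - g v = g.toRealLinearIsometryEquiv (u - v) := by
  rw [map_sub]; simp

lemma iso_lin (g : ℂ ≃ᵢ ℂ) (u v : ℂ) (τ : ℝ) : g (u + τ • (v - u)) = g u + τ • (g v - g u) := by
  have := iso_sub g (u + τ • (v - u)) u
  rw [add_sub_cancel_left, map_smul, ← iso_sub] at this
  rw [← this]; ring

lemma PData.edge_loc' (hP : PData V a K) (g : ℂ ≃ᵢ ℂ) (k : Fin 5) :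
    ∀ᶠ z in 𝓝 (g (V k)), z ∈ g '' K → z ∉ interior (g '' K) →
      ∃ k', (k' = k + 1 ∨ k' = k - 1) ∧ ∃ τ : ℝ, 0 ≤ τ ∧ z = g (V k) + τ • (g (V k') - g (V k)) := by
  have ht : Tendsto g.symm (𝓝 (g (V k))) (𝓝 (V k)) := by
    have := g.symm.continuous.tendsto (g (V k))
    rwa [g.symm_apply_apply] at this
  filter_upwards [ht.eventually (hP.edge_loc k)] with z hz hzK hzi
  rw [int_image] at hzi
  have h1 : g.symm z ∈ K := by
    obtain ⟨y, hy, rfl⟩ := hzK; rwa [g.symm_apply_apply]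
  have h2 : g.symm z ∉ interior K := fun h => hzi ⟨_, h, g.apply_symm_apply z⟩
  have key : ∀ k', g.symm z ∈ segment ℝ (V k) (V k') →
      ∃ τ : ℝ, 0 ≤ τ ∧ z = g (V k) + τ • (g (V k') - g (V k)) := by
    intro k' h
    rw [segment_eq_image'] at h
    obtain ⟨τ, hτ, h⟩ := h
    refine ⟨τ, hτ.1, ?_⟩
    rw [← iso_lin]
    simp only at h
    rw [h, g.apply_symm_apply]
  rcases hz h1 h2 with h | h
  · exact ⟨_, Or.inl rfl, key _ h⟩
  · exact ⟨_, Or.inr rfl, key _ h⟩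

lemma PData.edge_mem (hP : PData V a K) {i j : Fin 5} (hj : j = i + 1 ∨ j = i - 1) :
    segment ℝ (V i) (V j) ⊆ K \ interior K := by
  rcases hj with rfl | rfl
  · exact hP.edge_sub i
  · rw [segment_symm]
    have := hP.edge_sub (i - 1)
    rwa [sub_add_cancel] at this

lemma PData.edge_len (hP : PData V a K) : ∃ l : ℝ, 0 < l ∧ ∀ (g : ℂ ≃ᵢ ℂ) (i j : Fin 5),
    (j = i + 1 ∨ j = i - 1) → ‖g (V j) - g (V i)‖ = l := by
  obtain ⟨l, hl, h⟩ := hP.len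
  refine ⟨l, hl, ?_⟩
  rintro g i j (rfl | rfl)
  · rw [← dist_eq_norm, dist_comm, g.isometry.dist_eq, h]
  · rw [← dist_eq_norm, g.isometry.dist_eq]
    have := h (i - 1)
    rwa [sub_add_cancel] at this

lemma adjacency (hP : PData V a K) (hT : Til K g) (t : ι) (i j : Fin 5) (hj : j = i + 1 ∨ j = i - 1)
    (hall : ∀ s, g t (V i) ∈ g s '' K → ∃ k, g s (V k) = g t (V i)) :
    ∃ s, s ≠ t ∧ ∃ k k', (k' = k + 1 ∨ k' = k - 1) ∧ g s (V k) = g t (V i) ∧ g s (V k') = g t (V j) := by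
  obtain ⟨N, hN, -, hloc⟩ := node_sum hP hT (g t (V i))
  have hedge : ∀ᶠ z in 𝓝 (g t (V i)), ∀ s ∈ N, ∀ k, g s (V k) = g t (V i) → z ∈ g s '' K →
      z ∉ interior (g s '' K) →
      ∃ k', (k' = k + 1 ∨ k' = k - 1) ∧ ∃ τ : ℝ, 0 ≤ τ ∧ z = g s (V k) + τ • (g s (V k') - g s (V k)) := by
    rw [Filter.eventually_all_finset]
    intro s _
    rw [Filter.eventually_all]
    intro k
    by_cases hk : g s (V k) = g t (V i)
    · filter_upwards [hk ▸ hP.edge_loc' (g s) k] with z hz _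
      rw [hk]
      exact hz
    · exact Eventually.of_forall fun z h => absurd h hk
  have htend : Tendsto (fun τ : ℝ => g t (V i) + τ • (g t (V j) - g t (V i))) (𝓝[>] 0)
      (𝓝 (g t (V i))) := by
    have : Continuous (fun τ : ℝ => g t (V i) + τ • (g t (V j) - g t (V i))) := by fun_prop
    have := (this.tendsto 0).mono_left (nhdsWithin_le_nhds (s := Ioi 0))
    simpa using this
  have hI : ∀ᶠ r in 𝓝[>] (0 : ℝ), r ∈ Ioo (0 : ℝ) 1 := Ioo_mem_nhdsGT one_pos
  obtain ⟨τ, ⟨hz1, hz2⟩, hτ⟩ := ((htend.eventually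
    (hloc.eventually_nhds.and hedge)).and hI).exists
  set z := g t (V i) + τ • (g t (V j) - g t (V i)) with hz
  have hzg : z = g t (V i + τ • (V j - V i)) := by rw [iso_lin]
  have hseg : V i + τ • (V j - V i) ∈ K \ interior K := by
    apply hP.edge_mem hj
    rw [segment_eq_image']
    exact ⟨τ, ⟨hτ.1.le, hτ.2.le⟩, rfl⟩
  have hzt : z ∈ g t '' K := by rw [hzg]; exact mem_image_of_mem _ hseg.1
  have hzi : z ∉ interior (g t '' K) := by
    rw [hzg, int_image]
    rintro ⟨y, hy, e⟩
    rw [(g t).injective e] at hy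
    exact hseg.2 hy
  -- another tile contains z
  obtain ⟨s, hsN, hst, hzs⟩ : ∃ s ∈ N, s ≠ t ∧ z ∈ g s '' K := by
    by_contra! hc
    apply hzi
    rw [mem_interior_iff_mem_nhds]
    have h3 : ∀ᶠ z' in 𝓝 z, ∀ s ∈ N, s ≠ t → z' ∉ g s '' K := by
      rw [Filter.eventually_all_finset]
      intro s hs
      by_cases hst : s = t
      · exact Eventually.of_forall fun _ h => absurd hst h
      · filter_upwards [(hP.tile_closed (g s)).isOpen_compl.mem_nhds (hc s hs hst)] with z' hz' _
        exact hz'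
    filter_upwards [hz1, h3] with z' h4 h5
    obtain ⟨s, hs⟩ := hT.cover z'
    by_cases hst : s = t
    · rwa [hst] at hs
    · exact absurd hs (h5 s (h4 s hs) hst)
  have hzsi : z ∉ interior (g s '' K) := by
    intro h
    have hcl : z ∈ closure (interior (g t '' K)) := by
      rw [int_image]
      have hc : closure ((g t) '' interior K) = (g t) '' closure (interior K) :=
        ((g t).toHomeomorph.image_closure (interior K)).symm
      rw [hc]
      have : closure (interior K) = closure K :=
        hP.conv.closure_interior_eq_closure_of_nonempty_interior hP.intne
      rw [this]
      exact image_mono subset_closure hzt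
    obtain ⟨y, hy1, hy2⟩ := mem_closure_iff.1 hcl _ isOpen_interior h
    exact disjoint_left.1 (hT.disj s t hst) hy1 hy2
  obtain ⟨k, hk⟩ := hall s ((hN s).1 hsN)
  obtain ⟨k', hk', τ', hτ', e⟩ := hz2 s hsN k hk hzs hzsi
  refine ⟨s, hst, k, k', hk', hk, ?_⟩
  obtain ⟨l, hl, hlen⟩ := hP.edge_len
  rw [hz, hk] at e
  have e2 : τ • (g t (V j) - g t (V i)) = τ' • (g s (V k') - g t (V i)) := add_left_cancel e
  have n1 := hlen (g t) i j hj
  have n2 := hlen (g s) k k' hk'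
  rw [hk] at n2
  have e3 := congrArg norm e2
  rw [norm_smul, norm_smul, n1, n2, Real.norm_of_nonneg hτ.1.le, Real.norm_of_nonneg hτ'] at e3
  have e4 : τ = τ' := mul_right_cancel₀ hl.ne' e3
  rw [← e4] at e2
  have e5 := smul_right_injective ℂ hτ.1.ne' e2
  exact (sub_left_injective e5).symm

theorem lemmaB (hP : PData V a K) (hT : Til K g) (hN : ∀ i j, i ≠ j → a i + a j ≠ π)
    (hB : ∀ x y, 2 * a x + a y = 2 * π → (x = 0 ∧ y = 1) ∨ (x = 2 ∧ y = 3)) : False := by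
  classical
  let b : ι → Prop := fun t => ∃ s j, (j = 1 ∨ j = 4) ∧ g s (V j) = g t (V 2)
  let w : ι → Fin 5 → ℝ := fun t =>
    ![1/4, if b t then 1/2 else 0, if b t then 0 else 1/2, 0, 0]
  refine averaging hP hT w ?_ (HW_of hP hN _ ?_) (1/4) (by norm_num) ?_
  · intro t i
    fin_cases i <;> simp [w] <;> split_ifs <;> norm_num
  · intro x t₁ t₂ t₃ i k n12 n13 n23 e1 e2 e3 hall hik
    have huniq : ∀ s j, g s (V j) = x → (s = t₁ ∧ j = i) ∨ (s = t₂ ∧ j = i) ∨ (s = t₃ ∧ j = k) := by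
      intro s j hs
      rcases hall s (by rw [← hs]; exact mem_image_of_mem _ (hP.mem _)) with rfl | rfl | rfl
      · exact Or.inl ⟨rfl, hP.inj ((g s).injective (hs.trans e1.symm))⟩
      · exact Or.inr (Or.inl ⟨rfl, hP.inj ((g s).injective (hs.trans e2.symm))⟩)
      · exact Or.inr (Or.inr ⟨rfl, hP.inj ((g s).injective (hs.trans e3.symm))⟩)
    rcases hB i k hik with ⟨rfl, rfl⟩ | ⟨rfl, rfl⟩
    · have hb : b t₃ := by
        obtain ⟨s, hs, k, k', hk', h1, h2⟩ := adjacency hP hT t₃ 1 2 (Or.inl rfl) (by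
          intro s hs
          rw [e3] at hs ⊢
          rcases hall s hs with rfl | rfl | rfl
          · exact ⟨_, e1⟩
          · exact ⟨_, e2⟩
          · exact ⟨_, e3⟩)
        rw [e3] at h1
        have hk0 : k = 0 := by
          rcases huniq s k h1 with h | h | h
          · exact h.2
          · exact h.2
          · exact absurd h.1 hs
        subst hk0
        exact ⟨s, k', hk', h2⟩
      simp [w, hb]
      norm_num
    · have hb : ∀ t, g t (V 2) = x → ¬ b t := by
        rintro t ht ⟨s, j, hj, h⟩
        rw [ht] at h
        rcases huniq s j h with h | h | h <;> rw [h.2] at hj <;> revert hj <;> decide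
      simp [w, hb t₁ e1, hb t₂ e2]
      norm_num
  · intro t
    rw [Fin.sum_univ_five]
    simp [w]
    split_ifs <;> norm_num

end EqPent

namespace EqPent
open MeasureTheory Set Metric Filter Topology
open scoped Real

/-- standard sector -/
def sector (θ r : ℝ) : Set ℂ :=
  {z | ‖z‖ < r ∧ 0 ≤ z.im ∧ 0 ≤ z.re * Real.sin θ - z.im * Real.cos θ}

lemma sector_meas (θ r : ℝ) : MeasurableSet (sector θ r) := by
  have h1 : IsOpen {z : ℂ | ‖z‖ < r} := isOpen_lt continuous_norm continuous_const
  have h2 : IsClosed {z : ℂ | 0 ≤ z.im} := isClosed_le continuous_const Complex.continuous_im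
  have h3 : IsClosed {z : ℂ | 0 ≤ z.re * Real.sin θ - z.im * Real.cos θ} :=
    isClosed_le continuous_const (by fun_prop)
  exact h1.measurableSet.inter (h2.measurableSet.inter h3.measurableSet)

lemma sector_vol {θ r : ℝ} (h0 : 0 < θ) (h1 : θ ≤ π) (hr : 0 < r) :
    volume (sector θ r) = ENNReal.ofReal (θ / 2 * r ^ 2) := by
  have key : ∀ p ∈ polarCoord.target,
      ENNReal.ofReal p.1 • (sector θ r).indicator (1 : ℂ → ENNReal) (Complex.polarCoord.symm p)
      = (Ioo 0 r ×ˢ Icc 0 θ).indicator (fun p : ℝ × ℝ => ENNReal.ofReal p.1) p := by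
    rintro ⟨ρ, φ⟩ ⟨hρ, hφ1, hφ2⟩
    simp only [mem_Ioi] at hρ
    simp only at hφ1 hφ2
    have hiff : Complex.polarCoord.symm (ρ, φ) ∈ sector θ r ↔ (ρ, φ) ∈ Ioo 0 r ×ˢ Icc 0 θ := by
      rw [Complex.polarCoord_symm_apply]
      have e : (ρ * (Real.cos φ + Real.sin φ * Complex.I) : ℂ) = ⟨ρ * Real.cos φ, ρ * Real.sin φ⟩ := by
        apply Complex.ext <;> simp [-Complex.ofReal_cos, -Complex.ofReal_sin]
      have en : ‖(ρ * (Real.cos φ + Real.sin φ * Complex.I) : ℂ)‖ = ρ := by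
        have := Complex.norm_exp_ofReal_mul_I φ
        rw [Complex.exp_mul_I] at this
        rw [norm_mul]
        push_cast
        rw [this]; simp [abs_of_pos hρ]
      simp only [sector, mem_ofPred_eq, mem_prod, mem_Ioo, mem_Icc]
      rw [en, e]
      have e2 : ρ * Real.cos φ * Real.sin θ - ρ * Real.sin φ * Real.cos θ = ρ * Real.sin (θ - φ) := by
        rw [Real.sin_sub]; ring
      rw [e2, mul_nonneg_iff_of_pos_left hρ, mul_nonneg_iff_of_pos_left hρ]
      constructor
      · rintro ⟨a, b, c⟩
        refine ⟨⟨hρ, a⟩, ?_, ?_⟩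
        · by_contra! h
          exact absurd (Real.sin_neg_of_neg_of_neg_pi_lt h hφ1) (by linarith)
        · by_contra! h
          exact absurd (Real.sin_neg_of_neg_of_neg_pi_lt (x := θ - φ) (by linarith) (by linarith))
            (by linarith)
      · rintro ⟨⟨_, a⟩, b, c⟩
        exact ⟨a, Real.sin_nonneg_of_nonneg_of_le_pi b (by linarith),
          Real.sin_nonneg_of_nonneg_of_le_pi (by linarith) (by linarith)⟩
    by_cases h : Complex.polarCoord.symm (ρ, φ) ∈ sector θ r
    · rw [indicator_of_mem h, indicator_of_mem (hiff.1 h)]; simp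
    · rw [indicator_of_notMem h, indicator_of_notMem (fun h' => h (hiff.2 h'))]; simp
  have hT : MeasurableSet polarCoord.target := polarCoord.open_target.measurableSet
  have hS : MeasurableSet (Ioo (0 : ℝ) r ×ˢ Icc (0 : ℝ) θ) := measurableSet_Ioo.prod measurableSet_Icc
  rw [← lintegral_indicator_one (sector_meas θ r), ← Complex.lintegral_comp_polarCoord_symm,
    setLIntegral_congr_fun hT key, lintegral_indicator hS, Measure.restrict_restrict hS]
  have hset : (Ioo (0 : ℝ) r ×ˢ Icc (0 : ℝ) θ) ∩ polarCoord.target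
      = Ioo 0 r ×ˢ (Icc 0 θ ∩ Ioo (-π) π) := by
    ext ⟨x, y⟩
    simp [polarCoord]
    tauto
  have hv : volume (Icc 0 θ ∩ Ioo (-π) π) = ENNReal.ofReal θ := by
    apply le_antisymm
    · refine (measure_mono inter_subset_left).trans ?_
      simp
    · have : Ico 0 θ ⊆ Icc 0 θ ∩ Ioo (-π) π := fun x hx =>
        ⟨⟨hx.1, hx.2.le⟩, by linarith [hx.1, Real.pi_pos], by linarith [hx.2]⟩
      refine le_trans ?_ (measure_mono this)
      simp
  rw [hset, Measure.volume_eq_prod, ← Measure.prod_restrict,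
    lintegral_prod _ (by fun_prop)]
  simp only [lintegral_const, Measure.restrict_apply, MeasurableSet.univ, univ_inter, hv]
  rw [lintegral_mul_const _ (by fun_prop), ← ofReal_integral_eq_lintegral_ofReal]
  · rw [← integral_Ioc_eq_integral_Ioo, ← intervalIntegral.integral_of_le hr.le, integral_id,
      ← ENNReal.ofReal_mul (by nlinarith)]
    congr 1; ring
  · exact (continuous_id.integrableOn_Icc (a := 0) (b := r)).mono_set Ioo_subset_Icc_self
  · filter_upwards [ae_restrict_mem measurableSet_Ioo] with x hx using hx.1.le

/-- volume of a rotated sector at a point -/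
lemma sector_at {θ r : ℝ} (h0 : 0 < θ) (h1 : θ ≤ π) (hr : 0 < r) (x u : ℂ) (hu : ‖u‖ = 1) :
    volume {z : ℂ | (z - x) / u ∈ sector θ r} = ENNReal.ofReal (θ / 2 * r ^ 2) := by
  have hu0 : u ≠ 0 := by intro h; simp [h] at hu
  rw [← sector_vol h0 h1 hr]
  let c : Circle := ⟨u, mem_sphere_zero_iff_norm.2 hu⟩
  let g : ℂ ≃ᵢ ℂ := (rotation c).toIsometryEquiv.trans (IsometryEquiv.addRight x)
  rw [← vol_image g (sector θ r)]
  congr 1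
  ext z
  simp only [mem_ofPred_eq, mem_image]
  constructor
  · intro h
    refine ⟨_, h, ?_⟩
    change u * ((z - x) / u) + x = z
    field_simp; ring
  · rintro ⟨y, hy, rfl⟩
    change (u * y + x - x) / u ∈ _
    rwa [add_sub_cancel_right, mul_div_cancel_left₀ _ hu0]

end EqPent

namespace EqPent
open MeasureTheory Set Metric Filter Topology
open scoped Real

/-- planar cross product -/
def cr (u w : ℂ) : ℝ := u.re * w.im - u.im * w.re

/-- signed height of `z` over the `k`-th edge line -/
def hh (V : Fin 5 → ℂ) (k : Fin 5) (z : ℂ) : ℝ := cr (V (k + 1) - V k) (z - V k)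

/-- positively oriented convex pentagon -/
def Pos (V : Fin 5 → ℂ) : Prop := ∀ k j, j ≠ k → j ≠ k + 1 → 0 < hh V k (V j)

variable {V : Fin 5 → ℂ}

lemma hh_self (k : Fin 5) : hh V k (V k) = 0 := by simp [hh, cr]
lemma hh_succ (k : Fin 5) : hh V k (V (k + 1)) = 0 := by simp [hh, cr]; ring

lemma hh_comb (k : Fin 5) (x y : ℂ) {s t : ℝ} (h : s + t = 1) :
    hh V k (s • x + t • y) = s * hh V k x + t * hh V k y := by
  obtain rfl : s = 1 - t := by linarith
  simp [hh, cr]; ring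

lemma hh_cont (k : Fin 5) : Continuous (hh V k) := by
  unfold hh cr; fun_prop

lemma Pos.nonneg (hV : Pos V) (k j : Fin 5) : 0 ≤ hh V k (V j) := by
  by_cases h1 : j = k
  · rw [h1, hh_self]
  by_cases h2 : j = k + 1
  · rw [h2, hh_succ]
  exact (hV k j h1 h2).le

lemma tri_mem {p q r z : ℂ} (hD : 0 < cr (q - p) (r - p)) (h1 : 0 ≤ cr (q - p) (z - p))
    (h2 : 0 ≤ cr (z - p) (r - p)) (h3 : 0 ≤ cr (r - q) (z - q)) {S : Set ℂ} (hS : Convex ℝ S)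
    (hp : p ∈ S) (hq : q ∈ S) (hr : r ∈ S) : z ∈ S := by
  set D := cr (q - p) (r - p) with hDd
  have hsum : cr (r - q) (z - q) / D + cr (z - p) (r - p) / D + cr (q - p) (z - p) / D = 1 := by
    rw [← add_div, ← add_div, div_eq_one_iff_eq hD.ne']
    simp only [hDd, cr, Complex.sub_re, Complex.sub_im]; ring
  have hz : z = (cr (r - q) (z - q) / D) • p + (cr (z - p) (r - p) / D) • q
      + (cr (q - p) (z - p) / D) • r := by
    have hD' := hD.ne'
    apply Complex.ext
    · simp only [Complex.add_re, Complex.real_smul, Complex.re_ofReal_mul]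
      field_simp
      simp only [hDd, cr, Complex.sub_re, Complex.sub_im]; ring
    · simp only [Complex.add_im, Complex.real_smul, Complex.im_ofReal_mul]
      field_simp
      simp only [hDd, cr, Complex.sub_re, Complex.sub_im]; ring
  rw [hz]
  have := hS.sum_mem (t := Finset.univ) (w := ![cr (r - q) (z - q) / D, cr (z - p) (r - p) / D,
    cr (q - p) (z - p) / D]) (z := ![p, q, r]) ?_ ?_ ?_
  · simpa [Fin.sum_univ_three] using this
  · intro i _; fin_cases i <;> simp <;> positivity
  · simpa [Fin.sum_univ_three] using hsum
  · intro i _; fin_cases i <;> simpa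

lemma hull_iff (hV : Pos V) (z : ℂ) : z ∈ convexHull ℝ (range V) ↔ ∀ k, 0 ≤ hh V k z := by
  constructor
  · intro hz k
    have hc : Convex ℝ {z | 0 ≤ hh V k z} := by
      intro x hx y hy s t hs ht hst
      simp only [mem_ofPred_eq] at hx hy ⊢
      rw [hh_comb k x y hst]; positivity
    refine convexHull_min ?_ hc hz
    rintro _ ⟨j, rfl⟩
    exact hV.nonneg k j
  · intro h
    have hm : ∀ i, V i ∈ convexHull ℝ (range V) := fun i => subset_convexHull ℝ _ ⟨i, rfl⟩
    have hC := convex_convexHull ℝ (range V)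
    have hD : ∀ j : Fin 5, j ≠ 0 → j + 1 ≠ 0 → 0 < cr (V j - V 0) (V (j + 1) - V 0) := by
      intro j h0 h1
      have := hV j 0 (Ne.symm h0) (Ne.symm h1)
      unfold hh at this
      simp only [cr, Complex.sub_re, Complex.sub_im] at this ⊢
      linarith
    have hmain : ∀ j : Fin 5, j ≠ 0 → j + 1 ≠ 0 → 0 ≤ cr (V j - V 0) (z - V 0) →
        0 ≤ cr (z - V 0) (V (j + 1) - V 0) → z ∈ convexHull ℝ (range V) := fun j h0 h1 ha hb =>
      tri_mem (hD j h0 h1) ha hb (h j) hC (hm _) (hm _) (hm _)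
    have hneg : ∀ u w : ℂ, cr u w = - cr w u := fun u w => by simp only [cr]; ring
    have s1 : 0 ≤ cr (V 1 - V 0) (z - V 0) := h 0
    have s4 : 0 ≤ cr (z - V 0) (V 4 - V 0) := by
      have := h 4
      have e : (4 : Fin 5) + 1 = 0 := rfl
      unfold hh at this
      rw [e] at this
      simp only [cr, Complex.sub_re, Complex.sub_im] at this ⊢
      linarith
    rcases le_total 0 (cr (z - V 0) (V 2 - V 0)) with h2 | h2
    · exact hmain 1 (by decide) (by decide) s1 h2
    rw [hneg] at h2
    rcases le_total 0 (cr (z - V 0) (V 3 - V 0)) with h3 | h3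
    · exact hmain 2 (by decide) (by decide) (by linarith) h3
    rw [hneg] at h3
    exact hmain 3 (by decide) (by decide) (by linarith) s4

lemma mem_int (hV : Pos V) {z : ℂ} (h : ∀ k, 0 < hh V k z) : z ∈ interior (convexHull ℝ (range V)) := by
  rw [mem_interior_iff_mem_nhds]
  have : ∀ᶠ y in 𝓝 z, ∀ k, 0 < hh V k y := by
    rw [Filter.eventually_all]
    intro k
    exact (hh_cont k).continuousAt.eventually (lt_mem_nhds (h k))
  filter_upwards [this] with y hy
  exact (hull_iff hV y).2 fun k => (hy k).le

lemma Pos.ne (hV : Pos V) {i j : Fin 5} (h : i ≠ j) : V i ≠ V j := by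
  intro e
  have key : ∀ i j : Fin 5, i ≠ j → (j ≠ i + 1) → ∃ k : Fin 5, (i = k ∨ i = k + 1) ∧ j ≠ k ∧ j ≠ k + 1 := by
    decide
  by_cases hj : j = i + 1
  · have h2 : i ≠ j + 1 := by subst hj; clear e h; decide +revert
    obtain ⟨k, h1, h3, h4⟩ := key j i h.symm h2
    have := hV k i h3 h4
    rw [e] at this
    rcases h1 with rfl | rfl
    · rw [hh_self] at this; exact lt_irrefl _ this
    · rw [hh_succ] at this; exact lt_irrefl _ this
  · obtain ⟨k, h1, h3, h4⟩ := key i j h hj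
    have := hV k j h3 h4
    rw [← e] at this
    rcases h1 with rfl | rfl
    · rw [hh_self] at this; exact lt_irrefl _ this
    · rw [hh_succ] at this; exact lt_irrefl _ this

lemma not_int (hV : Pos V) {z : ℂ} {k : Fin 5} (h : hh V k z = 0) :
    z ∉ interior (convexHull ℝ (range V)) := by
  intro hz
  rw [mem_interior_iff_mem_nhds] at hz
  have hne : V (k + 1) - V k ≠ 0 := by
    rw [sub_ne_zero]; exact hV.ne ((by decide : ∀ k : Fin 5, k + 1 ≠ k) k)
  have hc : Tendsto (fun t : ℝ => z - t • (Complex.I * (V (k + 1) - V k))) (𝓝[>] 0) (𝓝 z) := by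
    have : Continuous (fun t : ℝ => z - t • (Complex.I * (V (k + 1) - V k))) := by fun_prop
    simpa using (this.tendsto 0).mono_left (nhdsWithin_le_nhds (s := Ioi 0))
  obtain ⟨t, ht, ht0⟩ := ((hc.eventually hz).and self_mem_nhdsWithin).exists
  have h2 := (hull_iff hV _).1 ht k
  have h3 : hh V k (z - t • (Complex.I * (V (k + 1) - V k)))
      = hh V k z - t * Complex.normSq (V (k + 1) - V k) := by
    simp [hh, cr, Complex.normSq_apply]; ring
  rw [h3, h] at h2
  have := mul_pos (show 0 < t from ht0) (Complex.normSq_pos.2 hne)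
  linarith

/-- points of an edge line -/
lemma on_line (hV : Pos V) {z : ℂ} {k : Fin 5} (h : hh V k z = 0) :
    ∃ s : ℝ, z = (1 - s) • V k + s • V (k + 1) := by
  have hne : V (k + 1) - V k ≠ 0 := by
    rw [sub_ne_zero]; exact hV.ne ((by decide : ∀ k : Fin 5, k + 1 ≠ k) k)
  have hN := Complex.normSq_pos.2 hne
  set u := V (k + 1) - V k with hu
  refine ⟨(u.re * (z - V k).re + u.im * (z - V k).im) / Complex.normSq u, ?_⟩
  have hk : V (k + 1) = V k + u := by rw [hu]; ring
  rw [hk]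
  unfold hh cr at h
  rw [← hu] at h
  rw [Complex.normSq_apply] at hN ⊢
  obtain ⟨N, hNd⟩ : ∃ N, N = u.re * u.re + u.im * u.im := ⟨_, rfl⟩
  rw [← hNd] at hN ⊢
  apply Complex.ext
  · simp only [Complex.add_re, Complex.real_smul, Complex.re_ofReal_mul, Complex.sub_re, Complex.sub_im] at h ⊢
    field_simp
    linear_combination (-u.im) * h + (z.re - (V k).re) * hNd
  · simp only [Complex.add_im, Complex.real_smul, Complex.im_ofReal_mul, Complex.sub_re, Complex.sub_im] at h ⊢
    field_simp
    linear_combination u.re * h + (z.im - (V k).im) * hNd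

lemma edge_param (hV : Pos V) {z : ℂ} {k : Fin 5} (hz : z ∈ convexHull ℝ (range V)) (h : hh V k z = 0) :
    ∃ s : ℝ, 0 ≤ s ∧ s ≤ 1 ∧ z = (1 - s) • V k + s • V (k + 1) := by
  obtain ⟨s, hs⟩ := on_line hV h
  refine ⟨s, ?_, ?_, hs⟩
  · have h1 := (hull_iff hV z).1 hz (k - 1)
    rw [hs, hh_comb _ _ _ (by ring)] at h1
    have e : V k = V (k - 1 + 1) := by simp
    have h2 := hV (k - 1) (k + 1) ((by decide : ∀ k : Fin 5, k + 1 ≠ k - 1) k)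
      ((by decide : ∀ k : Fin 5, k + 1 ≠ k - 1 + 1) k)
    rw [e, hh_succ] at h1
    by_contra! hc
    nlinarith
  · have h1 := (hull_iff hV z).1 hz (k + 1)
    rw [hs, hh_comb _ _ _ (by ring), hh_self] at h1
    have h2 := hV (k + 1) k ((by decide : ∀ k : Fin 5, k ≠ k + 1) k)
      ((by decide : ∀ k : Fin 5, k ≠ k + 1 + 1) k)
    by_contra! hc
    nlinarith

lemma edge_seg (hV : Pos V) {z : ℂ} {k : Fin 5} (hz : z ∈ convexHull ℝ (range V)) (h : hh V k z = 0) :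
    z ∈ segment ℝ (V k) (V (k + 1)) := by
  obtain ⟨s, h0, h1, rfl⟩ := edge_param hV hz h
  exact ⟨1 - s, s, by linarith, h0, by ring, rfl⟩

lemma seg_edge {z : ℂ} {k : Fin 5} (h : z ∈ segment ℝ (V k) (V (k + 1))) : hh V k z = 0 := by
  obtain ⟨s, t, _, _, hst, rfl⟩ := h
  rw [hh_comb _ _ _ hst, hh_self, hh_succ]; ring

end EqPent

namespace EqPent
open MeasureTheory Set Metric Filter Topology
open scoped Real

variable {V : Fin 5 → ℂ}

/-- interior angle of the pentagon -/
noncomputable def an (V : Fin 5 → ℂ) (i : Fin 5) : ℝ :=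
  EuclideanGeometry.angle (V (i - 1)) (V i) (V (i + 1))

lemma cr_mul (u x y : ℂ) : cr (u * x) (u * y) = Complex.normSq u * cr x y := by
  simp [cr, Complex.normSq_apply]; ring

lemma an_spec (hV : Pos V) {l : ℝ} (hl : 0 < l) (hlen : ∀ i, dist (V i) (V (i + 1)) = l) (i : Fin 5) :
    0 < an V i ∧ an V i < π ∧
    V (i - 1) - V i = (V (i + 1) - V i) * Complex.exp (an V i * Complex.I) := by
  have n1 : ‖V (i + 1) - V i‖ = l := by rw [← dist_eq_norm, dist_comm, hlen]
  have n2 : ‖V (i - 1) - V i‖ = l := by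
    rw [← dist_eq_norm]; have := hlen (i - 1); rwa [sub_add_cancel] at this
  set u := V (i + 1) - V i with hu
  set w := V (i - 1) - V i with hw
  have u0 : u ≠ 0 := by intro h; rw [h, norm_zero] at n1; linarith
  have w0 : w ≠ 0 := by intro h; rw [h, norm_zero] at n2; linarith
  have ha : an V i = |(w / u).arg| := by
    unfold an EuclideanGeometry.angle
    rw [vsub_eq_sub, vsub_eq_sub, ← hu, ← hw, Complex.angle_eq_abs_arg w0 u0]
  have hcr : 0 < cr u w := by
    have := hV i (i - 1) ((by decide : ∀ k : Fin 5, k - 1 ≠ k) i)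
      ((by decide : ∀ k : Fin 5, k - 1 ≠ k + 1) i)
    exact this
  have him : 0 < (w / u).im := by
    have e : cr u w = Complex.normSq u * (w / u).im := by
      have : cr u w = cr (u * 1) (u * (w / u)) := by rw [mul_one, mul_div_cancel₀ _ u0]
      rw [this, cr_mul]; simp [cr]
    rw [e] at hcr
    exact pos_of_mul_pos_right hcr (Complex.normSq_nonneg u)
  have harg0 : 0 ≤ (w / u).arg := Complex.arg_nonneg_iff.2 him.le
  rw [abs_of_nonneg harg0] at ha
  have h1 : (w / u).arg ≠ 0 := by
    intro h
    have := (Complex.arg_eq_zero_iff.1 h).2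
    linarith
  have h2 : (w / u).arg ≠ π := by
    intro h
    have := (Complex.arg_eq_pi_iff.1 h).2
    linarith
  have nn : ‖w / u‖ = 1 := by rw [norm_div, n1, n2, div_self hl.ne']
  refine ⟨?_, ?_, ?_⟩
  · rw [ha]; exact lt_of_le_of_ne harg0 (Ne.symm h1)
  · rw [ha]; exact lt_of_le_of_ne (Complex.arg_le_pi _) h2
  · have := Complex.norm_mul_exp_arg_mul_I (w / u)
    rw [nn, Complex.ofReal_one, one_mul] at this
    rw [ha, this, mul_div_cancel₀ _ u0]

lemma ev_ball {p : ℂ → Prop} {x : ℂ} (h : ∀ᶠ z in 𝓝 x, p z) :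
    ∀ᶠ r in 𝓝[>] (0 : ℝ), 0 < r ∧ ∀ z ∈ ball x r, p z := by
  obtain ⟨δ, hδ, hb⟩ := Metric.eventually_nhds_iff_ball.1 h
  filter_upwards [Ioo_mem_nhdsGT hδ] with r hr
  exact ⟨hr.1, fun z hz => hb z (ball_subset_ball hr.2.le hz)⟩

lemma ev_pos (x : ℂ) (S : Fin 5 → Prop) (h : ∀ k, S k → 0 < hh V k x) :
    ∀ᶠ z in 𝓝 x, ∀ k, S k → 0 < hh V k z := by
  rw [Filter.eventually_all]
  intro k
  by_cases hk : S k
  · filter_upwards [(hh_cont k).continuousAt.eventually (lt_mem_nhds (h k hk))] with z hz _ using hz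
  · exact Eventually.of_forall fun z h => absurd h hk

lemma pos_at_vertex (hV : Pos V) (i : Fin 5) : ∀ k, (k ≠ i ∧ k ≠ i - 1) → 0 < hh V k (V i) := by
  rintro k ⟨h1, h2⟩
  exact hV k i h1.symm (fun h => h2 (by rw [h]; simp))

lemma corner_vol (hV : Pos V) {l : ℝ} (hl : 0 < l) (hlen : ∀ i, dist (V i) (V (i + 1)) = l) (i : Fin 5) :
    ∀ᶠ r in 𝓝[>] (0 : ℝ), volume (convexHull ℝ (range V) ∩ ball (V i) r)
      = ENNReal.ofReal (an V i / 2 * r ^ 2) := by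
  obtain ⟨a0, a1, hrot⟩ := an_spec hV hl hlen i
  have n1 : ‖V (i + 1) - V i‖ = l := by rw [← dist_eq_norm, dist_comm, hlen]
  have l0 : (l : ℂ) ≠ 0 := by exact_mod_cast hl.ne'
  obtain ⟨u, hu⟩ : ∃ u, u = (V (i + 1) - V i) / l := ⟨_, rfl⟩
  have hul : V (i + 1) - V i = l * u := by rw [hu]; field_simp
  have nu : ‖u‖ = 1 := by rw [hu, norm_div, n1]; simp [abs_of_pos hl, hl.ne']
  have u0 : u ≠ 0 := by intro h; simp [h] at nu
  have nsq : Complex.normSq u = 1 := by rw [Complex.normSq_eq_norm_sq, nu]; norm_num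
  filter_upwards [ev_ball (ev_pos _ _ (pos_at_vertex hV i))] with r hr
  rw [← sector_at a0 a1.le hr.1 (V i) u nu]
  congr 1
  ext z
  obtain ⟨ζ, hζ⟩ : ∃ ζ, ζ = (z - V i) / u := ⟨_, rfl⟩
  have hz : z - V i = u * ζ := by rw [hζ, mul_div_cancel₀ _ u0]
  have e1 : hh V i z = l * ζ.im := by
    unfold hh
    rw [hz, hul, mul_comm (l : ℂ), cr_mul, nsq]
    simp [cr]
  have e2 : hh V (i - 1) z = l * (ζ.re * Real.sin (an V i) - ζ.im * Real.cos (an V i)) := by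
    have : hh V (i - 1) z = cr (z - V i) (V (i - 1) - V i) := by
      unfold hh
      rw [sub_add_cancel]
      simp only [cr, Complex.sub_re, Complex.sub_im]; ring
    rw [this, hrot, hul, hz, mul_comm (l : ℂ), mul_assoc, cr_mul, nsq]
    have er := Complex.exp_ofReal_mul_I_re (an V i)
    have ei := Complex.exp_ofReal_mul_I_im (an V i)
    simp only [cr, Complex.re_ofReal_mul, Complex.im_ofReal_mul, er, ei]
    ring
  have e3 : ‖z - V i‖ = ‖ζ‖ := by rw [hz, norm_mul, nu, one_mul]
  simp only [mem_inter_iff, mem_ball, dist_eq_norm, mem_ofPred_eq, ← hζ, sector, e3]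
  rw [hull_iff hV]
  constructor
  · rintro ⟨h, hb⟩
    have h1 := h i
    have h2 := h (i - 1)
    rw [e1] at h1
    rw [e2] at h2
    exact ⟨hb, (mul_nonneg_iff_of_pos_left hl).1 h1, (mul_nonneg_iff_of_pos_left hl).1 h2⟩
  · rintro ⟨hb, h1, h2⟩
    refine ⟨fun k => ?_, hb⟩
    by_cases hk1 : k = i
    · rw [hk1, e1]; positivity
    by_cases hk2 : k = i - 1
    · rw [hk2, e2]; positivity
    exact (hr.2 z (by rw [mem_ball, dist_eq_norm, e3]; exact hb) k ⟨hk1, hk2⟩).le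

lemma side_vol (hV : Pos V) {l : ℝ} (hl : 0 < l) (hlen : ∀ i, dist (V i) (V (i + 1)) = l) (x : ℂ)
    (hx : x ∈ convexHull ℝ (range V)) (hxi : x ∉ interior (convexHull ℝ (range V)))
    (hxv : ∀ i, x ≠ V i) :
    ∀ᶠ r in 𝓝[>] (0 : ℝ), volume (convexHull ℝ (range V) ∩ ball x r)
      = ENNReal.ofReal (π / 2 * r ^ 2) := by
  obtain ⟨i, hi⟩ : ∃ i, hh V i x = 0 := by
    by_contra! h
    exact hxi (mem_int hV fun k => lt_of_le_of_ne ((hull_iff hV x).1 hx k) (h k).symm)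
  obtain ⟨s, s0, s1, hs⟩ := edge_param hV hx hi
  have s0' : 0 < s := by
    refine lt_of_le_of_ne s0 fun h => hxv i ?_
    rw [hs, ← h]; simp
  have s1' : s < 1 := by
    refine lt_of_le_of_ne s1 fun h => hxv (i + 1) ?_
    rw [hs, h]; simp
  have hpos : ∀ k, k ≠ i → 0 < hh V k x := by
    intro k hk
    rw [hs, hh_comb _ _ _ (by ring)]
    have p1 := hV.nonneg k i
    have p2 := hV.nonneg k (i + 1)
    have s2 : 0 < 1 - s := by linarith
    by_cases h : i = k + 1
    · have := hV k (i + 1) (by rw [h]; exact (by decide : ∀ k : Fin 5, k + 1 + 1 ≠ k) k)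
        (by rw [h]; exact (by decide : ∀ k : Fin 5, k + 1 + 1 ≠ k + 1) k)
      have := mul_pos s0' this
      have := mul_nonneg s2.le p1
      linarith
    · have := hV k i hk.symm h
      have := mul_pos s2 this
      have := mul_nonneg s0 p2
      linarith
  have n1 : ‖V (i + 1) - V i‖ = l := by rw [← dist_eq_norm, dist_comm, hlen]
  have l0 : (l : ℂ) ≠ 0 := by exact_mod_cast hl.ne'
  obtain ⟨u, hu⟩ : ∃ u, u = (V (i + 1) - V i) / l := ⟨_, rfl⟩
  have hul : V (i + 1) - V i = l * u := by rw [hu]; field_simp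
  have nu : ‖u‖ = 1 := by rw [hu, norm_div, n1]; simp [abs_of_pos hl, hl.ne']
  have u0 : u ≠ 0 := by intro h; simp [h] at nu
  have nsq : Complex.normSq u = 1 := by rw [Complex.normSq_eq_norm_sq, nu]; norm_num
  filter_upwards [ev_ball (ev_pos _ _ hpos)] with r hr
  rw [← sector_at Real.pi_pos le_rfl hr.1 x u nu]
  congr 1
  ext z
  obtain ⟨ζ, hζ⟩ : ∃ ζ, ζ = (z - x) / u := ⟨_, rfl⟩
  have hz : z - x = u * ζ := by rw [hζ, mul_div_cancel₀ _ u0]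
  have e1 : hh V i z = l * ζ.im := by
    have : hh V i z = hh V i x + cr (V (i + 1) - V i) (z - x) := by
      unfold hh
      simp only [cr, Complex.sub_re, Complex.sub_im]; ring
    rw [this, hi, hz, hul, mul_comm (l : ℂ), cr_mul, nsq]
    simp [cr]
  have e3 : ‖z - x‖ = ‖ζ‖ := by rw [hz, norm_mul, nu, one_mul]
  simp only [mem_inter_iff, mem_ball, dist_eq_norm, mem_ofPred_eq, ← hζ, sector, e3, Real.sin_pi,
    Real.cos_pi]
  rw [hull_iff hV]
  constructor
  · rintro ⟨h, hb⟩
    have h1 := h i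
    rw [e1] at h1
    have h2 := (mul_nonneg_iff_of_pos_left hl).1 h1
    exact ⟨hb, h2, by linarith⟩
  · rintro ⟨hb, h1, h2⟩
    refine ⟨fun k => ?_, hb⟩
    by_cases hk1 : k = i
    · rw [hk1, e1]; positivity
    exact (hr.2 z (by rw [mem_ball, dist_eq_norm, e3]; exact hb) k hk1).le

end EqPent

namespace EqPent
open MeasureTheory Set Metric Filter Topology
open scoped Real

variable {V : Fin 5 → ℂ}

/-- unit edge directions and the closing condition -/
lemma closing (hV : Pos V) {l : ℝ} (hl : 0 < l) (hlen : ∀ i, dist (V i) (V (i + 1)) = l) :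
    Clos (an V 0) (an V 1) (an V 2) (an V 3) (an V 4) := by
  have sp := an_spec hV hl hlen
  have hstep : ∀ i, V (i + 1 + 1) - V (i + 1) =
      -((V (i + 1) - V i) * Complex.exp (-(an V (i + 1) * Complex.I))) := by
    intro i
    have := (sp (i + 1)).2.2
    rw [add_sub_cancel_right] at this
    have e : V (i + 1) - V i = -(V i - V (i + 1)) := by ring
    rw [e, this, neg_mul, neg_neg, mul_assoc, ← Complex.exp_add]
    simp
  have n1 : ‖V 1 - V 0‖ = l := by rw [← dist_eq_norm, dist_comm]; exact hlen 0
  have u0 : V 1 - V 0 ≠ 0 := by intro h; rw [h, norm_zero] at n1; linarith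
  have q1 : V 2 - V 1 = -((V 1 - V 0) * Complex.exp (-(an V 1 * Complex.I))) := hstep 0
  have q2 : V 3 - V 2 = -((V 2 - V 1) * Complex.exp (-(an V 2 * Complex.I))) := hstep 1
  have q3 : V 4 - V 3 = -((V 3 - V 2) * Complex.exp (-(an V 3 * Complex.I))) := hstep 2
  have q4 : V 0 - V 4 = -((V 4 - V 3) * Complex.exp (-(an V 4 * Complex.I))) := hstep 3
  have q0 : V 1 - V 0 = -((V 0 - V 4) * Complex.exp (-(an V 0 * Complex.I))) := hstep 4
  have hgt : ∀ i, π / 2 < an V (i + 1) + an V i / 2 := by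
    intro i
    obtain ⟨a0, a1, -⟩ := sp i
    obtain ⟨b0, b1, hb⟩ := sp (i + 1)
    have ha := (sp i).2.2
    have hpos := hV (i + 1) (i - 1) ((by decide : ∀ k : Fin 5, k - 1 ≠ k + 1) i)
      ((by decide : ∀ k : Fin 5, k - 1 ≠ k + 1 + 1) i)
    unfold hh at hpos
    rw [hstep] at hpos
    have e : V (i - 1) - V (i + 1) = (V (i + 1) - V i) * (Complex.exp (an V i * Complex.I) - 1) := by
      rw [mul_sub, ← ha]; ring
    rw [e, ← mul_neg, cr_mul] at hpos
    have h2 := pos_of_mul_pos_right hpos (Complex.normSq_nonneg _)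
    have h3 : cr (-Complex.exp (-(an V (i + 1) * Complex.I))) (Complex.exp (an V i * Complex.I) - 1)
        = Real.sin (an V (i + 1)) - Real.sin (an V i + an V (i + 1)) := by
      have r1 := Complex.exp_ofReal_mul_I_re (an V i)
      have i1 := Complex.exp_ofReal_mul_I_im (an V i)
      have r2 := Complex.exp_ofReal_mul_I_re (-an V (i + 1))
      have i2 := Complex.exp_ofReal_mul_I_im (-an V (i + 1))
      rw [Complex.ofReal_neg, neg_mul] at r2 i2
      simp only [cr, Complex.neg_re, Complex.neg_im, Complex.sub_re, Complex.sub_im, r1, r2, i1, i2,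
        Complex.one_re, Complex.one_im, Real.cos_neg, Real.sin_neg, Real.sin_add]
      ring
    rw [h3, Real.sin_sub_sin] at h2
    by_contra! hc
    have c1 : 0 < Real.sin (an V i / 2) := Real.sin_pos_of_pos_of_lt_pi (by linarith) (by linarith)
    have c2 : 0 ≤ Real.cos (an V (i + 1) + an V i / 2) :=
      Real.cos_nonneg_of_neg_pi_div_two_le_of_le (by linarith) hc
    have d1 : (an V (i + 1) - (an V i + an V (i + 1))) / 2 = -(an V i / 2) := by ring
    have d2 : (an V (i + 1) + (an V i + an V (i + 1))) / 2 = an V (i + 1) + an V i / 2 := by ring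
    rw [d1, d2, Real.sin_neg] at h2
    have := mul_nonneg c1.le c2
    linarith
  have g0 : π / 2 < an V 1 + an V 0 / 2 := hgt 0
  have g1 : π / 2 < an V 2 + an V 1 / 2 := hgt 1
  have g2 : π / 2 < an V 3 + an V 2 / 2 := hgt 2
  have g3 : π / 2 < an V 4 + an V 3 / 2 := hgt 3
  have g4 : π / 2 < an V 0 + an V 4 / 2 := hgt 4
  have b0 := (sp 0).2.1
  have b1 := (sp 1).2.1
  have b2 := (sp 2).2.1
  have b3 := (sp 3).2.1
  have b4 := (sp 4).2.1
  have E : ∀ x y : ℝ, Complex.exp (x * Complex.I) * Complex.exp (-(y * Complex.I))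
      = Complex.exp ((x - y : ℝ) * Complex.I) := by
    intro x y; rw [← Complex.exp_add]; push_cast; ring_nf
  constructor
  · have key : (V 1 - V 0) * (1 + Complex.exp ((0 - an V 1 - an V 2 - an V 3 - an V 4 - an V 0 : ℝ) * Complex.I)) = 0 := by
      rw [← E, ← E, ← E, ← E, ← E]
      have e0 : Complex.exp ((0 : ℝ) * Complex.I) = 1 := by simp
      rw [e0]
      rw [q4, q3, q2, q1] at q0
      linear_combination q0
    have k2 := (mul_eq_zero.1 key).resolve_left u0
    have k3 := congrArg Complex.re k2
    rw [Complex.add_re, Complex.exp_ofReal_mul_I_re, Complex.one_re, Complex.zero_re] at k3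
    have k4 : Real.cos (an V 0 + an V 1 + an V 2 + an V 3 + an V 4 - 3 * π) = 1 := by
      have : an V 0 + an V 1 + an V 2 + an V 3 + an V 4 - 3 * π
          = -((0 - an V 1 - an V 2 - an V 3 - an V 4 - an V 0) + π + 2 * π) := by ring
      rw [this, Real.cos_neg, Real.cos_add_two_pi, Real.cos_add_pi]
      linarith
    have := (Real.cos_eq_one_iff_of_lt_of_lt (by linarith) (by linarith)).1 k4
    linarith
  · intro φ
    have key : (V 1 - V 0) * (Complex.exp ((φ : ℝ) * Complex.I) - Complex.exp ((φ - an V 1 : ℝ) * Complex.I)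
        + Complex.exp ((φ - an V 1 - an V 2 : ℝ) * Complex.I)
        - Complex.exp ((φ - an V 1 - an V 2 - an V 3 : ℝ) * Complex.I)
        + Complex.exp ((φ - an V 1 - an V 2 - an V 3 - an V 4 : ℝ) * Complex.I)) = 0 := by
      simp only [← E]
      have hsum : (V 1 - V 0) + (V 2 - V 1) + (V 3 - V 2) + (V 4 - V 3) + (V 0 - V 4) = 0 := by ring
      rw [q4, q3, q2, q1] at hsum
      linear_combination Complex.exp ((φ : ℝ) * Complex.I) * hsum
    have k3 := congrArg Complex.re ((mul_eq_zero.1 key).resolve_left u0)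
    simpa only [Complex.add_re, Complex.sub_re, Complex.exp_ofReal_mul_I_re, Complex.zero_re] using k3

lemma centroid_int (hV : Pos V) : (interior (convexHull ℝ (range V))).Nonempty := by
  refine ⟨(1 / 5 : ℝ) • (V 0 + V 1 + V 2 + V 3 + V 4), mem_int hV fun k => ?_⟩
  have e : hh V k ((1 / 5 : ℝ) • (V 0 + V 1 + V 2 + V 3 + V 4)) =
      (hh V k (V 0) + hh V k (V 1) + hh V k (V 2) + hh V k (V 3) + hh V k (V 4)) / 5 := by
    simp [hh, cr]; ring
  rw [e]
  have hs : 0 < ∑ j, hh V k (V j) :=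
    Finset.sum_pos' (fun j _ => hV.nonneg k j) ⟨k + 2, Finset.mem_univ _,
      hV k (k + 2) ((by decide : ∀ k : Fin 5, k + 2 ≠ k) k) ((by decide : ∀ k : Fin 5, k + 2 ≠ k + 1) k)⟩
  rw [Fin.sum_univ_five] at hs
  linarith

theorem pdata (hV : Pos V) {l : ℝ} (hl : 0 < l) (hlen : ∀ i, dist (V i) (V (i + 1)) = l) :
    PData V (an V) (convexHull ℝ (range V)) where
  conv := convex_convexHull ℝ _
  comp := (finite_range V).isCompact_convexHull ℝ
  intne := centroid_int hV
  apos i := (an_spec hV hl hlen i).1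
  alt i := (an_spec hV hl hlen i).2.1
  asum := (closing hV hl hlen).1
  mem i := subset_convexHull ℝ _ ⟨i, rfl⟩
  inj i j h := by by_contra hc; exact hV.ne hc h
  notint i := not_int hV (hh_self i)
  corner := corner_vol hV hl hlen
  sidept := side_vol hV hl hlen
  edge_sub i z hz := ⟨segment_subset_convexHull (𝕜 := ℝ) (mem_range_self i) (mem_range_self (i + 1)) hz, not_int hV (seg_edge hz)⟩
  edge_loc i := by
    filter_upwards [ev_pos _ _ (pos_at_vertex hV i)] with z hz hK hI
    obtain ⟨k, hk⟩ : ∃ k, hh V k z = 0 := by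
      by_contra! h
      exact hI (mem_int hV fun k => lt_of_le_of_ne ((hull_iff hV z).1 hK k) (h k).symm)
    by_cases h1 : k = i
    · subst h1; exact Or.inl (edge_seg hV hK hk)
    by_cases h2 : k = i - 1
    · right
      have := edge_seg hV hK hk
      rw [h2, sub_add_cancel, segment_symm] at this
      exact this
    · exact absurd hk (hz k ⟨h1, h2⟩).ne'
  len := ⟨l, hl, hlen⟩

end EqPent

namespace EqPent
open MeasureTheory Set Metric Filter Topology
open scoped Real

variable {V : Fin 5 → ℂ}

lemma not_coll (sc : ∀ i, V i ∉ convexHull ℝ (V '' {j | j ≠ i})) {i j k : Fin 5} (hij : i ≠ j) (hik : i ≠ k)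
    (hjk : j ≠ k) : ¬ Collinear ℝ {V i, V j, V k} := by
  have key : ∀ i j k : Fin 5, j ≠ i → k ≠ i → ¬ Wbtw ℝ (V j) (V i) (V k) := by
    intro i j k h1 h2 h
    unfold Wbtw at h
    rw [affineSegment_eq_segment] at h
    exact sc i (segment_subset_convexHull (mem_image_of_mem V h1) (mem_image_of_mem V h2) h)
  intro h
  rcases h.wbtw_or_wbtw_or_wbtw with h | h | h
  · exact key j i k hij hjk.symm h
  · exact key k j i hjk hik h
  · exact key i k j hik.symm hij.symm h

lemma cr_ne (sc : ∀ i, V i ∉ convexHull ℝ (V '' {j | j ≠ i})) {i j k : Fin 5} (hij : i ≠ j) (hik : i ≠ k)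
    (hjk : j ≠ k) : cr (V j - V i) (V k - V i) ≠ 0 := by
  intro h
  have hne : V j - V i ≠ 0 := by
    intro h0
    apply not_coll sc hij hik hjk
    rw [sub_eq_zero.1 h0]
    simpa using collinear_pair ℝ (V i) (V k)
  apply not_coll sc hij hik hjk
  rw [collinear_iff_of_mem (p₀ := V i) (by simp)]
  have hN := Complex.normSq_pos.2 hne
  set u := V j - V i with hu
  refine ⟨u, ?_⟩
  have hk : V k = ((u.re * (V k - V i).re + u.im * (V k - V i).im) / Complex.normSq u) • u + V i := by
    rw [Complex.normSq_apply] at hN ⊢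
    obtain ⟨N, hNd⟩ : ∃ N, N = u.re * u.re + u.im * u.im := ⟨_, rfl⟩
    rw [← hNd] at hN ⊢
    unfold cr at h
    apply Complex.ext
    · simp only [Complex.add_re, Complex.real_smul, Complex.re_ofReal_mul, Complex.sub_re, Complex.sub_im] at h ⊢
      field_simp
      linear_combination (-u.im) * h + ((V k).re - (V i).re) * hNd
    · simp only [Complex.add_im, Complex.real_smul, Complex.im_ofReal_mul, Complex.sub_re, Complex.sub_im] at h ⊢
      field_simp
      linear_combination u.re * h + ((V k).im - (V i).im) * hNd
  intro p hp
  simp only [mem_insert_iff, mem_singleton_iff] at hp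
  rcases hp with rfl | rfl | rfl
  · exact ⟨0, by simp⟩
  · exact ⟨1, by simp [hu]⟩
  · exact ⟨_, hk⟩

lemma hull_int (sc : ∀ i, V i ∉ convexHull ℝ (V '' {j | j ≠ i})) :
    (interior (convexHull ℝ (range V))).Nonempty := by
  rw [interior_convexHull_nonempty_iff_affineSpan_eq_top]
  have hc := not_coll sc (i := 0) (j := 1) (k := 2) (by decide) (by decide) (by decide)
  have ha := affineIndependent_iff_not_collinear_set.2 hc
  have ht := (ha.affineSpan_eq_top_iff_card_eq_finrank_add_one).2 (by simp [Complex.finrank_real_complex])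
  rw [eq_top_iff, ← ht]
  apply affineSpan_mono
  rintro _ ⟨i, rfl⟩
  fin_cases i
  · exact ⟨0, rfl⟩
  · exact ⟨1, rfl⟩
  · exact ⟨2, rfl⟩

lemma support (sc : ∀ i, V i ∉ convexHull ℝ (V '' {j | j ≠ i})) (i : Fin 5)
    (cy : segment ℝ (V i) (V (i + 1)) ⊆ frontier (convexHull ℝ (range V))) :
    ∃ σ : ℝ, ∀ j, j ≠ i → j ≠ i + 1 → 0 < σ * hh V i (V j) := by
  have hK := convex_convexHull ℝ (range V)
  have hI := hull_int sc
  obtain ⟨m, hm⟩ : ∃ m, m = (1 / 2 : ℝ) • V i + (1 / 2 : ℝ) • V (i + 1) := ⟨_, rfl⟩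
  have hms : m ∈ segment ℝ (V i) (V (i + 1)) :=
    ⟨1 / 2, 1 / 2, by norm_num, by norm_num, by norm_num, hm.symm⟩
  have hmi : m ∉ interior (convexHull ℝ (range V)) := (cy hms).2
  obtain ⟨f, hf⟩ := geometric_hahn_banach_open_point hK.interior isOpen_interior hmi
  have hfK : ∀ x ∈ convexHull ℝ (range V), f x ≤ f m := by
    intro x hx
    have hcl : x ∈ closure (interior (convexHull ℝ (range V))) := by
      rw [hK.closure_interior_eq_closure_of_nonempty_interior hI]
      exact subset_closure hx
    exact closure_minimal (fun y hy => (hf y hy).le : interior _ ⊆ {y | f y ≤ f m})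
      (isClosed_le f.continuous continuous_const) hcl
  have hfV : ∀ j, f (V j) ≤ f m := fun j => hfK _ (subset_convexHull ℝ _ ⟨j, rfl⟩)
  have hfm : f m = 1 / 2 * f (V i) + 1 / 2 * f (V (i + 1)) := by
    rw [hm, map_add, map_smul, map_smul, smul_eq_mul, smul_eq_mul]
  have h1 := hfV i
  have h2 := hfV (i + 1)
  have e1 : f (V i) = f m := by linarith
  have e2 : f (V (i + 1)) = f m := by linarith
  have fz : ∀ z : ℂ, f z = z.re * f 1 + z.im * f Complex.I := by
    intro z
    have : z = z.re • (1 : ℂ) + z.im • Complex.I := by simp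
    conv_lhs => rw [this]
    rw [map_add, map_smul, map_smul, smul_eq_mul, smul_eq_mul]
  have hcr := cr_ne sc (i := i) (j := i + 1) (k := i + 2) ((by decide : ∀ k : Fin 5, k ≠ k + 1) i)
    ((by decide : ∀ k : Fin 5, k ≠ k + 2) i) ((by decide : ∀ k : Fin 5, k + 1 ≠ k + 2) i)
  set e := V (i + 1) - V i with he
  have hne : e ≠ 0 := by
    intro h; rw [h] at hcr; simp [cr] at hcr
  have hN := Complex.normSq_pos.2 hne
  rw [Complex.normSq_apply] at hN
  have hfe : e.re * f 1 + e.im * f Complex.I = 0 := by rw [← fz, he, map_sub]; linarith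
  obtain ⟨N, hNd⟩ : ∃ N, N = e.re * e.re + e.im * e.im := ⟨_, rfl⟩
  rw [← hNd] at hN
  obtain ⟨σ, hσ⟩ : ∃ σ, σ = (f 1 * e.im - f Complex.I * e.re) / N := ⟨_, rfl⟩
  have hσN : σ * N = f 1 * e.im - f Complex.I * e.re := by rw [hσ]; field_simp
  have p1 : f 1 = σ * e.im := by
    have : N * f 1 = N * (σ * e.im) := by
      linear_combination (-e.im) * hσN + e.re * hfe + f 1 * hNd
    exact mul_left_cancel₀ hN.ne' this
  have p2 : f Complex.I = -(σ * e.re) := by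
    have : N * f Complex.I = N * (-(σ * e.re)) := by
      linear_combination e.re * hσN + e.im * hfe + f Complex.I * hNd
    exact mul_left_cancel₀ hN.ne' this
  have σ0 : σ ≠ 0 := by
    intro h
    obtain ⟨y, hy⟩ := hI
    have := hf y hy
    rw [fz, fz m, p1, p2, h] at this
    simp at this
  have hval : ∀ j, σ * hh V i (V j) = f m - f (V j) := by
    intro j
    rw [← e1, fz, fz (V j), p1, p2]
    unfold hh
    rw [← he]
    simp only [cr, Complex.sub_re, Complex.sub_im]; ring
  refine ⟨σ, fun j hj1 hj2 => ?_⟩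
  have hge : 0 ≤ σ * hh V i (V j) := by rw [hval]; linarith [hfV j]
  refine lt_of_le_of_ne hge (Ne.symm (mul_ne_zero σ0 ?_))
  exact cr_ne sc ((by decide : ∀ k : Fin 5, k ≠ k + 1) i) hj1.symm hj2.symm

lemma hh_shift (i : Fin 5) : hh V (i + 1) (V i) = hh V i (V (i + 1 + 1)) := by
  unfold hh cr
  simp only [Complex.sub_re, Complex.sub_im]; ring

lemma pos_or (sc : ∀ i, V i ∉ convexHull ℝ (V '' {j | j ≠ i}))
    (cy : ∀ i, segment ℝ (V i) (V (i + 1)) ⊆ frontier (convexHull ℝ (range V))) :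
    Pos V ∨ Pos (fun i => (starRingEnd ℂ) (V i)) := by
  choose σ hσ using fun i => support sc i (cy i)
  have hmul : ∀ i, 0 < σ i * σ (i + 1) := by
    intro i
    have q1 := hσ i (i + 1 + 1) ((by decide : ∀ k : Fin 5, k + 1 + 1 ≠ k) i)
      ((by decide : ∀ k : Fin 5, k + 1 + 1 ≠ k + 1) i)
    have q2 := hσ (i + 1) i ((by decide : ∀ k : Fin 5, k ≠ k + 1) i)
      ((by decide : ∀ k : Fin 5, k ≠ k + 1 + 1) i)
    rw [hh_shift] at q2
    have := mul_pos q1 q2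
    have h2 : σ i * hh V i (V (i + 1 + 1)) * (σ (i + 1) * hh V i (V (i + 1 + 1)))
      = σ i * σ (i + 1) * (hh V i (V (i + 1 + 1))) ^ 2 := by ring
    rw [h2] at this
    exact pos_of_mul_pos_left this (sq_nonneg _)
  have m0 : 0 < σ 0 * σ 1 := hmul 0
  have m1 : 0 < σ 1 * σ 2 := hmul 1
  have m2 : 0 < σ 2 * σ 3 := hmul 2
  have m3 : 0 < σ 3 * σ 4 := hmul 3
  rcases pos_and_pos_or_neg_and_neg_of_mul_pos m0 with ⟨a0, a1⟩ | ⟨a0, a1⟩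
  · left
    have a2 := pos_of_mul_pos_right m1 a1.le
    have a3 := pos_of_mul_pos_right m2 a2.le
    have a4 := pos_of_mul_pos_right m3 a3.le
    have all : ∀ i, 0 < σ i := by intro i; fin_cases i <;> assumption
    intro k j h1 h2
    exact pos_of_mul_pos_right (hσ k j h1 h2) (all k).le
  · right
    have a2 := neg_of_mul_pos_right m1 a1.le
    have a3 := neg_of_mul_pos_right m2 a2.le
    have a4 := neg_of_mul_pos_right m3 a3.le
    have all : ∀ i, σ i < 0 := by intro i; fin_cases i <;> assumption
    intro k j h1 h2
    have h3 := neg_of_mul_pos_right (hσ k j h1 h2) (all k).le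
    have e : hh (fun i => (starRingEnd ℂ) (V i)) k ((starRingEnd ℂ) (V j)) = - hh V k (V j) := by
      simp [hh, cr]; ring
    rw [e]; linarith

end EqPent

namespace EqPent
open MeasureTheory Set Metric Filter Topology
open scoped Real

section rel
variable {V : Fin 5 → ℂ} {a : Fin 5 → ℝ} {K : Set ℂ} {ι : Type} {g : ι → ℂ ≃ᵢ ℂ}

lemma relabel_inj (k : Fin 5) (r : Bool) : Function.Injective (relabel k r) := by
  revert k r; unfold Function.Injective; decide

lemma PData.rel (hP : PData V a K) (k : Fin 5) (r : Bool) :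
    PData (fun i => V (relabel k r i)) (fun i => a (relabel k r i)) K where
  conv := hP.conv
  comp := hP.comp
  intne := hP.intne
  apos i := hP.apos _
  alt i := hP.alt _
  asum := by
    have h := hP.asum
    have e := Equiv.sum_comp (Equiv.ofBijective (relabel k r)
      (Finite.injective_iff_bijective.1 (relabel_inj k r))) a
    simp only [Fin.sum_univ_five, Equiv.ofBijective_apply] at e
    rw [e, h]
  mem i := hP.mem _
  inj := hP.inj.comp (relabel_inj k r)
  notint i := hP.notint _
  corner i := hP.corner _
  sidept x hx hxi hxv := by
    refine hP.sidept x hx hxi fun i => ?_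
    obtain ⟨j, rfl⟩ := (Finite.injective_iff_surjective.1 (relabel_inj k r)) i
    exact hxv j
  edge_sub i := by
    cases r
    · have e : relabel k false (i + 1) = relabel k false i + 1 := by revert k i; decide
      rw [e]; exact hP.edge_sub _
    · have e : relabel k true i = relabel k true (i + 1) + 1 := by revert k i; decide
      rw [e, segment_symm]; exact hP.edge_sub _
  edge_loc i := by
    cases r
    · have e : relabel k false (i + 1) = relabel k false i + 1 := by revert k i; decide
      have e' : relabel k false (i - 1) = relabel k false i - 1 := by revert k i; decide
      rw [e, e']; exact hP.edge_loc _
    · have e : relabel k true (i + 1) = relabel k true i - 1 := by revert k i; decide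
      have e' : relabel k true (i - 1) = relabel k true i + 1 := by revert k i; decide
      rw [e, e']
      filter_upwards [hP.edge_loc (relabel k true i)] with z hz h1 h2
      exact (hz h1 h2).symm
  len := by
    obtain ⟨l, hl, h⟩ := hP.len
    refine ⟨l, hl, fun i => ?_⟩
    cases r
    · have e : relabel k false (i + 1) = relabel k false i + 1 := by revert k i; decide
      rw [e]; exact h _
    · have e : relabel k true i = relabel k true (i + 1) + 1 := by revert k i; decide
      rw [e, dist_comm]; exact h _

lemma Clos.rel (h : Clos (a 0) (a 1) (a 2) (a 3) (a 4)) (k : Fin 5) (r : Bool) :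
    Clos (a (relabel k r 0)) (a (relabel k r 1)) (a (relabel k r 2)) (a (relabel k r 3))
      (a (relabel k r 4)) := by
  cases r
  · fin_cases k
    · exact h
    · exact h.rot
    · exact h.rot.rot
    · exact h.rot.rot.rot
    · exact h.rot.rot.rot.rot
  · have h' := h.refl
    fin_cases k
    · exact h'
    · exact h'.rot.rot.rot.rot
    · exact h'.rot.rot.rot
    · exact h'.rot.rot
    · exact h'.rot

lemma core_max (hP : PData V a K) (hC : Clos (a 0) (a 1) (a 2) (a 3) (a 4)) (hT : Til K g)
    (hN : ∀ i j, i ≠ j → a i + a j ≠ π) (hmax : ∀ i, a i ≤ a 0) (h23 : a 3 ≤ a 2) :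
    2 * a 0 + a 1 = 2 * π ∧ 2 * a 2 + a 4 = 2 * π := by
  have hr : InR (a 0) (a 1) (a 2) (a 3) (a 4) :=
    ⟨⟨hP.apos _, hP.alt _⟩, ⟨hP.apos _, hP.alt _⟩, ⟨hP.apos _, hP.alt _⟩, ⟨hP.apos _, hP.alt _⟩,
      ⟨hP.apos _, hP.alt _⟩⟩
  obtain ⟨o1, o2, o3, o4, o5⟩ := hC.order hr (hmax 1) (hmax 2) (hmax 3) (hmax 4) h23
  exact core ⟨hC, hr, hmax 2, o1, o2, o3, o4, o5⟩ hN (lemmaA hP hT hN) (lemmaB hP hT hN)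

theorem main_rel (hP : PData V a K) (hC : Clos (a 0) (a 1) (a 2) (a 3) (a 4)) (hT : Til K g) :
    ∃ (k : Fin 5) (r : Bool),
      (a (relabel k r 0) + a (relabel k r 1) + a (relabel k r 2) = 2 * π) ∨
      (a (relabel k r 0) + a (relabel k r 1) + a (relabel k r 3) = 2 * π) ∨
      (2 * a (relabel k r 1) + a (relabel k r 0) = 2 * π ∧
        2 * a (relabel k r 4) + a (relabel k r 2) = 2 * π) := by
  by_contra hcon
  push Not at hcon
  have hs : ∀ i, a i + a (i + 1) + a (i + 2) + a (i + 3) + a (i + 4) = 3 * π := by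
    intro i
    have h := (hP.rel i false).asum
    simpa [relabel] using h
  have hadj : ∀ i, a i + a (i + 1) ≠ π := by
    intro i h
    apply (hcon (i + 2) false).1
    have := hs i
    have e1 : relabel (i + 2) false 0 = i + 2 := (by decide : ∀ i : Fin 5, relabel (i + 2) false 0 = i + 2) i
    have e2 : relabel (i + 2) false 1 = i + 3 := (by decide : ∀ i : Fin 5, relabel (i + 2) false 1 = i + 3) i
    have e3 : relabel (i + 2) false 2 = i + 4 := (by decide : ∀ i : Fin 5, relabel (i + 2) false 2 = i + 4) i
    rw [e1, e2, e3]; linarith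
  have hskip : ∀ i, a i + a (i + 2) ≠ π := by
    intro i h
    apply (hcon (i + 3) false).2.1
    have := hs i
    have e1 : relabel (i + 3) false 0 = i + 3 := (by decide : ∀ i : Fin 5, relabel (i + 3) false 0 = i + 3) i
    have e2 : relabel (i + 3) false 1 = i + 4 := (by decide : ∀ i : Fin 5, relabel (i + 3) false 1 = i + 4) i
    have e3 : relabel (i + 3) false 3 = i + 1 := (by decide : ∀ i : Fin 5, relabel (i + 3) false 3 = i + 1) i
    rw [e1, e2, e3]; linarith
  have hN : ∀ i j, i ≠ j → a i + a j ≠ π := by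
    intro i j hij
    have hc : j = i + 1 ∨ j = i + 2 ∨ i = j + 1 ∨ i = j + 2 := by revert i j; decide
    rcases hc with rfl | rfl | rfl | rfl
    · exact hadj _
    · exact hskip _
    · rw [add_comm]; exact hadj _
    · rw [add_comm]; exact hskip _
  obtain ⟨k0, hk0⟩ := Finite.exists_max a
  obtain ⟨r, hr⟩ : ∃ r, a (relabel k0 r 3) ≤ a (relabel k0 r 2) := by
    rcases le_total (a (relabel k0 false 3)) (a (relabel k0 false 2)) with h | h
    · exact ⟨false, h⟩
    · refine ⟨true, ?_⟩
      have e1 : relabel k0 true 3 = relabel k0 false 2 := (by decide : ∀ k0 : Fin 5, relabel k0 true 3 = relabel k0 false 2) k0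
      have e2 : relabel k0 true 2 = relabel k0 false 3 := (by decide : ∀ k0 : Fin 5, relabel k0 true 2 = relabel k0 false 3) k0
      rw [e1, e2]; exact h
  have e0 : relabel k0 r 0 = k0 := (by decide : ∀ (k0 : Fin 5) (r : Bool), relabel k0 r 0 = k0) k0 r
  have key := core_max (hP.rel k0 r) (hC.rel k0 r) hT
    (fun i j hij => hN _ _ ((relabel_inj k0 r).ne hij)) (fun i => by rw [e0]; exact hk0 _) hr
  have hk : ∀ (k : Fin 5) (r : Bool), ∃ k' r', ∀ i, relabel k' r' i = relabel k r (1 - i) := by decide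
  obtain ⟨k', r', h'⟩ := hk k0 r
  have h7 := (hcon k' r').2.2
  rw [h', h', h', h'] at h7
  exact h7 key.1 key.2
end rel

theorem final (P : ConvexPentagon) (hequi : ∀ i j : Fin 5, P.side i = P.side j)
    (T : Set (Set Plane)) (hT : IsMonohedralTiling P.carrier T) (Φ : Plane ≃ₗᵢ[ℝ] ℂ)
    (hΦ : Pos (fun i => Φ (P.V i))) :
    ∃ (k : Fin 5) (r : Bool),
      (P.angle (relabel k r 0) + P.angle (relabel k r 1) + P.angle (relabel k r 2)
          = 2 * Real.pi) ∨
      (P.angle (relabel k r 0) + P.angle (relabel k r 1) + P.angle (relabel k r 3)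
          = 2 * Real.pi) ∨
      (2 * P.angle (relabel k r 1) + P.angle (relabel k r 0) = 2 * Real.pi ∧
        2 * P.angle (relabel k r 4) + P.angle (relabel k r 2) = 2 * Real.pi) := by
  have hl : ∀ i, dist (Φ (P.V i)) (Φ (P.V (i + 1))) = P.side 0 := by
    intro i
    rw [Φ.dist_map]
    exact hequi i 0
  have hl0 : 0 < P.side 0 := by
    rw [← hl 0]
    exact dist_pos.2 (hΦ.ne (by decide))
  have han : ∀ i, an (fun i => Φ (P.V i)) i = P.angle i := by
    intro i
    unfold an ConvexPolygon.angle EuclideanGeometry.angle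
    simp only [vsub_eq_sub]
    rw [← map_sub, ← map_sub]
    exact Φ.toLinearIsometry.angle_map _ _
  have hP := pdata hΦ hl0 hl
  have hC := closing hΦ hl0 hl
  have hK : convexHull ℝ (range fun i => Φ (P.V i)) = Φ '' P.carrier := by
    unfold ConvexPolygon.carrier
    have := (Φ.toLinearEquiv : Plane →ₗ[ℝ] ℂ).image_convexHull (range P.V)
    rw [← range_comp] at this
    exact this.symm
  obtain ⟨hcopy, hcov, hdis⟩ := hT
  choose g hg using fun t : T => hcopy t.1 t.2
  let g' : T → ℂ ≃ᵢ ℂ := fun t => Φ.symm.toIsometryEquiv.trans ((g t).trans Φ.toIsometryEquiv)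
  have hg' : ∀ t : T, g' t '' convexHull ℝ (range fun i => Φ (P.V i)) = Φ '' t.1 := by
    intro t
    conv_rhs => rw [hg t]
    rw [hK, image_image, image_image]
    apply image_congr
    intro x _
    change Φ (g t (Φ.symm (Φ x))) = _
    rw [Φ.symm_apply_apply]
  have hTil : Til (convexHull ℝ (range fun i => Φ (P.V i))) g' := by
    constructor
    · intro x
      have : Φ.symm x ∈ ⋃₀ T := by rw [hcov]; trivial
      obtain ⟨t, ht, hx⟩ := this
      refine ⟨⟨t, ht⟩, ?_⟩
      rw [hg']
      exact ⟨_, hx, Φ.apply_symm_apply x⟩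
    · intro t s hts
      have h := hdis t.2 s.2 (fun h => hts (Subtype.ext h))
      rw [hg', hg']
      have e : ∀ S : Set Plane, interior (Φ '' S) = Φ '' interior S := fun S =>
        (Φ.toHomeomorph.image_interior S).symm
      rw [e, e, disjoint_image_iff Φ.injective, disjoint_iff_inter_eq_empty]
      exact h
  have := main_rel hP hC hTil
  simpa only [han] using this

/-- the standard identification, possibly followed by conjugation -/
lemma exists_iso (P : ConvexPentagon) : ∃ Φ : Plane ≃ₗᵢ[ℝ] ℂ, Pos (fun i => Φ (P.V i)) := by
  let Φ : Plane ≃ₗᵢ[ℝ] ℂ := Complex.orthonormalBasisOneI.repr.symm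
  have hcv : ∀ S : Set Plane, Φ '' convexHull ℝ S = convexHull ℝ (Φ '' S) := fun S =>
    (Φ.toLinearEquiv : Plane →ₗ[ℝ] ℂ).image_convexHull S
  have sc : ∀ i, Φ (P.V i) ∉ convexHull ℝ ((fun i => Φ (P.V i)) '' {j | j ≠ i}) := by
    intro i hi
    rw [← image_image Φ P.V, ← hcv] at hi
    obtain ⟨y, hy, e⟩ := hi
    rw [Φ.injective e] at hy
    exact P.strictlyConvex i hy
  have cy : ∀ i, segment ℝ (Φ (P.V i)) (Φ (P.V (i + 1))) ⊆
      frontier (convexHull ℝ (range fun i => Φ (P.V i))) := by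
    intro i
    have e1 : (range fun i => Φ (P.V i)) = Φ '' range P.V := by rw [← range_comp]; rfl
    have e2 : frontier (Φ '' convexHull ℝ (range P.V)) = Φ '' frontier (convexHull ℝ (range P.V)) :=
      (Φ.toHomeomorph.image_frontier _).symm
    rw [e1, ← hcv, e2]
    have e3 : segment ℝ (Φ (P.V i)) (Φ (P.V (i + 1))) = Φ '' segment ℝ (P.V i) (P.V (i + 1)) := by
      rw [← convexHull_pair, ← convexHull_pair, hcv, image_pair]
    rw [e3]
    exact image_mono (P.cyclic i)
  rcases pos_or sc cy with h | h
  · exact ⟨Φ, h⟩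
  · exact ⟨Φ.trans Complex.conjLIE, h⟩

end EqPent

/-- an equilateral convex pentagon admitting a monohedral tiling
satisfies, for some cyclic relabeling (possibly orientation-reversed) of its
angles, the Type 1, Type 2, or Type 7 angle conditions. -/
theorem statement_1 (P : ConvexPentagon) (hequi : ∀ i j : Fin 5, P.side i = P.side j)
    (T : Set (Set Plane)) (hT : IsMonohedralTiling P.carrier T) :
    ∃ (k : Fin 5) (r : Bool),
      (P.angle (relabel k r 0) + P.angle (relabel k r 1) + P.angle (relabel k r 2)
          = 2 * Real.pi) ∨
      (P.angle (relabel k r 0) + P.angle (relabel k r 1) + P.angle (relabel k r 3)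
          = 2 * Real.pi) ∨
      (2 * P.angle (relabel k r 1) + P.angle (relabel k r 0) = 2 * Real.pi ∧
        2 * P.angle (relabel k r 4) + P.angle (relabel k r 2) = 2 * Real.pi) := by
  obtain ⟨Φ, hΦ⟩ := EqPent.exists_iso P
  exact EqPent.final P hequi T hT Φ hΦ
end
end

section
/- Every convex pentagon in which some three consecutive interior angles sum to 360° (the Type 1 condition) admits a periodic monohedral tiling of the plane in which every tile is the image of the pentagon under a direct (orientation-preserving) isometry, i.e., a tiling using no reflected copies. -/
open EuclideanGeometry

noncomputable section

/-- The roof of the pentagon in affine coordinates. -/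
def roof (q b β s : ℝ) : ℝ := min (1 + (β - 1) * (s / b)) (q + (β - q) * ((1 - s) / (1 - b)))

/-- The roof extended quasi-periodically. -/
def zig (q b β s : ℝ) : ℝ := roof q b β (Int.fract s) + (q - 1) * (⌊s⌋ : ℝ)

section coords
variable {q b β : ℝ}

lemma roof_left (hb0 : 0 < b) (hb1 : b < 1) (hβ : 1 + (q - 1) * b < β) {s : ℝ}
    (hs : s ≤ b) : roof q b β s = 1 + (β - 1) * (s / b) := by
  have h1 : 0 < 1 - b := by linarith
  unfold roof
  apply min_eq_left
  have : q + (β - q) * ((1 - s) / (1 - b)) - (1 + (β - 1) * (s / b))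
      = (β - (1 + (q - 1) * b)) * (b - s) / (b * (1 - b)) := by
    field_simp; ring
  have h2 : 0 ≤ (β - (1 + (q - 1) * b)) * (b - s) / (b * (1 - b)) :=
    div_nonneg (mul_nonneg (by linarith) (by linarith)) (by positivity)
  linarith

lemma roof_right (hb0 : 0 < b) (hb1 : b < 1) (hβ : 1 + (q - 1) * b < β) {s : ℝ}
    (hs : b ≤ s) : roof q b β s = q + (β - q) * ((1 - s) / (1 - b)) := by
  have h1 : 0 < 1 - b := by linarith
  unfold roof
  apply min_eq_right
  have : q + (β - q) * ((1 - s) / (1 - b)) - (1 + (β - 1) * (s / b))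
      = - ((β - (1 + (q - 1) * b)) * (s - b) / (b * (1 - b))) := by
    field_simp; ring
  have h2 : 0 ≤ (β - (1 + (q - 1) * b)) * (s - b) / (b * (1 - b)) :=
    div_nonneg (mul_nonneg (by linarith) (by linarith)) (by positivity)
  linarith

lemma roof_zero (hb0 : 0 < b) (hb1 : b < 1) (hβ : 1 + (q - 1) * b < β) : roof q b β 0 = 1 := by
  rw [roof_left hb0 hb1 hβ hb0.le]; simp

lemma roof_one (hb0 : 0 < b) (hb1 : b < 1) (hβ : 1 + (q - 1) * b < β) : roof q b β 1 = q := by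
  rw [roof_right hb0 hb1 hβ hb1.le]; simp

lemma roof_b (hb0 : 0 < b) (hb1 : b < 1) (hβ : 1 + (q - 1) * b < β) : roof q b β b = β := by
  rw [roof_left hb0 hb1 hβ le_rfl, div_self hb0.ne']; ring

lemma roof_lower (hb0 : 0 < b) (hb1 : b < 1) (hq : 0 < q) (hβ : 1 + (q - 1) * b < β) {s : ℝ}
    (hs0 : 0 ≤ s) (hs1 : s ≤ 1) : min 1 q ≤ roof q b β s := by
  have h1 : 0 < 1 - b := by linarith
  have hm1 : min 1 q ≤ 1 := min_le_left _ _
  have hm2 : min 1 q ≤ q := min_le_right _ _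
  have hm3 : min 1 q ≤ β := by nlinarith
  rcases le_total s b with h | h
  · rw [roof_left hb0 hb1 hβ h]
    have a0 : 0 ≤ s / b := by positivity
    have a1 : s / b ≤ 1 := (div_le_one hb0).2 h
    nlinarith
  · rw [roof_right hb0 hb1 hβ h]
    have a0 : 0 ≤ (1 - s) / (1 - b) := div_nonneg (by linarith) h1.le
    have a1 : (1 - s) / (1 - b) ≤ 1 := (div_le_one h1).2 (by linarith)
    nlinarith

lemma zig_add_int (s : ℝ) (n : ℤ) : zig q b β (s + n) = zig q b β s + (q - 1) * n := by
  simp [zig]; ring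

lemma zig_of_mem (hb0 : 0 < b) (hb1 : b < 1) (hβ : 1 + (q - 1) * b < β) {s : ℝ}
    (hs0 : 0 ≤ s) (hs1 : s ≤ 1) : zig q b β s = roof q b β s := by
  rcases hs1.lt_or_eq with h | rfl
  · have : ⌊s⌋ = 0 := Int.floor_eq_zero_iff.2 ⟨hs0, h⟩
    simp [zig, Int.fract, this]
  · simp [zig, roof_one hb0 hb1 hβ, roof_zero hb0 hb1 hβ]

lemma zig_symm (hb0 : 0 < b) (hb1 : b < 1) (hβ : 1 + (q - 1) * b < β) (s : ℝ) :
    zig q b β s + zig q b β (b - s) = 1 + β := by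
  have h1 : 0 < 1 - b := by linarith
  have key : ∀ x : ℝ, 0 ≤ x → x < 1 → zig q b β x + zig q b β (b - x) = 1 + β := by
    intro x hx0 hx1
    rw [zig_of_mem hb0 hb1 hβ hx0 hx1.le]
    rcases le_total x b with h | h
    · rw [zig_of_mem hb0 hb1 hβ (by linarith) (by linarith), roof_left hb0 hb1 hβ h,
        roof_left hb0 hb1 hβ (by linarith)]
      field_simp; ring
    · have e : b - x = (b - x + 1) + ((-1 : ℤ) : ℝ) := by push_cast; ring
      rw [e, zig_add_int, zig_of_mem hb0 hb1 hβ (by linarith) (by linarith),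
        roof_right hb0 hb1 hβ h, roof_right hb0 hb1 hβ (by linarith)]
      push_cast
      field_simp; ring
  have h := key (Int.fract s) (Int.fract_nonneg s) (Int.fract_lt_one s)
  have e1 : s = Int.fract s + ((⌊s⌋ : ℤ) : ℝ) := (Int.fract_add_floor s).symm
  have e2 : b - s = (b - Int.fract s) + ((-⌊s⌋ : ℤ) : ℝ) := by
    push_cast; linarith
  have e3 : zig q b β s = zig q b β (Int.fract s) + (q - 1) * (⌊s⌋ : ℝ) := by
    conv_lhs => rw [e1]
    rw [zig_add_int]
  rw [e3, e2, zig_add_int]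
  push_cast
  linarith

lemma zig_one_sub (hb0 : 0 < b) (hb1 : b < 1) (hβ : 1 + (q - 1) * b < β) {y : ℝ}
    (hy0 : 0 ≤ y) (hy1 : y ≤ 1) (j : ℤ) :
    zig q b β (1 - (y + j)) = roof q b β (1 - y) - (q - 1) * j := by
  have e2 : 1 - (y + j) = (1 - y) + ((-j : ℤ) : ℝ) := by push_cast; ring
  rw [e2, zig_add_int, zig_of_mem hb0 hb1 hβ (by linarith) (by linarith)]
  push_cast; ring

/-- upper boundary of the `k`-th row at abscissa `s`. -/
def rowTop (q b β s : ℝ) (k : ℤ) : ℝ := zig q b β (s - k * (b - 1)) + k * (1 + β)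

lemma rowTop_pred (hb0 : 0 < b) (hb1 : b < 1) (hβ : 1 + (q - 1) * b < β) (s : ℝ) (k : ℤ) :
    rowTop q b β s (k - 1) = - zig q b β (1 - (s - k * (b - 1))) + k * (1 + β) := by
  have := zig_symm hb0 hb1 hβ (1 - (s - k * (b - 1)))
  have e : b - (1 - (s - k * (b - 1))) = s - ((k - 1 : ℤ) : ℝ) * (b - 1) := by push_cast; ring
  rw [e] at this
  unfold rowTop
  push_cast at *
  linarith

lemma rowTop_step (hb0 : 0 < b) (hb1 : b < 1) (hq : 0 < q) (hβ : 1 + (q - 1) * b < β)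
    (s : ℝ) (k : ℤ) :
    rowTop q b β s (k - 1) + 2 * min 1 q ≤ rowTop q b β s k := by
  rw [rowTop_pred hb0 hb1 hβ]
  unfold rowTop
  set x := s - k * (b - 1)
  have e1 : x = Int.fract x + ((⌊x⌋ : ℤ) : ℝ) := (Int.fract_add_floor x).symm
  have h0 := Int.fract_nonneg x
  have h1 := (Int.fract_lt_one x).le
  have e3 : zig q b β x = roof q b β (Int.fract x) + (q - 1) * (⌊x⌋ : ℝ) := rfl
  have e4 : zig q b β (1 - x) = roof q b β (1 - Int.fract x) - (q - 1) * (⌊x⌋ : ℝ) := by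
    conv_lhs => rw [e1]
    exact zig_one_sub hb0 hb1 hβ h0 h1 _
  rw [e3, e4]
  have := roof_lower hb0 hb1 hq hβ h0 h1
  have := roof_lower hb0 hb1 hq hβ (s := 1 - Int.fract x) (by linarith) (by linarith)
  linarith

lemma rowTop_strictMono (hb0 : 0 < b) (hb1 : b < 1) (hq : 0 < q) (hβ : 1 + (q - 1) * b < β)
    (s : ℝ) : StrictMono (rowTop q b β s) := by
  apply strictMono_int_of_lt_succ
  intro k
  have := rowTop_step hb0 hb1 hq hβ s (k + 1)
  have hm : 0 < min 1 q := lt_min one_pos hq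
  simp only [add_sub_cancel_right] at this
  linarith

lemma rowTop_mono (hb0 : 0 < b) (hb1 : b < 1) (hq : 0 < q) (hβ : 1 + (q - 1) * b < β)
    (s : ℝ) : Monotone (fun k : ℤ => rowTop q b β s k - k * (2 * min 1 q)) := by
  apply monotone_int_of_le_succ
  intro k
  have := rowTop_step hb0 hb1 hq hβ s (k + 1)
  simp only [add_sub_cancel_right] at this
  push_cast
  linarith

lemma exists_row (hb0 : 0 < b) (hb1 : b < 1) (hq : 0 < q) (hβ : 1 + (q - 1) * b < β)
    (s t : ℝ) : ∃ k : ℤ, rowTop q b β s (k - 1) ≤ t ∧ t < rowTop q b β s k := by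
  have hm : 0 < 2 * min 1 q := by have : 0 < min 1 q := lt_min one_pos hq
                                  linarith
  have mono := rowTop_mono hb0 hb1 hq hβ s
  set δ := 2 * min 1 q
  set U := rowTop q b β s
  have hub : ∃ k : ℤ, t < U k := by
    obtain ⟨n, hn⟩ := exists_nat_gt ((t - U 0) / δ)
    refine ⟨n, ?_⟩
    have h : U 0 - (0 : ℤ) * δ ≤ U n - ((n : ℤ) : ℝ) * δ := mono (by positivity : (0 : ℤ) ≤ n)
    rw [div_lt_iff₀ hm] at hn
    push_cast at h
    linarith
  have hlb : ∃ m : ℤ, ∀ k : ℤ, t < U k → m ≤ k := by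
    obtain ⟨n, hn⟩ := exists_nat_gt ((U 0 - t) / δ)
    refine ⟨-n, ?_⟩
    intro k hk
    by_contra hlt
    push Not at hlt
    have h2 := (rowTop_strictMono hb0 hb1 hq hβ s) hlt
    have h : U (-n) - ((-n : ℤ) : ℝ) * δ ≤ U 0 - ((0 : ℤ) : ℝ) * δ := mono (by simp)
    rw [div_lt_iff₀ hm] at hn
    push_cast at h
    change U k < U (-n) at h2
    linarith
  obtain ⟨k, hk, hmin⟩ := Int.exists_least_of_bdd hlb hub
  refine ⟨k, ?_, hk⟩
  by_contra h
  push Not at h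
  have := hmin _ h
  lia

/-- covering in coordinates -/
lemma coord_cover (hb0 : 0 < b) (hb1 : b < 1) (hq : 0 < q) (hβ : 1 + (q - 1) * b < β)
    (s t : ℝ) : ∃ k j : ℤ, ∃ y z : ℝ, s = y + j + k * (b - 1) ∧
      t = z + j * (q - 1) + k * (1 + β) ∧ 0 ≤ y ∧ y ≤ 1 ∧
      - roof q b β (1 - y) ≤ z ∧ z ≤ roof q b β y := by
  obtain ⟨k, h1, h2⟩ := exists_row hb0 hb1 hq hβ s t
  rw [rowTop_pred hb0 hb1 hβ] at h1
  unfold rowTop at h2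
  set x := s - k * (b - 1) with hx
  have h0 := Int.fract_nonneg x
  have h1' := (Int.fract_lt_one x).le
  have e1 : x = Int.fract x + ((⌊x⌋ : ℤ) : ℝ) := (Int.fract_add_floor x).symm
  have e3 : zig q b β x = roof q b β (Int.fract x) + (q - 1) * (⌊x⌋ : ℝ) := rfl
  have e4 : zig q b β (1 - x) = roof q b β (1 - Int.fract x) - (q - 1) * (⌊x⌋ : ℝ) := by
    conv_lhs => rw [e1]
    exact zig_one_sub hb0 hb1 hβ h0 h1' _
  refine ⟨k, ⌊x⌋, Int.fract x, t - ⌊x⌋ * (q - 1) - k * (1 + β), ?_, by ring, h0, h1', ?_, ?_⟩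
  · linarith
  · linarith
  · linarith

/-- uniqueness in coordinates -/
lemma coord_unique (hb0 : 0 < b) (hb1 : b < 1) (hq : 0 < q) (hβ : 1 + (q - 1) * b < β)
    {k j k' j' : ℤ} {y z y' z' : ℝ}
    (hs : y + j + k * (b - 1) = y' + j' + k' * (b - 1))
    (ht : z + j * (q - 1) + k * (1 + β) = z' + j' * (q - 1) + k' * (1 + β))
    (h0 : 0 < y) (h1 : y < 1) (h2 : - roof q b β (1 - y) < z) (h3 : z < roof q b β y)
    (h0' : 0 < y') (h1' : y' < 1) (h2' : - roof q b β (1 - y') < z') (h3' : z' < roof q b β y') :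
    k = k' ∧ j = j' ∧ z = z' := by
  have main : ∀ {k j : ℤ} {y z : ℝ} (s t : ℝ), s = y + j + k * (b - 1) →
      t = z + j * (q - 1) + k * (1 + β) → 0 < y → y < 1 → - roof q b β (1 - y) < z →
      z < roof q b β y → rowTop q b β s (k - 1) < t ∧ t < rowTop q b β s k := by
    intro k j y z s t hs ht h0 h1 h2 h3
    rw [rowTop_pred hb0 hb1 hβ]
    unfold rowTop
    have e : s - k * (b - 1) = y + j := by linarith
    rw [e, zig_one_sub hb0 hb1 hβ h0.le h1.le, zig_add_int, zig_of_mem hb0 hb1 hβ h0.le h1.le]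
    constructor <;> linarith
  obtain ⟨a1, a2⟩ := main _ _ rfl rfl h0 h1 h2 h3
  obtain ⟨b1, b2⟩ := main _ _ hs ht h0' h1' h2' h3'
  have sm := rowTop_strictMono hb0 hb1 hq hβ (y + j + k * (b - 1))
  have c1 := sm.lt_iff_lt.1 (a1.trans b2)
  have c2 := sm.lt_iff_lt.1 (b1.trans a2)
  have hk : k = k' := by lia
  subst hk
  have hj : j = j' := by
    have d1 : (j : ℝ) < j' + 1 := by linarith
    have d2 : (j' : ℝ) < j + 1 := by linarith
    have d1 : j < j' + 1 := by exact_mod_cast d1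
    have d2 : j' < j + 1 := by exact_mod_cast d2
    lia
  subst hj
  exact ⟨rfl, rfl, by linarith⟩

end coords
/-- The cross product of two plane vectors. -/
def cr (x y : Plane) : ℝ := x 0 * y 1 - x 1 * y 0

lemma cr_decomp {e u : Plane} (h : cr e u ≠ 0) (x : Plane) :
    x = (cr x u / cr e u) • e + (cr e x / cr e u) • u := by
  ext i
  have h' : e 0 * u 1 - e 1 * u 0 ≠ 0 := h
  fin_cases i <;> simp [cr] <;>
    rw [div_mul_eq_mul_div, div_mul_eq_mul_div, ← add_div, eq_div_iff h'] <;> ring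

/-- the pentagon in coordinates -/
def pent (q b β : ℝ) (D e u : Plane) : Set Plane :=
  convexHull ℝ {D + e + q • u, D + b • e + β • u, D + u, D, D + e}

section pentagon
variable {q b β : ℝ} {D e u : Plane}

lemma pent_sub {φ : Plane →ₗ[ℝ] ℝ} {c : ℝ} (h1 : φ (D + e + q • u) ≤ c)
    (h2 : φ (D + b • e + β • u) ≤ c) (h3 : φ (D + u) ≤ c) (h4 : φ D ≤ c) (h5 : φ (D + e) ≤ c) :
    pent q b β D e u ⊆ {x | φ x ≤ c} := by
  apply convexHull_min
  · intro x hx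
    simp only [Set.mem_insert_iff, Set.mem_singleton_iff] at hx
    rcases hx with rfl | rfl | rfl | rfl | rfl <;> assumption
  · exact convex_halfSpace_le φ.isLinear c

lemma interior_half {K : Set Plane} {φ : Plane →ₗ[ℝ] ℝ} {c : ℝ} (hK : K ⊆ {x | φ x ≤ c})
    (v : Plane) (hv : 0 < φ v) {x : Plane} (hx : x ∈ interior K) : φ x < c := by
  have hc : Filter.Tendsto (fun r : ℝ => x + r • v) (nhdsWithin 0 (Set.Ioi 0)) (nhds x) := by
    have : Continuous (fun r : ℝ => x + r • v) := by fun_prop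
    have h := this.tendsto 0
    simp only [zero_smul, add_zero] at h
    exact h.mono_left nhdsWithin_le_nhds
  have h1 := hc.eventually (mem_interior_iff_mem_nhds.1 hx)
  have h2 : ∀ᶠ r : ℝ in nhdsWithin 0 (Set.Ioi 0), 0 < r := self_mem_nhdsWithin
  obtain ⟨r, hr, hr0⟩ := (h1.and h2).exists
  have := hK hr
  simp only [Set.mem_ofPred_eq, map_add, map_smul, smul_eq_mul] at this
  nlinarith [mul_pos hr0 hv]

/-- first coordinate functional -/
def fS (e u : Plane) : Plane →ₗ[ℝ] ℝ where
  toFun x := cr x u / cr e u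
  map_add' x y := by simp [cr]; ring
  map_smul' r x := by simp [cr]; ring

/-- second coordinate functional -/
def fT (e u : Plane) : Plane →ₗ[ℝ] ℝ where
  toFun x := cr e x / cr e u
  map_add' x y := by simp [cr]; ring
  map_smul' r x := by simp [cr]; ring

lemma fS_e (h : cr e u ≠ 0) : fS e u e = 1 := div_self h
lemma fS_u : fS e u u = 0 := by simp [fS, cr]; left; ring
lemma fT_u (h : cr e u ≠ 0) : fT e u u = 1 := div_self h
lemma fT_e : fT e u e = 0 := by simp [fT, cr]; left; ring
lemma fST (h : cr e u ≠ 0) (x : Plane) : x = fS e u x • e + fT e u x • u := cr_decomp h x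

lemma pent_supset (hb0 : 0 < b) (hb1 : b < 1) (hq : 0 < q) (hβ : 1 + (q - 1) * b < β)
    {s t : ℝ} (hs0 : 0 ≤ s) (hs1 : s ≤ 1) (ht0 : 0 ≤ t) (ht1 : t ≤ roof q b β s) :
    D + s • e + t • u ∈ pent q b β D e u := by
  have hconv : Convex ℝ (pent q b β D e u) := convex_convexHull _ _
  have hsub := subset_convexHull ℝ ({D + e + q • u, D + b • e + β • u, D + u, D, D + e} : Set Plane)
  have m1 : D + e + q • u ∈ pent q b β D e u := hsub (by simp)
  have m2 : D + b • e + β • u ∈ pent q b β D e u := hsub (by simp)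
  have m3 : D + u ∈ pent q b β D e u := hsub (by simp)
  have m4 : D ∈ pent q b β D e u := hsub (by simp)
  have m5 : D + e ∈ pent q b β D e u := hsub (by simp)
  have h1 : 0 < 1 - b := by linarith
  have hr : 0 < roof q b β s :=
    lt_of_lt_of_le (lt_min one_pos hq) (roof_lower hb0 hb1 hq hβ hs0 hs1)
  have base : D + s • e ∈ pent q b β D e u := by
    have := hconv m4 m5 (a := 1 - s) (b := s) (by linarith) hs0 (by ring)
    convert this using 1
    module
  have top : D + s • e + roof q b β s • u ∈ pent q b β D e u := by
    rcases le_total s b with h | h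
    · rw [roof_left hb0 hb1 hβ h]
      have := hconv m3 m2 (a := 1 - s / b) (b := s / b)
        (by have := (div_le_one hb0).2 h; linarith) (by positivity) (by ring)
      convert this using 1
      match_scalars <;> field_simp <;> ring
    · rw [roof_right hb0 hb1 hβ h]
      have := hconv m1 m2 (a := 1 - (1 - s) / (1 - b)) (b := (1 - s) / (1 - b))
        (by have := (div_le_one h1).2 (by linarith : 1 - s ≤ 1 - b); linarith)
        (div_nonneg (by linarith) h1.le) (by ring)
      convert this using 1
      match_scalars <;> field_simp <;> ring
  have := hconv base top (a := 1 - t / roof q b β s) (b := t / roof q b β s)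
    (by have := (div_le_one hr).2 ht1; linarith) (by positivity) (by ring)
  convert this using 1
  match_scalars <;> field_simp <;> ring

lemma pent_interior (hcr : cr e u ≠ 0) (hb0 : 0 < b) (hb1 : b < 1) (hq : 0 < q)
    (hβ : 1 + (q - 1) * b < β) {x : Plane} (hx : x ∈ interior (pent q b β D e u)) :
    ∃ s t : ℝ, x = D + s • e + t • u ∧ 0 < s ∧ s < 1 ∧ 0 < t ∧ t < roof q b β s := by
  have h1 : 0 < 1 - b := by linarith
  have hβ0 : 0 < β := by nlinarith
  have hSe := fS_e hcr
  have hSu : fS e u u = 0 := fS_u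
  have hTu := fT_u hcr
  have hTe : fT e u e = 0 := fT_e
  have key : ∀ (p r c : ℝ), (p ≠ 0 ∨ r ≠ 0) → p + q * r ≤ c → p * b + r * β ≤ c → r ≤ c → 0 ≤ c →
      p ≤ c → p * fS e u (x - D) + r * fT e u (x - D) < c := by
    intro p r c hpr c1 c2 c3 c4 c5
    have hn : 0 < (p • fS e u + r • fT e u) (p • e + r • u) := by
      simp [hSe, hSu, hTu, hTe]
      rcases hpr with h | h
      · have := mul_self_pos.2 h; nlinarith [mul_self_nonneg r]
      · have := mul_self_pos.2 h; nlinarith [mul_self_nonneg p]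
    have hsub : pent q b β D e u ⊆ {x | (p • fS e u + r • fT e u) x ≤
        c + (p • fS e u + r • fT e u) D} := by
      apply pent_sub <;> simp [hSe, hSu, hTu, hTe] <;> linarith
    have := interior_half hsub _ hn hx
    simp only [LinearMap.add_apply, LinearMap.smul_apply, smul_eq_mul, map_sub] at this ⊢
    linarith
  refine ⟨fS e u (x - D), fT e u (x - D), ?_, ?_, ?_, ?_, ?_⟩
  · have := fST hcr (x - D)
    rw [add_assoc, ← this]; abel
  · have := key (-1) 0 0 (by norm_num) (by linarith) (by linarith) (by linarith) (by linarith) (by linarith)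
    linarith
  · have := key 1 0 1 (by norm_num) (by linarith) (by linarith) (by linarith) (by linarith) (by linarith)
    linarith
  · have := key 0 (-1) 0 (by norm_num) (by linarith) (by linarith) (by linarith) (by linarith) (by linarith)
    linarith
  · have a1 := key (-(β - 1) / b) 1 1 (by norm_num)
      (by have : -(β - 1) / b ≤ 1 - q := by rw [div_le_iff₀ hb0]; nlinarith
          linarith)
      (by rw [div_mul_cancel₀ _ hb0.ne']; linarith) (by linarith) (by linarith)
      (by rw [div_le_iff₀ hb0]; nlinarith)
    have a2 := key ((β - q) / (1 - b)) 1 (q + (β - q) / (1 - b)) (by norm_num)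
      (by linarith)
      (by have : (β - q) / (1 - b) = (β - q) / (1 - b) * b + (β - q) / (1 - b) * (1 - b) := by ring
          rw [div_mul_cancel₀ _ h1.ne'] at this
          linarith)
      (by have : 1 - q ≤ (β - q) / (1 - b) := by rw [le_div_iff₀ h1]; nlinarith
          linarith)
      (by have : - q ≤ (β - q) / (1 - b) := by rw [le_div_iff₀ h1]; nlinarith
          linarith)
      (by linarith)
    unfold roof
    apply lt_min
    · have : (β - 1) * (fS e u (x - D) / b) = - (-(β - 1) / b * fS e u (x - D)) := by ring
      linarith
    · have : (β - q) * ((1 - fS e u (x - D)) / (1 - b)) =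
        (β - q) / (1 - b) - (β - q) / (1 - b) * fS e u (x - D) := by ring
      linarith

/-- translation or point reflection -/
def mot (ε : Bool) (D e w : Plane) : Plane ≃ᵢ Plane :=
  if ε then IsometryEquiv.addRight w
  else (LinearIsometryEquiv.neg ℝ (E := Plane)).toIsometryEquiv.trans
    (IsometryEquiv.addRight (D + D + e + w))

lemma mot_true (w x : Plane) : mot true D e w x = x + w := rfl
lemma mot_false (w x : Plane) : mot false D e w x = -x + (D + D + e + w) := rfl

lemma mot_direct (ε : Bool) (w : Plane) : IsDirectIsometry (mot ε D e w) := by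
  cases ε
  · refine ⟨LinearIsometryEquiv.neg ℝ, D + D + e + w, ?_, fun x => rfl⟩
    have : ((LinearIsometryEquiv.neg ℝ (E := Plane)).toLinearEquiv : Plane →ₗ[ℝ] Plane)
      = (-1 : ℝ) • LinearMap.id := by ext x; simp
    rw [this, LinearMap.det_smul]
    simp
  · refine ⟨LinearIsometryEquiv.refl ℝ _, w, ?_, fun x => rfl⟩
    have : ((LinearIsometryEquiv.refl ℝ Plane).toLinearEquiv : Plane →ₗ[ℝ] Plane)
      = LinearMap.id := by ext x; simp
    rw [this]; simp

/-- lattice vectors -/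
def lat (q b β : ℝ) (e u : Plane) (k j : ℤ) : Plane :=
  (j : ℝ) • (e + (q - 1) • u) + (k : ℝ) • ((b - 1) • e + (1 + β) • u)

/-- the tiles -/
def tile (q b β : ℝ) (D e u : Plane) (ε : Bool) (k j : ℤ) : Set Plane :=
  mot ε D e (lat q b β e u k j) '' pent q b β D e u

lemma tile_shift (ε : Bool) (k j k' j' : ℤ) :
    (fun x => x + lat q b β e u k' j') '' tile q b β D e u ε k j =
      tile q b β D e u ε (k + k') (j + j') := by
  have hl : lat q b β e u (k + k') (j + j') = lat q b β e u k j + lat q b β e u k' j' := by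
    unfold lat; push_cast; module
  unfold tile
  rw [Set.image_image, hl]
  apply Set.image_congr
  intro x _
  cases ε
  · rw [mot_false, mot_false]; abel
  · rw [mot_true, mot_true]; abel

lemma coord_inj (hcr : cr e u ≠ 0) {s t s' t' : ℝ}
    (h : D + s • e + t • u = D + s' • e + t' • u) : s = s' ∧ t = t' := by
  have h' : s • e + t • u = s' • e + t' • u := by
    rw [add_assoc, add_assoc] at h; exact add_left_cancel h
  have h1 := congrArg (fS e u) h'
  have h2 := congrArg (fT e u) h'
  simp only [map_add, map_smul, fS_e hcr, fS_u, fT_u hcr, fT_e, smul_eq_mul] at h1 h2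
  constructor <;> linarith

lemma tile_interior (hcr : cr e u ≠ 0) (hb0 : 0 < b) (hb1 : b < 1) (hq : 0 < q)
    (hβ : 1 + (q - 1) * b < β) {ε : Bool} {k j : ℤ} {x : Plane}
    (hx : x ∈ interior (tile q b β D e u ε k j)) :
    ∃ y z : ℝ, x = D + (y + j + k * (b - 1)) • e + (z + j * (q - 1) + k * (1 + β)) • u ∧
      0 < y ∧ y < 1 ∧ - roof q b β (1 - y) < z ∧ z < roof q b β y ∧ (ε = true ↔ 0 < z) := by
  have : tile q b β D e u ε k j =
    (mot ε D e (lat q b β e u k j)).toHomeomorph '' pent q b β D e u := rfl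
  rw [this, ← Homeomorph.image_interior] at hx
  obtain ⟨x', hx', rfl⟩ := hx
  obtain ⟨s, t, rfl, h0, h1, h2, h3⟩ := pent_interior hcr hb0 hb1 hq hβ hx'
  have hm : 0 < min 1 q := lt_min one_pos hq
  have hr := roof_lower hb0 hb1 hq hβ (s := 1 - s) (by linarith) (by linarith)
  cases ε
  · refine ⟨1 - s, -t, ?_, by linarith, by linarith, ?_, by linarith, ?_⟩
    · change mot false D e _ _ = _
      rw [mot_false]; unfold lat; module
    · rw [sub_sub_cancel]; linarith
    · simp; linarith
  · refine ⟨s, t, ?_, by linarith, by linarith, ?_, by linarith, ?_⟩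
    · change mot true D e _ _ = _
      rw [mot_true]; unfold lat; module
    · linarith
    · simp; linarith

lemma tile_unique (hcr : cr e u ≠ 0) (hb0 : 0 < b) (hb1 : b < 1) (hq : 0 < q)
    (hβ : 1 + (q - 1) * b < β) {ε ε' : Bool} {k j k' j' : ℤ} {x : Plane}
    (hx : x ∈ interior (tile q b β D e u ε k j)) (hx' : x ∈ interior (tile q b β D e u ε' k' j')) :
    tile q b β D e u ε k j = tile q b β D e u ε' k' j' := by
  obtain ⟨y, z, e1, h0, h1, h2, h3, h4⟩ := tile_interior hcr hb0 hb1 hq hβ hx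
  obtain ⟨y', z', e1', h0', h1', h2', h3', h4'⟩ := tile_interior hcr hb0 hb1 hq hβ hx'
  obtain ⟨c1, c2⟩ := coord_inj hcr (e1.symm.trans e1')
  obtain ⟨rfl, rfl, rfl⟩ := coord_unique hb0 hb1 hq hβ c1 c2 h0 h1 h2 h3 h0' h1' h2' h3'
  have : ε = ε' := by
    rw [Bool.eq_iff_iff, h4, h4']
  rw [this]

lemma tile_cover (hcr : cr e u ≠ 0) (hb0 : 0 < b) (hb1 : b < 1) (hq : 0 < q)
    (hβ : 1 + (q - 1) * b < β) (x : Plane) : ∃ ε k j, x ∈ tile q b β D e u ε k j := by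
  have hx : x = D + fS e u (x - D) • e + fT e u (x - D) • u := by
    have := fST hcr (x - D)
    rw [add_assoc, ← this]; abel
  obtain ⟨k, j, y, z, e1, e2, h0, h1, h2, h3⟩ :=
    coord_cover hb0 hb1 hq hβ (fS e u (x - D)) (fT e u (x - D))
  rw [e1, e2] at hx
  rcases le_total 0 z with hz | hz
  · refine ⟨true, k, j, D + y • e + z • u, pent_supset hb0 hb1 hq hβ h0 h1 hz h3, ?_⟩
    rw [mot_true, hx]; unfold lat; module
  · refine ⟨false, k, j, D + (1 - y) • e + (-z) • u,
      pent_supset hb0 hb1 hq hβ (by linarith) (by linarith) (by linarith) (by linarith), ?_⟩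
    rw [mot_false, hx]; unfold lat; module

theorem pent_tiles (hcr : cr e u ≠ 0) (hb0 : 0 < b) (hb1 : b < 1) (hq : 0 < q)
    (hβ : 1 + (q - 1) * b < β) :
    ∃ T : Set (Set Plane), IsMonohedralTiling (pent q b β D e u) T ∧ IsPeriodic T ∧
      ∀ t ∈ T, ∃ g : Plane ≃ᵢ Plane, IsDirectIsometry g ∧ t = g '' (pent q b β D e u) := by
  refine ⟨{t | ∃ ε k j, t = tile q b β D e u ε k j}, ⟨?_, ?_, ?_⟩, ⟨?_, ?_⟩⟩
  · rintro t ⟨ε, k, j, rfl⟩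
    exact ⟨_, rfl⟩
  · rw [Set.eq_univ_iff_forall]
    intro x
    obtain ⟨ε, k, j, h⟩ := tile_cover (D := D) hcr hb0 hb1 hq hβ x
    exact ⟨_, ⟨ε, k, j, rfl⟩, h⟩
  · rintro t ⟨ε, k, j, rfl⟩ s ⟨ε', k', j', rfl⟩ hne
    rw [Set.eq_empty_iff_forall_notMem]
    rintro x ⟨h1, h2⟩
    exact hne (tile_unique hcr hb0 hb1 hq hβ h1 h2)
  · refine ⟨lat q b β e u 0 1, lat q b β e u 1 0, ?_, ?_, ?_⟩
    · rw [LinearIndependent.pair_iff]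
      intro s t h
      have h1 := congrArg (fS e u) h
      have h2 := congrArg (fT e u) h
      simp [lat, fS_e hcr, fS_u, fT_u hcr, fT_e] at h1 h2
      have hs : s = t * (1 - b) := by linarith
      rw [hs] at h2
      have hp : (1 - b) * (q - 1) + (1 + β) ≠ 0 := by nlinarith
      have : t * ((1 - b) * (q - 1) + (1 + β)) = 0 := by linarith
      have ht : t = 0 := by simpa [hp] using this
      rw [hs, ht]; simp
    · rintro t ⟨ε, k, j, rfl⟩
      exact ⟨ε, _, _, tile_shift ε k j 0 1⟩
    · rintro t ⟨ε, k, j, rfl⟩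
      exact ⟨ε, _, _, tile_shift ε k j 1 0⟩
  · rintro t ⟨ε, k, j, rfl⟩
    exact ⟨_, mot_direct ε _, rfl⟩

end pentagon
/-- A plane vector as a complex number. -/
def tc (x : Plane) : ℂ := ⟨x 0, x 1⟩

lemma plane_inner (x y : Plane) : inner ℝ x y = x 0 * y 0 + x 1 * y 1 := by
  simp [PiLp.inner_apply, Fin.sum_univ_two]; ring

lemma tc_angle {σ : ℝ} (hσ : σ = 1 ∨ σ = -1) {x y : Plane} (h : 0 < σ * cr x y) :
    (starRingEnd ℂ) (tc x) * tc y = ((‖x‖ * ‖y‖ : ℝ) : ℂ) *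
      Complex.exp (((σ * InnerProductGeometry.angle x y : ℝ) : ℂ) * Complex.I) := by
  have hc := InnerProductGeometry.cos_angle_mul_norm_mul_norm x y
  have hs := InnerProductGeometry.sin_angle_mul_norm_mul_norm x y
  have e : inner ℝ x x * inner ℝ y y - inner ℝ x y * inner ℝ x y = (σ * cr x y) ^ 2 := by
    have : σ ^ 2 = 1 := by rcases hσ with rfl | rfl <;> norm_num
    rw [mul_pow, this]
    simp only [plane_inner, cr]; ring
  rw [e, Real.sqrt_sq h.le] at hs
  rw [plane_inner] at hc
  have hre : Real.cos (σ * InnerProductGeometry.angle x y) =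
      Real.cos (InnerProductGeometry.angle x y) := by
    rcases hσ with rfl | rfl <;> simp
  have him : Real.sin (σ * InnerProductGeometry.angle x y) =
      σ * Real.sin (InnerProductGeometry.angle x y) := by
    rcases hσ with rfl | rfl <;> simp
  apply Complex.ext
  · rw [Complex.re_ofReal_mul, Complex.exp_ofReal_mul_I_re, hre]
    simp [tc]; linarith
  · rw [Complex.im_ofReal_mul, Complex.exp_ofReal_mul_I_im, him]
    have : σ * σ = 1 := by rcases hσ with rfl | rfl <;> norm_num
    have h3 : ‖x‖ * ‖y‖ * (σ * Real.sin (InnerProductGeometry.angle x y)) = (σ * σ) * cr x y := by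
      linear_combination σ * hs
    rw [h3, this]
    simp [tc, cr]; ring

lemma parallel_of_angles {σ : ℝ} (hσ : σ = 1 ∨ σ = -1) {x y z w : Plane} (h1 : 0 < σ * cr x y)
    (h2 : 0 < σ * cr y z) (h3 : 0 < σ * cr z w)
    (ha : InnerProductGeometry.angle x y + InnerProductGeometry.angle y z +
      InnerProductGeometry.angle z w = Real.pi) : ∃ r : ℝ, 0 < r ∧ x = -(r • w) := by
  have hne : ∀ {x y : Plane}, 0 < σ * cr x y → x ≠ 0 ∧ y ≠ 0 := by
    intro x y h
    constructor <;> (rintro rfl; simp [cr] at h)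
  have hx := (hne h1).1
  have hy := (hne h2).1
  have hz := (hne h3).1
  have hw := (hne h3).2
  have key : (starRingEnd ℂ) (tc x) * tc y * ((starRingEnd ℂ) (tc y) * tc z) *
      ((starRingEnd ℂ) (tc z) * tc w) =
      ((-(‖x‖ * ‖y‖ * (‖y‖ * ‖z‖) * (‖z‖ * ‖w‖)) : ℝ) : ℂ) := by
    rw [tc_angle hσ h1, tc_angle hσ h2, tc_angle hσ h3]
    have : Complex.exp (((σ * InnerProductGeometry.angle x y : ℝ) : ℂ) * Complex.I) *
        Complex.exp (((σ * InnerProductGeometry.angle y z : ℝ) : ℂ) * Complex.I) *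
        Complex.exp (((σ * InnerProductGeometry.angle z w : ℝ) : ℂ) * Complex.I) = -1 := by
      rw [← Complex.exp_add, ← Complex.exp_add, ← add_mul, ← add_mul, ← Complex.ofReal_add,
        ← Complex.ofReal_add, ← mul_add, ← mul_add, ha]
      rcases hσ with rfl | rfl
      · simp
      · simp [Complex.exp_neg]
    push_cast at this ⊢
    linear_combination ((‖x‖ : ℂ) * ‖y‖ * (‖y‖ * ‖z‖) * (‖z‖ * ‖w‖)) * this
  have nsq : ∀ v : Plane, tc v * (starRingEnd ℂ) (tc v) = ((v 0 * v 0 + v 1 * v 1 : ℝ) : ℂ) := by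
    intro v; rw [Complex.mul_conj, Complex.normSq_apply]; rfl
  have npos : ∀ v : Plane, v ≠ 0 → 0 < v 0 * v 0 + v 1 * v 1 := by
    intro v hv
    rw [← plane_inner]; exact real_inner_self_pos.2 hv
  have key2 : (((y 0 * y 0 + y 1 * y 1) * (z 0 * z 0 + z 1 * z 1) : ℝ) : ℂ) *
      ((starRingEnd ℂ) (tc x) * tc w) =
      ((-(‖x‖ * ‖y‖ * (‖y‖ * ‖z‖) * (‖z‖ * ‖w‖)) : ℝ) : ℂ) := by
    rw [← key, Complex.ofReal_mul, ← nsq, ← nsq]; ring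
  set N := (y 0 * y 0 + y 1 * y 1) * (z 0 * z 0 + z 1 * z 1) with hN
  have hNp : 0 < N := mul_pos (npos y hy) (npos z hz)
  have hre := congrArg Complex.re key2
  have him := congrArg Complex.im key2
  rw [Complex.re_ofReal_mul, Complex.ofReal_re] at hre
  rw [Complex.im_ofReal_mul, Complex.ofReal_im] at him
  have him' := (mul_eq_zero.1 him).resolve_left hNp.ne'
  have hR : 0 < ‖x‖ * ‖y‖ * (‖y‖ * ‖z‖) * (‖z‖ * ‖w‖) := by
    have := norm_pos_iff.2 hx
    have := norm_pos_iff.2 hy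
    have := norm_pos_iff.2 hz
    have := norm_pos_iff.2 hw
    positivity
  have hre' : ((starRingEnd ℂ) (tc x) * tc w).re < 0 := by
    by_contra hcon
    push Not at hcon
    have := mul_nonneg hNp.le hcon
    linarith
  simp [tc] at hre' him'
  have hwp := npos w hw
  refine ⟨-(x 0 * w 0 + x 1 * w 1) / (w 0 * w 0 + w 1 * w 1), div_pos (by linarith) hwp, ?_⟩
  ext i
  fin_cases i
  · simp
    rw [div_mul_eq_mul_div, ← neg_div, eq_div_iff hwp.ne']
    linear_combination (w 1) * him'
  · simp
    rw [div_mul_eq_mul_div, ← neg_div, eq_div_iff hwp.ne']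
    linear_combination (-w 0) * him'

/-- orientation of a triangle -/
def ori (x y z : Plane) : ℝ := cr (y - x) (z - x)

lemma ori_cyc (x y z : Plane) : ori x y z = ori y z x := by
  simp [ori, cr]; ring

lemma collinear_of_ori {x y z : Plane} (h : ori x y z = 0) : Collinear ℝ ({x, y, z} : Set Plane) := by
  by_cases hxy : x = y
  · subst hxy; simpa using collinear_pair ℝ x z
  have hp : 0 < (y - x) 0 * (y - x) 0 + (y - x) 1 * (y - x) 1 := by
    rw [← plane_inner]; exact real_inner_self_pos.2 (sub_ne_zero.2 (Ne.symm hxy))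
  rw [collinear_iff_of_mem (p₀ := x) (by simp)]
  refine ⟨y - x, ?_⟩
  intro p hpm
  simp only [Set.mem_insert_iff, Set.mem_singleton_iff] at hpm
  rcases hpm with rfl | rfl | rfl
  · exact ⟨0, by simp⟩
  · exact ⟨1, by simp⟩
  · refine ⟨((y - x) 0 * (p - x) 0 + (y - x) 1 * (p - x) 1) /
      ((y - x) 0 * (y - x) 0 + (y - x) 1 * (y - x) 1), ?_⟩
    simp [ori, cr] at h hp
    rw [vadd_eq_add, ← sub_eq_iff_eq_add]
    ext i
    fin_cases i
    · simp
      rw [div_mul_eq_mul_div, eq_div_iff hp.ne']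
      linear_combination (-(y 1 - x 1)) * h
    · simp
      rw [div_mul_eq_mul_div, eq_div_iff hp.ne']
      linear_combination (y 0 - x 0) * h

lemma not_between (P : ConvexPentagon) {i j l : Fin 5} (hij : i ≠ j) (hlj : l ≠ j) :
    ¬ Wbtw ℝ (P.V i) (P.V j) (P.V l) := by
  intro h
  apply P.strictlyConvex j
  have h1 : P.V i ∈ convexHull ℝ (P.V '' {m | m ≠ j}) := subset_convexHull _ _ ⟨i, hij, rfl⟩
  have h2 : P.V l ∈ convexHull ℝ (P.V '' {m | m ≠ j}) := subset_convexHull _ _ ⟨l, hlj, rfl⟩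
  exact (convex_convexHull ℝ _).segment_subset h1 h2 (mem_segment_iff_wbtw.2 h)

lemma not_collinear (P : ConvexPentagon) {i j l : Fin 5} (hij : i ≠ j) (hlj : l ≠ j) (hil : i ≠ l) :
    ¬ Collinear ℝ ({P.V i, P.V j, P.V l} : Set Plane) := by
  intro h
  rcases h.wbtw_or_wbtw_or_wbtw with h | h | h
  · exact not_between P hij hlj h
  · exact not_between P hlj.symm hil h
  · exact not_between P hil.symm hij.symm h

lemma ori_ne (P : ConvexPentagon) {i j l : Fin 5} (hij : i ≠ j) (hlj : l ≠ j) (hil : i ≠ l) :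
    ori (P.V i) (P.V j) (P.V l) ≠ 0 := fun h =>
  not_collinear P hij hlj hil (collinear_of_ori h)

lemma interior_nonempty (P : ConvexPentagon) : (interior (convexHull ℝ (Set.range P.V))).Nonempty := by
  have h := not_collinear P (i := 0) (j := 1) (l := 2) (by decide) (by decide) (by decide)
  rw [← affineIndependent_iff_not_collinear_set] at h
  have h2 : affineSpan ℝ (Set.range ![P.V 0, P.V 1, P.V 2]) = ⊤ := by
    rw [h.affineSpan_eq_top_iff_card_eq_finrank_add_one]
    simp
  rw [interior_convexHull_nonempty_iff_affineSpan_eq_top, eq_top_iff, ← h2]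
  apply affineSpan_mono
  rintro _ ⟨i, rfl⟩
  fin_cases i <;> simp

lemma same_side (P : ConvexPentagon) (i : Fin 5) {j l : Fin 5} (hj : j ≠ i) (hj' : j ≠ i + 1)
    (hl : l ≠ i) (hl' : l ≠ i + 1) :
    0 < ori (P.V i) (P.V (i + 1)) (P.V j) * ori (P.V i) (P.V (i + 1)) (P.V l) := by
  have hi : i ≠ i + 1 := by clear * -; decide +revert
  have n1 := ori_ne P hi hj' hj.symm
  have n2 := ori_ne P hi hl' hl.symm
  set K := convexHull ℝ (Set.range P.V) with hK
  have hconv : Convex ℝ K := convex_convexHull _ _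
  have hm : midpoint ℝ (P.V i) (P.V (i + 1)) ∈ frontier K := P.cyclic i (midpoint_mem_segment _ _)
  set m := midpoint ℝ (P.V i) (P.V (i + 1)) with hmdef
  obtain ⟨f, hf⟩ := geometric_hahn_banach_open_point hconv.interior isOpen_interior hm.2
  have hle : ∀ a ∈ K, f a ≤ f m := by
    intro a ha
    have hcl : K ⊆ closure (interior K) := by
      rw [hconv.closure_interior_eq_closure_of_nonempty_interior (interior_nonempty P)]
      exact subset_closure
    have hcl2 : closure (interior K) ⊆ {a | f a ≤ f m} :=
      closure_minimal (fun a ha => (hf a ha).le) (isClosed_le f.continuous continuous_const)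
    exact hcl2 (hcl ha)
  have hV : ∀ a, f (P.V a) ≤ f m := fun a => hle _ (subset_convexHull _ _ ⟨a, rfl⟩)
  have hfm : 2 * f m = f (P.V i) + f (P.V (i + 1)) := by
    rw [hmdef, midpoint_eq_smul_add]; simp; ring
  have e1 : f (P.V i) = f m := by linarith [hV i, hV (i + 1)]
  have e2 : f (P.V (i + 1)) = f m := by linarith [hV i, hV (i + 1)]
  set e := P.V (i + 1) - P.V i with he
  have hfe : f e = 0 := by rw [he, map_sub, e1, e2, sub_self]
  have hne : e ≠ 0 := by
    intro h0
    apply n1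
    unfold ori
    rw [← he, h0]; simp [cr]
  have hp : 0 < e 0 * e 0 + e 1 * e 1 := by
    rw [← plane_inner]; exact real_inner_self_pos.2 hne
  set n : Plane := !₂[-(e 1), e 0] with hn
  have hfx : ∀ x, (e 0 * e 0 + e 1 * e 1) * f x = cr e x * f n := by
    intro x
    have : (e 0 * e 0 + e 1 * e 1) • x = (e 0 * x 0 + e 1 * x 1) • e + cr e x • n := by
      ext k
      fin_cases k
      · simp [hn, cr]; ring
      · simp [hn, cr]; ring
    have := congrArg f this
    simpa [hfe] using this
  have hsj := hfx (P.V j - P.V i)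
  have hsl := hfx (P.V l - P.V i)
  have hj2 : f (P.V j - P.V i) ≤ 0 := by rw [map_sub, e1]; linarith [hV j]
  have hl2 : f (P.V l - P.V i) ≤ 0 := by rw [map_sub, e1]; linarith [hV l]
  have hFn : f n ≠ 0 := by
    intro h0
    obtain ⟨a, ha⟩ := interior_nonempty P
    have h1 := hf a ha
    have h2 := hfx (a - m)
    rw [h0, mul_zero] at h2
    have h3 := (mul_eq_zero.1 h2).resolve_left hp.ne'
    rw [map_sub] at h3
    linarith
  have hj3 : ori (P.V i) (P.V (i + 1)) (P.V j) * f n ≤ 0 := by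
    unfold ori; rw [← hsj]; exact mul_nonpos_of_nonneg_of_nonpos hp.le hj2
  have hl3 : ori (P.V i) (P.V (i + 1)) (P.V l) * f n ≤ 0 := by
    unfold ori; rw [← hsl]; exact mul_nonpos_of_nonneg_of_nonpos hp.le hl2
  have h4 := mul_nonneg_of_nonpos_of_nonpos hj3 hl3
  have h5 : 0 < f n * f n := mul_self_pos.2 hFn
  have h6 : 0 ≤ ori (P.V i) (P.V (i + 1)) (P.V j) * ori (P.V i) (P.V (i + 1)) (P.V l) := by
    by_contra hc
    push Not at hc
    nlinarith
  exact lt_of_le_of_ne h6 (mul_ne_zero n1 n2).symm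

lemma orientation (P : ConvexPentagon) : ∃ σ : ℝ, (σ = 1 ∨ σ = -1) ∧
    ∀ i j : Fin 5, j ≠ i → j ≠ i + 1 → 0 < σ * ori (P.V i) (P.V (i + 1)) (P.V j) := by
  have step : ∀ (σ : ℝ) (i : Fin 5), 0 < σ * ori (P.V i) (P.V (i + 1)) (P.V (i + 2)) →
      0 < σ * ori (P.V (i + 1)) (P.V (i + 1 + 1)) (P.V (i + 1 + 2)) := by
    intro σ i h
    rw [ori_cyc] at h
    have e : i + 1 + 1 = i + 2 := by clear * -; decide +revert
    have := same_side P (i + 1) (j := i) (l := i + 1 + 2) (by clear * -; decide +revert) (by clear * -; decide +revert)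
      (by clear * -; decide +revert) (by clear * -; decide +revert)
    rw [e] at this ⊢
    have h2 := mul_pos h this
    have h3 := mul_self_pos.2 (ori_ne P (i := i + 1) (j := i + 2) (l := i) (by clear * -; decide +revert)
      (by clear * -; decide +revert) (by clear * -; decide +revert))
    have h4 : 0 < (ori (P.V (i + 1)) (P.V (i + 2)) (P.V i) * ori (P.V (i + 1)) (P.V (i + 2)) (P.V i)) *
      (σ * ori (P.V (i + 1)) (P.V (i + 2)) (P.V (i + 1 + 2))) := by linarith
    exact (mul_pos_iff_of_pos_left h3).1 h4
  have hσ : ∃ σ : ℝ, (σ = 1 ∨ σ = -1) ∧ 0 < σ * ori (P.V 0) (P.V 1) (P.V 2) := by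
    rcases lt_or_gt_of_ne (ori_ne P (i := 0) (j := 1) (l := 2) (by decide) (by decide) (by decide))
      with h | h
    · exact ⟨-1, Or.inr rfl, by linarith⟩
    · exact ⟨1, Or.inl rfl, by linarith⟩
  obtain ⟨σ, h1, h0⟩ := hσ
  refine ⟨σ, h1, ?_⟩
  have s1 := step σ 0 h0
  have s2 := step σ 1 s1
  have s3 := step σ 2 s2
  have s4 := step σ 3 s3
  have all : ∀ i : Fin 5, 0 < σ * ori (P.V i) (P.V (i + 1)) (P.V (i + 2)) := by
    intro i
    fin_cases i
    · exact h0
    · exact s1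
    · exact s2
    · exact s3
    · exact s4
  intro i j hj hj'
  have h := all i
  have h2 := same_side P i (j := i + 2) (l := j) (by clear * -; decide +revert) (by clear * -; decide +revert) hj hj'
  have h3 := mul_self_pos.2 (ori_ne P (i := i) (j := i + 1) (l := i + 2) (by clear * -; decide +revert)
      (by clear * -; decide +revert) (by clear * -; decide +revert))
  have h4 : 0 < (ori (P.V i) (P.V (i + 1)) (P.V (i + 2)) * ori (P.V i) (P.V (i + 1)) (P.V (i + 2))) *
      (σ * ori (P.V i) (P.V (i + 1)) (P.V j)) := by
    have := mul_pos h h2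
    linarith
  exact (mul_pos_iff_of_pos_left h3).1 h4

/-- every convex pentagon with three consecutive angles summing to
360° (Type 1) admits a periodic monohedral tiling using only direct isometric
copies (no reflected tiles). -/
theorem statement_2 (P : ConvexPentagon)
    (h1 : ∃ k : Fin 5, P.angle k + P.angle (k + 1) + P.angle (k + 2) = 2 * Real.pi) :
    ∃ T : Set (Set Plane), IsMonohedralTiling P.carrier T ∧ IsPeriodic T ∧
      ∀ t ∈ T, ∃ g : Plane ≃ᵢ Plane, IsDirectIsometry g ∧ t = g '' P.carrier := by
  obtain ⟨k, hk⟩ := h1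
  obtain ⟨σ, hσ, ho⟩ := orientation P
  have o012 := ho k (k + 2) (by clear * -; decide +revert) (by clear * -; decide +revert)
  have o123 := ho (k + 1) (k + 3) (by clear * -; decide +revert) (by clear * -; decide +revert)
  have o231 := ho (k + 2) (k + 1) (by clear * -; decide +revert) (by clear * -; decide +revert)
  have o342 := ho (k + 3) (k + 2) (by clear * -; decide +revert) (by clear * -; decide +revert)
  have o401 := ho (k + 4) (k + 1) (by clear * -; decide +revert) (by clear * -; decide +revert)
  have i1 : k + 1 + 1 = k + 2 := by clear * -; decide +revert
  have i2 : k + 2 + 1 = k + 3 := by clear * -; decide +revert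
  have i3 : k + 3 + 1 = k + 4 := by clear * -; decide +revert
  have i4 : k + 4 + 1 = k := by clear * -; decide +revert
  have j0 : k - 1 = k + 4 := by clear * -; decide +revert
  have j1 : k + 1 - 1 = k := by clear * -; decide +revert
  have j2 : k + 2 - 1 = k + 1 := by clear * -; decide +revert
  unfold ConvexPolygon.angle at hk
  have hcar : P.carrier = convexHull ℝ
      {P.V k, P.V (k + 1), P.V (k + 2), P.V (k + 3), P.V (k + 4)} := by
    unfold ConvexPolygon.carrier
    congr 1
    ext x
    simp only [Set.mem_range, Set.mem_insert_iff, Set.mem_singleton_iff]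
    constructor
    · rintro ⟨i, rfl⟩
      have : i = k ∨ i = k + 1 ∨ i = k + 2 ∨ i = k + 3 ∨ i = k + 4 := by
        clear * -; decide +revert
      rcases this with h | h | h | h | h <;> rw [h] <;> simp
    · rintro (h | h | h | h | h) <;> exact ⟨_, h.symm⟩
  rw [hcar]
  rw [i1] at o123
  rw [i2] at o231
  rw [i3] at o342
  rw [i4] at o401
  rw [i1, i2, j0, j1, j2] at hk
  clear hcar i1 i2 i3 i4 j0 j1 j2 ho
  generalize P.V k = A at *
  generalize P.V (k + 1) = B at *
  generalize P.V (k + 2) = C at *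
  generalize P.V (k + 3) = D at *
  generalize P.V (k + 4) = E at *
  have ang : ∀ X Y Z : Plane, EuclideanGeometry.angle X Y Z =
      Real.pi - InnerProductGeometry.angle (Y - X) (Z - Y) := by
    intro X Y Z
    rw [← InnerProductGeometry.angle_neg_left, neg_sub]; rfl
  rw [ang, ang, ang] at hk
  obtain ⟨q, hq, hAE⟩ := parallel_of_angles hσ (x := A - E) (y := B - A) (z := C - B) (w := D - C)
    (by convert o401 using 2; simp [ori, cr]; ring)
    (by convert o012 using 2; simp [ori, cr]; ring)
    (by convert o123 using 2; simp [ori, cr]; ring)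
    (by linarith)
  set u := C - D with hu
  set e := E - D with he
  have hA : A = D + e + q • u := by
    have : A = E - q • (D - C) := by
      rw [sub_eq_iff_eq_add] at hAE; rw [hAE]; abel
    rw [this, he, hu]; module
  have hC : C = D + u := by rw [hu]; abel
  have hE : E = D + e := by rw [he]; abel
  have hcrp : 0 < σ * cr e u := o342
  have hcr : cr e u ≠ 0 := by
    intro h; rw [h] at hcrp; simp at hcrp
  set b := cr (B - D) u / cr e u with hb
  set β := cr e (B - D) / cr e u with hβ
  have hB : B = D + b • e + β • u := by
    have := cr_decomp hcr (B - D)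
    rw [add_assoc, ← this]; abel
  clear_value b β u e
  subst hB hA hC hE
  have c1 : 0 < b * (σ * cr e u) := by
    convert o231 using 1; simp [ori, cr]; ring
  have c2 : 0 < q * (1 - b) * (σ * cr e u) := by
    convert o401 using 1; simp [ori, cr]; ring
  have c3 : 0 < (β - (1 + (q - 1) * b)) * (σ * cr e u) := by
    convert o012 using 1; simp [ori, cr]; ring
  have d1 := (mul_pos_iff_of_pos_right hcrp).1 c1
  have d2 := (mul_pos_iff_of_pos_left hq).1 ((mul_pos_iff_of_pos_right hcrp).1 c2)
  have d3 := (mul_pos_iff_of_pos_right hcrp).1 c3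
  exact pent_tiles hcr d1 (by linarith) hq (by linarith)
end
end
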